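/- There exist absolute constants C > 0 and c ≥ 0 such that the following holds. Let p be an odd prime, let g₁, h₁, g₂, h₂ : 𝔽_p* → 𝔽_p* be arbitrary functions, and define f₁(x,y) = g₁(x)(h₁(x)+y) and f₂(x,y) = g₂(x)(h₂(x)+y) on 𝔽_p* × 𝔽_p*. Suppose m = μ(g₁) = μ(g₂). Then for all nonempty finite subsets A, B, C, D ⊆ 𝔽_p* with |A| ≤ |B| ≤ p^{3/5} and |D| ≤ |C| ≤ p^{3/5}, one has max{|f₁(A,B)|, |f₂(D,C)|, |B+C|} ≥ C · (log(2|B|))^{−c} · |C|^{5/18} |B|^{13/18} |A|^{1/6} |D|^{1/18} / m^{8/9}. -/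

import Mathlib

open Finset Pointwise

/-- `mu g` is `max_{t ∈ 𝔽_p*} |{x ∈ 𝔽_p* : g x = t}|`. -/
def mu {p : ℕ} [NeZero p] (g : ZMod p → ZMod p) : ℕ :=
  Finset.sup (Finset.univ.filter fun t : ZMod p => t ≠ 0)
    (fun t => (Finset.univ.filter fun x : ZMod p => x ≠ 0 ∧ g x = t).card)



namespace TF
open MvPolynomial

variable {K : Type*} [Field K]

/-- The three-variable polynomial ring; `X 0 = z`, `X 1 = y`, `X 2 = x`. -/
abbrev R3 (K : Type*) [Field K] := MvPolynomial (Fin 3) K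

noncomputable def LI (i : K × K × K) : R3 K →ₐ[K] Polynomial K :=
  aeval ![Polynomial.C i.2.1 * Polynomial.X + Polynomial.C i.2.2, Polynomial.X, Polynomial.C i.1]

noncomputable def LJ (j : K × K × K) : R3 K →ₐ[K] Polynomial K :=
  aeval ![Polynomial.C j.2.1 * Polynomial.X + Polynomial.C j.2.2, Polynomial.C j.1, Polynomial.X]

def inc (i j : K × K × K) : Prop := j.2.1 * i.1 + j.2.2 = i.2.1 * j.1 + i.2.2

theorem eval_aeval {n : ℕ} (f : Fin n → Polynomial K) (F : MvPolynomial (Fin n) K) (t : K) :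
    (aeval f F).eval t = MvPolynomial.eval (fun k => (f k).eval t) F := by
  induction F using MvPolynomial.induction_on with
  | C a => simp
  | add p q hp hq => simp [hp, hq]
  | mul_X p n hp => simp [hp]

theorem LI_eval (i : K × K × K) (F : R3 K) (t : K) :
    (LI i F).eval t = MvPolynomial.eval ![i.2.1 * t + i.2.2, t, i.1] F := by
  rw [LI, eval_aeval]
  congr 2
  funext k
  fin_cases k <;> simp

theorem LJ_eval (j : K × K × K) (F : R3 K) (t : K) :
    (LJ j F).eval t = MvPolynomial.eval ![j.2.1 * t + j.2.2, j.1, t] F := by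
  rw [LJ, eval_aeval]
  congr 2
  funext k
  fin_cases k <;> simp

theorem inc_eval {i j : K × K × K} (h : inc i j) (F : R3 K) :
    (LI i F).eval j.1 = (LJ j F).eval i.1 := by
  rw [LI_eval, LJ_eval, show i.2.1 * j.1 + i.2.2 = j.2.1 * i.1 + j.2.2 from h.symm]

theorem LI_natDegree (i : K × K × K) (F : R3 K) : (LI i F).natDegree ≤ F.totalDegree := by
  have := MvPolynomial.aeval_natDegree_le (n := 1) F le_rfl
    ![Polynomial.C i.2.1 * Polynomial.X + Polynomial.C i.2.2, Polynomial.X, Polynomial.C i.1]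
    (by intro k; fin_cases k
        · exact Polynomial.natDegree_linear_le
        · simp
        · simp)
  simpa [LI] using this

theorem LJ_natDegree (i : K × K × K) (F : R3 K) : (LJ i F).natDegree ≤ F.totalDegree := by
  have := MvPolynomial.aeval_natDegree_le (n := 1) F le_rfl
    ![Polynomial.C i.2.1 * Polynomial.X + Polynomial.C i.2.2, Polynomial.C i.1, Polynomial.X]
    (by intro k; fin_cases k
        · exact Polynomial.natDegree_linear_le
        · simp
        · simp)
  simpa [LJ] using this

/-- chain rule -/
theorem chain_rule {σ A : Type*} [Fintype σ] [CommRing A] [Algebra K A] (D : Derivation K A A)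
    (f : σ → A) (F : MvPolynomial σ K) :
    D (aeval f F) = ∑ k, aeval f (pderiv k F) * D (f k) := by
  classical
  induction F using MvPolynomial.induction_on with
  | C a => simp
  | add p q hp hq => simp [hp, hq, add_mul, Finset.sum_add_distrib]
  | mul_X p n hp =>
    simp only [map_mul, aeval_X, Derivation.leibniz, hp, smul_eq_mul, pderiv_X, map_add, add_mul,
      Finset.sum_add_distrib, Finset.mul_sum]
    congr 1
    · rw [Finset.sum_eq_single n]
      · simp
      · intro b _ hb
        simp [hb.symm]
      · simp
    · exact Finset.sum_congr rfl fun k _ => by ring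

/-- G vanishes on J-lines in Z(F).  `k` is the index of the moving variable. -/
noncomputable def HH (k : Fin 3) (F : R3 K) : R3 K :=
  pderiv k (pderiv k F) * (pderiv 0 F) ^ 2 - 2 * pderiv 0 (pderiv k F) * pderiv k F * pderiv 0 F
    + pderiv 0 (pderiv 0 F) * (pderiv k F) ^ 2

theorem pderiv_comm' {σ : Type*} (i j : σ) (F : MvPolynomial σ K) :
    pderiv i (pderiv j F) = pderiv j (pderiv i F) := by
  classical
  induction F using MvPolynomial.induction_on with
  | C a => simp
  | add p q hp hq => simp [hp, hq]
  | mul_X p n hp =>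
    simp only [Derivation.leibniz, smul_eq_mul, pderiv_X, map_add, hp]
    have : ∀ a b : σ, pderiv a ((Pi.single b 1 : σ → MvPolynomial σ K) n) = 0 := by
      intro a b
      by_cases h : b = n
      · subst h; simp
      · simp [Ne.symm h]
    rw [this, this]
    simp only [mul_zero, zero_add]
    ring

theorem LJ_HH {j : K × K × K} {F : R3 K} (h : LJ j F = 0) : LJ j (HH 2 F) = 0 := by
  have D : ∀ P : R3 K, Polynomial.derivative (LJ j P) =
      LJ j (pderiv 0 P) * Polynomial.C j.2.1 + LJ j (pderiv 2 P) := by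
    intro P
    have := chain_rule (K := K) (Polynomial.derivative' (R := K))
      ![Polynomial.C j.2.1 * Polynomial.X + Polynomial.C j.2.2, Polynomial.C j.1, Polynomial.X] P
    simpa [Fin.sum_univ_three, LJ, Polynomial.derivative'] using this
  have h1 := D F
  rw [h] at h1
  have h2 := D (pderiv 0 F)
  have h3 := D (pderiv 2 F)
  rw [pderiv_comm' 2 0] at h2
  have h4 : LJ j (pderiv 2 F) = - (LJ j (pderiv 0 F) * Polynomial.C j.2.1) := by
    simp at h1; linear_combination -h1
  rw [h4] at h3
  simp only [map_neg, Polynomial.derivative_mul, h2,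
    Polynomial.derivative_C] at h3
  simp only [HH, map_add, map_sub, map_mul, map_pow, h4, map_ofNat]
  linear_combination (-(LJ j (pderiv 0 F))^2) * h3

theorem LI_HH {j : K × K × K} {F : R3 K} (h : LI j F = 0) : LI j (HH 1 F) = 0 := by
  have D : ∀ P : R3 K, Polynomial.derivative (LI j P) =
      LI j (pderiv 0 P) * Polynomial.C j.2.1 + LI j (pderiv 1 P) := by
    intro P
    have := chain_rule (K := K) (Polynomial.derivative' (R := K))
      ![Polynomial.C j.2.1 * Polynomial.X + Polynomial.C j.2.2, Polynomial.X, Polynomial.C j.1] P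
    simpa [Fin.sum_univ_three, LI, Polynomial.derivative'] using this
  have h1 := D F
  rw [h] at h1
  have h2 := D (pderiv 0 F)
  have h3 := D (pderiv 1 F)
  have h4 : LI j (pderiv 1 F) = - (LI j (pderiv 0 F) * Polynomial.C j.2.1) := by
    simp at h1; linear_combination -h1
  rw [pderiv_comm' 1 0] at h2
  rw [h4] at h3
  simp only [map_neg, Polynomial.derivative_mul, h2,
    Polynomial.derivative_C] at h3
  simp only [HH, map_add, map_sub, map_mul, map_pow, h4, map_ofNat]
  linear_combination (-(LI j (pderiv 0 F))^2) * h3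

theorem totalDegree_pderiv_le {σ : Type*} (k : σ) (F : MvPolynomial σ K) :
    (pderiv k F).totalDegree ≤ F.totalDegree := by
  classical
  conv_lhs => rw [F.as_sum]
  rw [map_sum]
  refine MvPolynomial.totalDegree_finsetSum_le fun d hd => ?_
  rw [pderiv_monomial]
  refine (totalDegree_monomial_le _ _).trans ?_
  have h1 := le_totalDegree hd
  refine le_trans ?_ h1
  have : (d - Finsupp.single k 1) ≤ d := tsub_le_self
  exact Finsupp.degree_mono this

theorem HH_totalDegree (k : Fin 3) (F : R3 K) : (HH k F).totalDegree ≤ 3 * F.totalDegree := by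
  have hp := fun k (P : R3 K) => totalDegree_pderiv_le k P
  have h2 : (2 : R3 K).totalDegree = 0 := by
    have : (2 : R3 K) = C 2 := (map_ofNat C 2).symm
    rw [this, totalDegree_C]
  have m : ∀ {a b : R3 K} {s t : ℕ}, a.totalDegree ≤ s → b.totalDegree ≤ t →
      (a * b).totalDegree ≤ s + t := fun h h' => (totalDegree_mul _ _).trans (by omega)
  set e := F.totalDegree
  have q : ∀ k, (pderiv k F ^ 2).totalDegree ≤ 2 * e := fun k => by
    rw [sq]; exact (m (hp k F) (hp k F)).trans (by omega)
  have hh : ∀ k l, (pderiv k (pderiv l F)).totalDegree ≤ e := fun k l => (hp _ _).trans (hp _ _)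
  refine (totalDegree_add _ _).trans (max_le ((totalDegree_sub _ _).trans (max_le ?_ ?_)) ?_)
  · exact (m (hh _ _) (q _)).trans (by omega)
  · exact (m (m (m h2.le (hh _ _)) (hp _ _)) (hp _ _)).trans (by omega)
  · exact (m (hh _ _) (q _)).trans (by omega)

end TF


namespace TF
open MvPolynomial

variable {K : Type*} [Field K]

theorem exists_vanishing (I : Finset (K × K × K)) (d : ℕ) (hd : 3 * I.card < d ^ 2) :
    ∃ F : R3 K, F ≠ 0 ∧ F.totalDegree ≤ 3 * d ∧ ∀ i ∈ I, LI i F = 0 := by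
  classical
  have hd0 : 0 < d := by
    rcases Nat.eq_zero_or_pos d with h | h
    · subst h; simp at hd
    · exact h
  let ex : (Fin 3 → Fin d) → (Fin 3 →₀ ℕ) := fun e => Finsupp.equivFunOnFinite.symm fun k => (e k : ℕ)
  have hex : Function.Injective ex := by
    intro a b h
    have h' := Finsupp.equivFunOnFinite.symm.injective h
    funext k
    exact Fin.ext (congrFun h' k)
  let Φ : ((Fin 3 → Fin d) → K) →ₗ[K] R3 K :=
    ∑ e, (monomial (ex e)).comp (LinearMap.proj e)
  have hΦ : ∀ c, Φ c = ∑ e, monomial (ex e) (c e) := by intro c; simp [Φ]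
  have hdeg : ∀ c, (Φ c).totalDegree < 3 * d := by
    intro c
    rw [hΦ]
    have : (∑ e, monomial (ex e) (c e) : R3 K).totalDegree ≤ 3 * (d - 1) := by
      refine MvPolynomial.totalDegree_finsetSum_le fun e _ => ?_
      refine (totalDegree_monomial_le _ _).trans ?_
      rw [Finsupp.sum_fintype _ _ (by simp)]
      refine (Finset.sum_le_card_nsmul _ _ (d - 1) ?_).trans (by simp)
      intro k _
      have := (e k).2
      simp [ex]
      omega
    omega
  let Ψ : ((Fin 3 → Fin d) → K) →ₗ[K] (I → Fin (3 * d) → K) :=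
    LinearMap.pi fun i => LinearMap.pi fun s =>
      (Polynomial.lcoeff K (s : ℕ)).comp ((LI i.1).toLinearMap.comp Φ)
  have hker : LinearMap.ker Ψ ≠ ⊥ := by
    apply LinearMap.ker_ne_bot_of_finrank_lt
    rw [Module.finrank_pi_fintype]
    simp
    nlinarith
  obtain ⟨c, hc, hc0⟩ := (Submodule.ne_bot_iff _).1 hker
  refine ⟨Φ c, ?_, (hdeg c).le, ?_⟩
  · intro h0
    apply hc0
    funext e
    have := congrArg (coeff (ex e)) h0
    rw [hΦ, coeff_sum] at this
    simp only [coeff_monomial, coeff_zero, hex.eq_iff] at this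
    simpa using this
  · intro i hi
    ext s
    by_cases hs : s < 3 * d
    · have := congrFun (congrFun (LinearMap.mem_ker.1 hc) ⟨i, hi⟩) ⟨s, hs⟩
      simpa [Ψ] using this
    · rw [Polynomial.coeff_eq_zero_of_natDegree_lt]
      · simp
      · have := LI_natDegree i (Φ c)
        have := hdeg c
        omega

theorem totalDegree_resultant_le {n : ℕ} (P Q : Polynomial (MvPolynomial (Fin n) K)) (a b e g : ℕ)
    (hP : ∀ i, (P.coeff i).totalDegree ≤ e) (hQ : ∀ i, (Q.coeff i).totalDegree ≤ g) :
    (Polynomial.resultant P Q a b).totalDegree ≤ b * e + a * g := by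
  rw [Polynomial.resultant, Matrix.det_apply]
  refine MvPolynomial.totalDegree_finsetSum_le fun σ _ => ?_
  have h1 : (Equiv.Perm.sign σ • ∏ i, Polynomial.sylvester P Q a b (σ i) i).totalDegree
      ≤ (∏ i, Polynomial.sylvester P Q a b (σ i) i).totalDegree := by
    rcases Int.units_eq_one_or (Equiv.Perm.sign σ) with h | h <;> simp [h]
  refine h1.trans ((totalDegree_finsetProd _ _).trans ?_)
  rw [Fin.sum_univ_add, add_comm]
  refine Nat.add_le_add ?_ ?_
  · refine (Finset.sum_le_card_nsmul _ _ e ?_).trans (by simp)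
    intro i _
    simp only [Polynomial.sylvester, Matrix.of_apply, Fin.addCases_right]
    split_ifs
    · exact hP _
    · simp
  · refine (Finset.sum_le_card_nsmul _ _ g ?_).trans (by simp)
    intro i _
    simp only [Polynomial.sylvester, Matrix.of_apply, Fin.addCases_left]
    split_ifs
    · exact hQ _
    · simp

theorem LJ_eq_eval₂ (j : K × K × K) (F : R3 K) :
    LJ j F = Polynomial.eval₂ (aeval (R := K) ![Polynomial.C j.1, Polynomial.X]).toRingHom
      (Polynomial.C j.2.1 * Polynomial.X + Polynomial.C j.2.2) (finSuccEquiv K 2 F) := by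
  induction F using MvPolynomial.induction_on with
  | C a => simp [finSuccEquiv_apply, LJ]
  | add p q hp hq => simp [hp, hq, Polynomial.eval₂_add]
  | mul_X p n hp =>
    rw [map_mul, hp, map_mul, Polynomial.eval₂_mul]
    congr 1
    fin_cases n
    · simp [LJ, finSuccEquiv_X_zero]
    · simp only [LJ]
      have := finSuccEquiv_X_succ (R := K) (n := 2) (j := 0)
      simp at this
      simp [this]
    · simp only [LJ]
      have := finSuccEquiv_X_succ (R := K) (n := 2) (j := 1)
      simp at this
      simp [this]

theorem card_roots_bound (R : MvPolynomial (Fin 2) K) (hR : R ≠ 0) (Y : Finset K)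
    (h : ∀ y ∈ Y, aeval (R := K) ![Polynomial.C y, Polynomial.X] R = 0) :
    Y.card ≤ R.totalDegree := by
  classical
  have h0 : finSuccEquiv K 1 R ≠ 0 := by simpa using hR
  have hroot : ∀ y ∈ Y, (finSuccEquiv K 1 R).eval (C y) = 0 := by
    intro y hy
    have h1 : ∀ Q : MvPolynomial (Fin 2) K, aeval (R := K) ![Polynomial.C y, Polynomial.X] Q =
        aeval (R := K) (fun _ : Fin 1 => (Polynomial.X : Polynomial K))
          ((finSuccEquiv K 1 Q).eval (C y)) := by
      intro F
      induction F using MvPolynomial.induction_on with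
      | C a => simp [finSuccEquiv_apply]
      | add p q hp hq => simp [hp, hq]
      | mul_X p n hp =>
        rw [map_mul, hp, map_mul, Polynomial.eval_mul, map_mul]
        congr 1
        fin_cases n
        · simp [finSuccEquiv_X_zero]
        · have := finSuccEquiv_X_succ (R := K) (n := 1) (j := 0)
          simp at this
          simp [this]
    have h2 := h1 R
    rw [h y hy] at h2
    have hinj : Function.Injective
        (aeval (R := K) (fun _ : Fin 1 => (Polynomial.X : Polynomial K))) := by
      apply Function.LeftInverse.injective
        (g := Polynomial.aeval (R := K) (X 0 : MvPolynomial (Fin 1) K))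
      intro F
      induction F using MvPolynomial.induction_on with
      | C a => simp 
      | add p q hp hq => simp [hp, hq]
      | mul_X p n hp =>
        rw [map_mul, map_mul, hp]
        fin_cases n
        simp
    exact hinj (by rw [← h2, map_zero])
  have hsub : Y.image (C : K → MvPolynomial (Fin 1) K) ⊆ (finSuccEquiv K 1 R).roots.toFinset := by
    intro z hz
    obtain ⟨y, hy, rfl⟩ := Finset.mem_image.1 hz
    simp only [Multiset.mem_toFinset]
    exact (Polynomial.mem_roots h0).2 (hroot y hy)
  calc Y.card = (Y.image (C : K → MvPolynomial (Fin 1) K)).card :=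
        (Finset.card_image_of_injective _ (C_injective _ _)).symm
    _ ≤ _ := Finset.card_le_card hsub
    _ ≤ _ := Multiset.toFinset_card_le _
    _ ≤ _ := Polynomial.card_roots' _
    _ = degreeOf 0 R := natDegree_finSuccEquiv R
    _ ≤ _ := degreeOf_le_totalDegree R 0

theorem elim_bound {F G : R3 K} (hF : Irreducible F) (hz : (finSuccEquiv K 2 F).natDegree ≠ 0)
    (hdiv : ¬ F ∣ G) (J : Finset (K × K × K)) (hinj : Set.InjOn Prod.fst (J : Set (K × K × K)))
    (h : ∀ j ∈ J, LJ j F = 0 ∧ LJ j G = 0) :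
    J.card ≤ 2 * F.totalDegree * G.totalDegree := by
  classical
  set P := finSuccEquiv K 2 F with hP
  set Q := finSuccEquiv K 2 G with hQ
  let L := FractionRing (MvPolynomial (Fin 2) K)
  let : NormalizedGCDMonoid (MvPolynomial (Fin 2) K) := Classical.choice inferInstance
  have hPirr : Irreducible P := (MulEquiv.irreducible_iff (finSuccEquiv K 2)).2 hF
  have hPprim : P.IsPrimitive := hPirr.isPrimitive hz
  have hPL : Irreducible (P.map (algebraMap _ L)) :=
    hPprim.irreducible_iff_irreducible_map_fraction_map.1 hPirr
  have hndvd : ¬ P.map (algebraMap _ L) ∣ Q.map (algebraMap _ L) := by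
    intro hd
    have := hPprim.dvd_of_fraction_map_dvd_fraction_map hd
    exact hdiv ((map_dvd_iff (finSuccEquiv K 2)).1 this)
  have hcop : IsCoprime (P.map (algebraMap _ L)) (Q.map (algebraMap _ L)) :=
    (hPL.coprime_iff_not_dvd).2 hndvd
  have hinjL : Function.Injective (algebraMap (MvPolynomial (Fin 2) K) L) :=
    IsFractionRing.injective _ _
  have hres : Polynomial.resultant P Q ≠ 0 := by
    have h1 := Polynomial.resultant_ne_zero _ _ hcop
    rw [Polynomial.natDegree_map_eq_of_injective hinjL, Polynomial.natDegree_map_eq_of_injective hinjL,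
      Polynomial.resultant_map_map] at h1
    intro h0
    rw [h0] at h1
    simp at h1
  obtain ⟨a, b, -, -, hab⟩ := Polynomial.exists_mul_add_mul_eq_C_resultant P Q le_rfl le_rfl (Or.inl hz)
  have hcard := card_roots_bound (Polynomial.resultant P Q) hres (J.image Prod.fst) (by
    intro y hy
    obtain ⟨j, hj, rfl⟩ := Finset.mem_image.1 hy
    obtain ⟨h1, h2⟩ := h j hj
    rw [LJ_eq_eval₂] at h1 h2
    have := congrArg (Polynomial.eval₂ (aeval (R := K) ![Polynomial.C j.1, Polynomial.X]).toRingHom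
      (Polynomial.C j.2.1 * Polynomial.X + Polynomial.C j.2.2)) hab
    rw [Polynomial.eval₂_add, Polynomial.eval₂_mul, Polynomial.eval₂_mul, ← hP, ← hQ] at *
    rw [h1, h2] at this
    simpa using this.symm)
  rw [Finset.card_image_of_injOn hinj] at hcard
  refine hcard.trans ((totalDegree_resultant_le P Q _ _ F.totalDegree G.totalDegree ?_ ?_).trans ?_)
  · intro i
    by_cases hi : P.coeff i = 0
    · simp [hi]
    · have := totalDegree_coeff_finSuccEquiv_add_le F i hi
      rw [← hP] at this
      omega
  · intro i
    by_cases hi : Q.coeff i = 0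
    · simp [hi]
    · have := totalDegree_coeff_finSuccEquiv_add_le G i hi
      rw [← hQ] at this
      omega
  · have h1 : P.natDegree ≤ F.totalDegree := by
      rw [hP, natDegree_finSuccEquiv]; exact degreeOf_le_totalDegree _ _
    have h2 : Q.natDegree ≤ G.totalDegree := by
      rw [hQ, natDegree_finSuccEquiv]; exact degreeOf_le_totalDegree _ _
    nlinarith

end TF


namespace TF
open MvPolynomial

variable {K : Type*} [Field K]

/-- The ideal `(X₀^p, X₁^p)`. -/
noncomputable def aid (K : Type*) [Field K] (p : ℕ) : Ideal (MvPolynomial (Fin 2) K) :=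
  Ideal.span ((fun s => monomial s (1 : K)) '' {Finsupp.single 0 p, Finsupp.single 1 p})

theorem mem_aid {p : ℕ} {f : MvPolynomial (Fin 2) K} :
    f ∈ aid K p ↔ ∀ d : Fin 2 →₀ ℕ, d 0 < p → d 1 < p → coeff d f = 0 := by
  rw [aid, mem_ideal_span_monomial_image]
  simp only [Set.mem_insert_iff, Set.mem_singleton_iff, exists_eq_or_imp, exists_eq_left,
    Finsupp.single_le_iff, mem_support_iff]
  constructor
  · intro h d h0 h1
    by_contra hne
    have := h d hne
    omega
  · intro h d hne
    by_contra hcon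
    push Not at hcon
    exact hne (h d hcon.1 hcon.2)

theorem coeff_pderiv (k : Fin 2) (f : MvPolynomial (Fin 2) K) (d : Fin 2 →₀ ℕ) :
    coeff d (pderiv k f) = coeff (d + Finsupp.single k 1) f * ((d k : K) + 1) := by
  classical
  induction f using MvPolynomial.induction_on' with
  | add p q hp hq => simp [hp, hq, add_mul]
  | monomial u a =>
    rw [pderiv_monomial, coeff_monomial, coeff_monomial]
    by_cases h : u = d + Finsupp.single k 1
    · subst h
      simp
    · rw [if_neg h, zero_mul]
      split_ifs with h'
      · have : u k = 0 := by
          by_contra hk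
          apply h
          rw [← h', tsub_add_cancel_of_le]
          rw [Finsupp.single_le_iff]; omega
        simp [this]
      · rfl

variable {p : ℕ} [CharP K p]

theorem pderiv_mem_aid (k : Fin 2) {f : MvPolynomial (Fin 2) K} (hf : f ∈ aid K p) :
    pderiv k f ∈ aid K p := by
  rw [mem_aid] at *
  intro d h0 h1
  rw [coeff_pderiv]
  by_cases h : d k + 1 = p
  · have : ((d k : K) + 1) = 0 := by
      have := CharP.cast_eq_zero K p
      rw [← h] at this
      exact_mod_cast this
    rw [this, mul_zero]
  · rw [hf, zero_mul]
    · fin_cases k <;> simp at * <;> omega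
    · fin_cases k <;> simp at * <;> omega

theorem degreeOf_aeval_le (l : Fin 2) (f : Fin 3 → MvPolynomial (Fin 2) K)
    (hf : ∀ k, degreeOf l (f k) ≤ 1) (F : R3 K) :
    degreeOf l (aeval f F) ≤ F.totalDegree := by
  classical
  rw [F.as_sum, map_sum]
  conv_rhs => rw [← F.as_sum]
  refine (degreeOf_sum_le _ _ _).trans (Finset.sup_le fun d hd => ?_)
  rw [aeval_monomial]
  refine (degreeOf_mul_le _ _ _).trans ?_
  rw [show (algebraMap K (MvPolynomial (Fin 2) K)) (coeff d F) = C (coeff d F) from rfl, degreeOf_C,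
    zero_add]
  refine le_trans ?_ (le_totalDegree hd)
  rw [Finsupp.prod]
  refine (degreeOf_prod_le _ _ _).trans (Finset.sum_le_sum fun k _ => ?_)
  refine (degreeOf_pow_le _ _ _).trans ?_
  have := hf k
  show _ ≤ d k
  nlinarith


theorem nilp_quot_aid (f : MvPolynomial (Fin 2) K) :
    IsNilpotent (Ideal.Quotient.mk (aid K p) (f - C (eval 0 f))) := by
  induction f using MvPolynomial.induction_on with
  | C a => simp
  | add f g hf hg =>
    have : f + g - C (eval 0 (f + g)) = (f - C (eval 0 f)) + (g - C (eval 0 g)) := by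
      simp; ring
    rw [this, map_add]
    exact (Commute.all _ _).isNilpotent_add hf hg
  | mul_X f k hf =>
    have hX : IsNilpotent (Ideal.Quotient.mk (aid K p) (X k)) := by
      refine ⟨p, ?_⟩
      rw [← map_pow, Ideal.Quotient.eq_zero_iff_mem, aid]
      apply Ideal.subset_span
      refine ⟨Finsupp.single k p, ?_, by simp [X_pow_eq_monomial]⟩
      fin_cases k <;> simp
    simp only [map_mul, eval_X, Pi.zero_apply, mul_zero, map_zero, sub_zero]
    exact (Commute.all _ _).isNilpotent_mul_left hX

theorem isUnit_quot_aid {f : MvPolynomial (Fin 2) K} (h : eval 0 f ≠ 0) :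
    IsUnit (Ideal.Quotient.mk (aid K p) f) := by
  have h1 := nilp_quot_aid (p := p) f
  have h2 : IsUnit (Ideal.Quotient.mk (aid K p) (C (eval 0 f))) :=
    (((isUnit_iff_ne_zero.2 h).map C).map _)
  have h3 := h1.isUnit_add_left_of_commute h2 (Commute.all _ _)
  rwa [← map_add, add_sub_cancel] at h3

theorem flat_deriv (k : Fin 2) (F : R3 K) (Φ : MvPolynomial (Fin 2) K) (y0 x0 : K)
    (hF : aeval ![Φ, X 0 + C y0, X 1 + C x0] F ∈ aid K p)
    (hH : F ∣ HH k.succ F) (hu : eval 0 (aeval ![Φ, X 0 + C y0, X 1 + C x0] (pderiv 0 F)) ≠ 0) :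
    pderiv k (pderiv k Φ) ∈ aid K p := by
  set a : R3 K →ₐ[K] MvPolynomial (Fin 2) K := aeval ![Φ, X 0 + C y0, X 1 + C x0] with ha
  have D : ∀ P : R3 K, pderiv k (a P) = a (pderiv 0 P) * pderiv k Φ + a (pderiv k.succ P) := by
    intro P
    have := chain_rule (K := K) (pderiv (R := K) k) ![Φ, X 0 + C y0, X 1 + C x0] P
    rw [← ha, Fin.sum_univ_three] at this
    fin_cases k
    · simpa [pderiv_X] using this
    · simpa [pderiv_X] using this
  have e1 := pderiv_mem_aid k hF
  rw [D] at e1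
  have e2 := pderiv_mem_aid k e1
  rw [map_add, D, Derivation.leibniz, D, pderiv_comm' k.succ 0] at e2
  simp only [smul_eq_mul] at e2
  have e3 : a (HH k.succ F) ∈ aid K p := by
    obtain ⟨G, hG⟩ := hH
    rw [hG, map_mul]
    exact Ideal.mul_mem_right _ _ hF
  simp only [HH, map_add, map_sub, map_mul, map_pow, map_ofNat] at e3
  have e4 : (a (pderiv 0 F)) ^ 3 * pderiv k (pderiv k Φ) ∈ aid K p := by
    have := Ideal.sub_mem _ (Ideal.sub_mem _ (Ideal.mul_mem_left _ ((a (pderiv 0 F)) ^ 2) e2) e3)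
      (Ideal.mul_mem_left _ (a (pderiv 0 (pderiv 0 F)) * ((a (pderiv 0 F) * pderiv k Φ + a (pderiv k.succ F))
        - 2 * a (pderiv k.succ F)) + 2 * a (pderiv 0 (pderiv k.succ F)) * a (pderiv 0 F)) e1)
    convert this using 1
    ring
  rw [← Ideal.Quotient.eq_zero_iff_mem] at e4 ⊢
  rw [map_mul, map_pow] at e4
  exact ((isUnit_quot_aid hu).pow 3).mul_right_eq_zero.1 e4

theorem coeff_of_flat [Fact p.Prime] (k : Fin 2) (Φ : MvPolynomial (Fin 2) K)
    (h : pderiv k (pderiv k Φ) ∈ aid K p) (d : Fin 2 →₀ ℕ) (h0 : d 0 < p) (h1 : d 1 < p)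
    (hk : 2 ≤ d k) : coeff d Φ = 0 := by
  have hkp : d k < p := by fin_cases k <;> assumption
  rw [mem_aid] at h
  have := h (d - Finsupp.single k 2) (by simp; omega) (by simp; omega)
  rw [coeff_pderiv, coeff_pderiv, add_assoc, ← Finsupp.single_add,
    tsub_add_cancel_of_le (by rw [Finsupp.single_le_iff]; omega)] at this
  have hc : ∀ n : ℕ, 0 < n → n < p → (n : K) ≠ 0 := by
    intro n hn hnp h0
    rw [CharP.cast_eq_zero_iff K p] at h0
    exact absurd (Nat.le_of_dvd hn h0) (by omega)
  have c1 := hc (d k - 1) (by omega) (by omega)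
  have c2 := hc (d k) (by omega) (by omega)
  have r1 : (((d - (Finsupp.single k 2 : Fin 2 →₀ ℕ) : Fin 2 →₀ ℕ) k : ℕ) : K) + 1 = ((d k - 1 : ℕ) : K) := by
    have : (d - Finsupp.single k 2 : Fin 2 →₀ ℕ) k + 1 = d k - 1 := by simp; omega
    exact_mod_cast congrArg (Nat.cast (R := K)) this
  have r2 : (((d - Finsupp.single k 2 + Finsupp.single k 1 : Fin 2 →₀ ℕ) k : ℕ) : K) + 1 = (d k : K) := by
    have : (d - Finsupp.single k 2 + Finsupp.single k 1 : Fin 2 →₀ ℕ) k + 1 = d k := by simp; omega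
    exact_mod_cast congrArg (Nat.cast (R := K)) this
  rw [r1, r2] at this
  simpa [c1, c2] using this

theorem newton_lift [Fact p.Prime] (F : R3 K) (z0 y0 x0 : K)
    (hv : eval ![z0, y0, x0] F = 0) (hv' : eval ![z0, y0, x0] (pderiv 0 F) ≠ 0) :
    ∃ Φ : MvPolynomial (Fin 2) K, eval 0 Φ = z0 ∧ aeval ![Φ, X 0 + C y0, X 1 + C x0] F ∈ aid K p := by
  classical
  have hp := (Fact.out : p.Prime)
  let Q := MvPolynomial (Fin 2) K ⧸ aid K p
  let π : MvPolynomial (Fin 2) K →ₐ[K] Q := Ideal.Quotient.mkₐ K (aid K p)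
  let v : Fin 3 → Polynomial Q := ![Polynomial.X, Polynomial.C (π (X 0 + C y0)), Polynomial.C (π (X 1 + C x0))]
  let P : R3 K → Polynomial Q := fun G => aeval v G
  have hP : ∀ (G : R3 K) (f : MvPolynomial (Fin 2) K), Polynomial.aeval (π f) (P G) =
      π (aeval ![f, X 0 + C y0, X 1 + C x0] G) := by
    intro G f
    induction G using MvPolynomial.induction_on with
    | C a => 
      simp [P]
    | add f g hf hg => simp only [P, map_add] at *; rw [hf, hg]
    | mul_X f k hf =>
      simp only [P, map_mul] at *; rw [hf]
      congr 1
      fin_cases k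
      · simp [v]
      · simp [v]
      · simp [v]
  have hP' : Polynomial.derivative (P F) = P (pderiv 0 F) := by
    have := chain_rule (K := K) ((Polynomial.derivative' (R := Q)).restrictScalars K) v F
    rw [Fin.sum_univ_three] at this
    simpa [v, P, Polynomial.derivative'] using this
  have hev : ∀ (f : MvPolynomial (Fin 2) K) (G : R3 K), eval 0 (aeval ![f, X 0 + C y0, X 1 + C x0] G) =
      eval ![eval 0 f, y0, x0] G := by
    intro f G
    induction G using MvPolynomial.induction_on with
    | C a => simp
    | add f g hf hg => simp only [map_add] at *; rw [hf, hg]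
    | mul_X f k hf =>
      simp only [map_mul] at *; rw [hf]
      congr 1
      fin_cases k <;> simp
  have n1 : IsNilpotent (Polynomial.aeval (π (C z0)) (P F)) := by
    rw [hP]
    have := nilp_quot_aid (p := p) (aeval ![C z0, X 0 + C y0, X 1 + C x0] F)
    rw [hev, eval_C, hv, map_zero, sub_zero] at this
    exact this
  have n2 : IsUnit (Polynomial.aeval (π (C z0)) (Polynomial.derivative (P F))) := by
    rw [hP', hP]
    apply isUnit_quot_aid
    rw [hev, eval_C]
    exact hv'
  obtain ⟨r, ⟨hr1, hr2⟩, -⟩ := Polynomial.existsUnique_nilpotent_sub_and_aeval_eq_zero n1 n2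
  obtain ⟨Φ, rfl⟩ := Ideal.Quotient.mk_surjective r
  refine ⟨Φ, ?_, ?_⟩
  · obtain ⟨n, hn⟩ := hr1
    have h1 : Ideal.Quotient.mk (aid K p) ((C z0 - Φ) ^ n) = 0 := by
      rw [map_pow, map_sub]; exact hn
    rw [Ideal.Quotient.eq_zero_iff_mem, mem_aid] at h1
    have h2 := h1 0 (by simpa using hp.pos) (by simpa using hp.pos)
    rw [← constantCoeff_eq, map_pow] at h2
    have h3 := eq_zero_of_pow_eq_zero h2
    simp at h3 ⊢
    exact (sub_eq_zero.1 h3).symm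
  · rw [← Ideal.Quotient.eq_zero_iff_mem]
    have := hP F Φ
    exact this.symm.trans hr2

theorem bilinear_of_flat [Fact p.Prime] {F : R3 K} (he : F.totalDegree < p)
    (h1 : F ∣ HH 1 F) (h2 : F ∣ HH 2 F) (z0 y0 x0 : K)
    (hv : eval ![z0, y0, x0] F = 0) (hv' : eval ![z0, y0, x0] (pderiv 0 F) ≠ 0) :
    ∃ W : MvPolynomial (Fin 2) K, aeval ![W, X 0, X 1] F = 0 := by
  classical
  obtain ⟨Φ, hz, hΦ⟩ := newton_lift (p := p) F z0 y0 x0 hv hv'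
  have hu : eval 0 (aeval ![Φ, X 0 + C y0, X 1 + C x0] (pderiv 0 F)) ≠ 0 := by
    have : ∀ G : R3 K, eval 0 (aeval ![Φ, X 0 + C y0, X 1 + C x0] G) = eval ![z0, y0, x0] G := by
      intro G
      induction G using MvPolynomial.induction_on with
      | C a => simp
      | add f g hf hg => simp only [map_add] at *; rw [hf, hg]
      | mul_X f k hf =>
        simp only [map_mul] at *; rw [hf]
        congr 1
        simp only [eval_zero] at hz
        fin_cases k <;> simp [hz]
    rw [this]; exact hv'
  have f0 := flat_deriv 0 F Φ y0 x0 hΦ h1 hu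
  have f1 := flat_deriv 1 F Φ y0 x0 hΦ h2 hu
  let W : MvPolynomial (Fin 2) K :=
    ∑ d ∈ Φ.support with d 0 ≤ 1 ∧ d 1 ≤ 1, monomial d (coeff d Φ)
  have hW : ∀ d, coeff d W = if d 0 ≤ 1 ∧ d 1 ≤ 1 then coeff d Φ else 0 := by
    intro d
    simp only [W, coeff_sum, coeff_monomial, Finset.sum_ite_eq', Finset.mem_filter, mem_support_iff]
    split_ifs with h1 h2 h2
    · rfl
    · exact absurd h1.2 h2
    · by_contra h3
      exact h1 ⟨fun h => h3 h.symm, h2⟩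
    · rfl
  have hdiff : Φ - W ∈ aid K p := by
    rw [mem_aid]
    intro d h0 h1
    rw [coeff_sub, hW]
    split_ifs with h
    · simp
    · rw [sub_zero]
      by_cases h' : 2 ≤ d 0
      · exact coeff_of_flat 0 Φ f0 d h0 h1 h'
      · exact coeff_of_flat 1 Φ f1 d h0 h1 (by omega)
  have hFW : aeval ![W, X 0 + C y0, X 1 + C x0] F ∈ aid K p := by
    rw [← Ideal.Quotient.eq_zero_iff_mem] at hΦ hdiff ⊢
    have hc : ∀ f : MvPolynomial (Fin 2) K, Ideal.Quotient.mk (aid K p) (aeval ![f, X 0 + C y0, X 1 + C x0] F)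
      = aeval (fun k => Ideal.Quotient.mk (aid K p) (![f, X 0 + C y0, X 1 + C x0] k)) F := by
      intro f
      have := (comp_aeval_apply (![f, X 0 + C y0, X 1 + C x0]) (Ideal.Quotient.mkₐ K (aid K p)) F)
      exact this
    rw [hc] at hΦ ⊢
    rw [map_sub, sub_eq_zero] at hdiff
    rw [← hΦ]
    congr 2
    funext k
    fin_cases k
    · exact hdiff.symm
    · rfl
    · rfl
  have hFW0 : aeval ![W, X 0 + C y0, X 1 + C x0] F = 0 := by
    have hWd : ∀ l, degreeOf l W ≤ 1 := by
      intro l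
      rw [degreeOf_le_iff]
      intro d hd
      rw [mem_support_iff, hW] at hd
      have : d 0 ≤ 1 ∧ d 1 ≤ 1 := by by_contra h; simp [h] at hd
      fin_cases l
      · exact this.1
      · exact this.2
    have hdeg : ∀ l, degreeOf l (aeval ![W, X 0 + C y0, X 1 + C x0] F) < p := by
      intro l
      refine lt_of_le_of_lt (degreeOf_aeval_le l _ ?_ F) he
      have hlin : ∀ (s : Fin 2) (c : K), degreeOf l (X s + C c) ≤ 1 := by
        intro s c
        refine (degreeOf_add_le _ _ _).trans ?_
        rw [degreeOf_C, degreeOf_X]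
        split_ifs <;> simp
      intro k
      fin_cases k
      · exact hWd l
      · exact hlin _ _
      · exact hlin _ _
    ext d
    rw [coeff_zero]
    by_cases h0 : d 0 < p
    · by_cases h1 : d 1 < p
      · exact mem_aid.1 hFW d h0 h1
      · by_contra hne
        have := (degreeOf_lt_iff (by omega)).1 (hdeg 1) d (mem_support_iff.2 hne)
        omega
    · by_contra hne
      have := (degreeOf_lt_iff (by omega)).1 (hdeg 0) d (mem_support_iff.2 hne)
      omega
  refine ⟨aeval ![X 0 - C y0, X 1 - C x0] W, ?_⟩
  have := congrArg (aeval (R := K) ![(X 0 - C y0 : MvPolynomial (Fin 2) K), X 1 - C x0]) hFW0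
  rw [map_zero] at this
  rw [← this, comp_aeval_apply]
  congr 2
  funext k
  fin_cases k <;> simp

/-- flat case: all pairs of lines in `Z(F)` are incident -/
theorem flat_inc [Fact p.Prime] {F : R3 K} (hF : Irreducible F) (he : F.totalDegree < p)
    (h1 : F ∣ HH 1 F) (h2 : F ∣ HH 2 F) (z0 y0 x0 : K)
    (hv : eval ![z0, y0, x0] F = 0) (hv' : eval ![z0, y0, x0] (pderiv 0 F) ≠ 0)
    (i j : K × K × K) (hi : LI i F = 0) (hj : LJ j F = 0) : inc i j := by
  obtain ⟨W, hW⟩ := bilinear_of_flat he h1 h2 z0 y0 x0 hv hv'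
  have hren : finSuccEquiv K 2 (rename Fin.succ W) = Polynomial.C W := by
    clear hW
    induction W using MvPolynomial.induction_on with
    | C a => simp [finSuccEquiv_apply]
    | add p q hp hq => simp [hp, hq]
    | mul_X p n hp => rw [map_mul, map_mul, hp, rename_X, finSuccEquiv_X_succ, map_mul]
  have hdvd : (X 0 - rename Fin.succ W : R3 K) ∣ F := by
    rw [← map_dvd_iff (finSuccEquiv K 2), map_sub, finSuccEquiv_X_zero, hren, Polynomial.dvd_iff_isRoot,
      Polynomial.IsRoot, ← hW]
    clear hW hF he h1 h2 hv hv' hi hj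
    induction F using MvPolynomial.induction_on with
    | C a => simp [finSuccEquiv_apply]
    | add p q hp hq => simp [hp, hq]
    | mul_X p n hp =>
      rw [map_mul, map_mul, Polynomial.eval_mul, hp]
      congr 1
      fin_cases n
      · simp [finSuccEquiv_X_zero]
      · have := finSuccEquiv_X_succ (R := K) (n := 2) (j := 0)
        simp at this
        simp [this]
      · have := finSuccEquiv_X_succ (R := K) (n := 2) (j := 1)
        simp at this
        simp [this]
  obtain ⟨u, hu⟩ := hdvd
  have hnu : ¬ IsUnit (X 0 - rename Fin.succ W : R3 K) := by
    intro hun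
    have := hun.map (finSuccEquiv K 2)
    rw [map_sub, finSuccEquiv_X_zero, hren] at this
    exact Polynomial.not_isUnit_X_sub_C W this
  have huu : IsUnit u := (hF.isUnit_or_isUnit hu).resolve_left hnu
  have hu0 : ∀ φ : R3 K →ₐ[K] Polynomial K, φ F = 0 → φ (X 0) = φ (rename Fin.succ W) := by
    intro φ h
    rw [hu, map_mul, (huu.map φ).mul_left_eq_zero, map_sub, sub_eq_zero] at h
    exact h
  have e1 := congrArg (Polynomial.eval j.1) (hu0 _ hi)
  have e2 := congrArg (Polynomial.eval i.1) (hu0 _ hj)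
  rw [LI_eval, LI_eval, eval_rename] at e1
  rw [LJ_eval, LJ_eval, eval_rename] at e2
  have : (![i.2.1 * j.1 + i.2.2, j.1, i.1] ∘ Fin.succ : Fin 2 → K) = ![j.2.1 * i.1 + j.2.2, j.1, i.1] ∘ Fin.succ := by
    funext k; fin_cases k <;> rfl
  rw [this, ← e2] at e1
  simpa [inc] using e1.symm

end TF


namespace TF
open MvPolynomial

variable {K : Type*} [Field K]

open Classical in
/-- number of incidences -/
noncomputable def NI (I J : Finset (K × K × K)) : ℕ := ∑ j ∈ J, (I.filter fun i => inc i j).card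

theorem NI_swap (I J : Finset (K × K × K)) [DecidablePred fun q : (K × K × K) × (K × K × K) => inc q.1 q.2]
    [∀ i, DecidablePred (inc (K := K) i)] :
    NI I J = ∑ i ∈ I, (J.filter fun j => inc i j).card := by
  classical
  rw [NI]
  simp only [Finset.card_filter]
  rw [Finset.sum_comm]
  refine Finset.sum_congr rfl fun i _ => Finset.sum_congr rfl fun j _ => ?_
  congr

theorem root_count (P : Polynomial K) (hP : P ≠ 0) (S : Finset (K × K × K))
    (hS : Set.InjOn Prod.fst (S : Set (K × K × K))) (h : ∀ s ∈ S, P.eval s.1 = 0) :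
    S.card ≤ P.natDegree := by
  classical
  rw [← Finset.card_image_of_injOn hS]
  refine le_trans (Finset.card_le_card (t := P.roots.toFinset) ?_)
    ((Multiset.toFinset_card_le _).trans (Polynomial.card_roots' P))
  intro x hx
  obtain ⟨s, hs, rfl⟩ := Finset.mem_image.1 hx
  simp only [Multiset.mem_toFinset]
  exact (Polynomial.mem_roots hP).2 (h s hs)

theorem finSuccEquiv_pderiv (F : R3 K) :
    finSuccEquiv K 2 (pderiv 0 F) = Polynomial.derivative (finSuccEquiv K 2 F) := by
  induction F using MvPolynomial.induction_on with
  | C a => simp [finSuccEquiv_apply]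
  | add p q hp hq => simp [hp, hq]
  | mul_X p n hp =>
    rw [Derivation.leibniz]
    simp only [smul_eq_mul, map_add, map_mul, hp, Polynomial.derivative_mul]
    refine Fin.cases ?_ (fun m => ?_) n
    · simp [finSuccEquiv_X_zero]; ring
    · simp [finSuccEquiv_X_succ, pderiv_X]; ring

variable {p : ℕ} [CharP K p] [Fact p.Prime]

theorem not_dvd_pderiv {F : R3 K} (he : F.totalDegree < p)
    (hz : (finSuccEquiv K 2 F).natDegree ≠ 0) : ¬ F ∣ pderiv 0 F := by
  intro hd
  rw [← map_dvd_iff (finSuccEquiv K 2), finSuccEquiv_pderiv] at hd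
  set P := finSuccEquiv K 2 F
  have hn : P.natDegree < p := by
    refine lt_of_le_of_lt ?_ he
    rw [natDegree_finSuccEquiv]; exact degreeOf_le_totalDegree _ _
  have hP0 : P ≠ 0 := by rintro h; simp [h] at hz
  have hne : Polynomial.derivative P ≠ 0 := by
    intro h0
    have := congrArg (fun q => Polynomial.coeff q (P.natDegree - 1)) h0
    simp only [Polynomial.coeff_derivative, Polynomial.coeff_zero] at this
    rw [Nat.sub_add_cancel (by omega), mul_eq_zero] at this
    rcases this with h | h
    · rw [Polynomial.coeff_natDegree, Polynomial.leadingCoeff_eq_zero] at h; exact hP0 h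
    · have h2 : ((P.natDegree : ℕ) : MvPolynomial (Fin 2) K) = 0 := by
        have : P.natDegree = (P.natDegree - 1) + 1 := by omega
        rw [this]; push_cast; exact h
      rw [CharP.cast_eq_zero_iff (MvPolynomial (Fin 2) K) p] at h2
      exact absurd (Nat.le_of_dvd (by omega) h2) (by omega)
  have h1 := Polynomial.natDegree_le_of_dvd hd hne
  have h2 := Polynomial.natDegree_derivative_lt hz
  omega

open Classical in
theorem component {F : R3 K} (hF : Irreducible F) (he : F.totalDegree < p)
    (I J : Finset (K × K × K)) (hI : Set.InjOn Prod.fst (I : Set (K × K × K)))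
    (hJ : Set.InjOn Prod.fst (J : Set (K × K × K)))
    (hIF : ∀ i ∈ I, LI i F = 0) (hJF : ∀ j ∈ J, LJ j F = 0) (h1 : 1 ≤ F.totalDegree) :
    ∃ Jb ⊆ J, Jb.card ≤ 6 * F.totalDegree ^ 2 ∧
      ((∀ j ∈ J \ Jb, (I.filter fun i => inc i j).card ≤ 4 * F.totalDegree) ∨
        ∀ i ∈ I, ∀ j ∈ J, inc i j) := by
  set e := F.totalDegree with hedef
  have filt_inj : ∀ j, Set.InjOn Prod.fst (((I.filter fun i => inc i j) : Finset _) : Set (K × K × K)) :=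
    fun j => hI.mono (Finset.coe_subset.2 (Finset.filter_subset _ _))
  by_cases hz : (finSuccEquiv K 2 F).natDegree = 0
  · refine ⟨J, Subset.rfl, ?_, Or.inl (by simp)⟩
    obtain ⟨f, hf⟩ : ∃ f, finSuccEquiv K 2 F = Polynomial.C f := ⟨_, Polynomial.eq_C_of_natDegree_eq_zero hz⟩
    have hf0 : f ≠ 0 := by
      rintro rfl
      simp at hf
      exact hF.ne_zero hf
    have := card_roots_bound f hf0 (J.image Prod.fst) (by
      intro y hy
      obtain ⟨j, hj, rfl⟩ := Finset.mem_image.1 hy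
      have := hJF j hj
      rw [LJ_eq_eval₂, hf] at this
      simpa using this)
    rw [Finset.card_image_of_injOn hJ] at this
    have h2 : f.totalDegree ≤ e := by
      have := totalDegree_coeff_finSuccEquiv_add_le F 0 (by rw [hf]; simpa using hf0)
      rw [hf] at this
      simpa using this
    nlinarith
  by_cases hG : F ∣ HH 2 F
  swap
  · refine ⟨J, Subset.rfl, ?_, Or.inl (by simp)⟩
    have := elim_bound hF hz hG J hJ fun j hj => ⟨hJF j hj, LJ_HH (hJF j hj)⟩
    have h3 := HH_totalDegree 2 F
    rw [← hedef] at *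
    nlinarith
  by_cases hH : F ∣ HH 1 F
  swap
  · refine ⟨J.filter fun j => LJ j (HH 1 F) = 0, Finset.filter_subset _ _, ?_, Or.inl ?_⟩
    · have := elim_bound hF hz hH (J.filter fun j => LJ j (HH 1 F) = 0) (hJ.mono (Finset.coe_subset.2 (Finset.filter_subset _ _)))
        fun j hj => ⟨hJF j (Finset.mem_filter.1 hj).1, (Finset.mem_filter.1 hj).2⟩
      have h3 := HH_totalDegree 1 F
      rw [← hedef] at *
      nlinarith
    · intro j hj
      simp only [Finset.mem_sdiff, Finset.mem_filter, not_and] at hj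
      have := root_count (LJ j (HH 1 F)) (hj.2 hj.1) _ (filt_inj j) (by
        intro i hi
        rw [Finset.mem_filter] at hi
        rw [← inc_eval hi.2, LI_HH (hIF i hi.1)]
        simp)
      have h3 := HH_totalDegree 1 F
      have h4 := LJ_natDegree j (HH 1 F)
      omega
  · refine ⟨J.filter fun j => LJ j (pderiv 0 F) = 0, Finset.filter_subset _ _, ?_, ?_⟩
    · have := elim_bound hF hz (not_dvd_pderiv he hz) (J.filter fun j => LJ j (pderiv 0 F) = 0)
        (hJ.mono (Finset.coe_subset.2 (Finset.filter_subset _ _)))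
        fun j hj => ⟨hJF j (Finset.mem_filter.1 hj).1, (Finset.mem_filter.1 hj).2⟩
      have h3 := totalDegree_pderiv_le 0 F
      rw [← hedef] at *
      nlinarith
    · by_cases hall : ∃ i ∈ I, ∃ j ∈ J, inc i j ∧ (LJ j (pderiv 0 F)).eval i.1 ≠ 0
      · right
        obtain ⟨i, hi, j, hj, hij, hne⟩ := hall
        intro i' hi' j' hj'
        have v := congrArg (Polynomial.eval i.1) (hJF j hj)
        rw [LJ_eval] at v hne
        exact flat_inc hF he hH hG _ _ _ (by simpa using v) hne i' j' (hIF i' hi') (hJF j' hj')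
      · left
        push Not at hall
        intro j hj
        simp only [Finset.mem_sdiff, Finset.mem_filter, not_and] at hj
        have := root_count (LJ j (pderiv 0 F)) (hj.2 hj.1) _ (filt_inj j) (by
          intro i hi
          rw [Finset.mem_filter] at hi
          exact hall i hi.1 j hj.1 hi.2)
        have h3 := totalDegree_pderiv_le 0 F
        have h4 := LJ_natDegree j (pderiv 0 F)
        omega

set_option maxHeartbeats 1000000 in
open Classical in
theorem surface (I : Finset (K × K × K)) (hI : Set.InjOn Prod.fst (I : Set (K × K × K))) (k : ℕ)
    (F : R3 K) : F ≠ 0 → F.totalDegree < p → ∀ (J : Finset (K × K × K)),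
    Set.InjOn Prod.fst (J : Set (K × K × K)) →
    (∀ j ∈ J, ∀ j' ∈ J, j ≠ j' → (I.filter fun i => inc i j ∧ inc i j').card ≤ k) →
    (∀ j ∈ J, LJ j F = 0) →
    ∃ Jb ⊆ J, Jb.card ≤ 6 * F.totalDegree ^ 2 ∧
      NI I (J \ Jb) ≤ 2 * F.totalDegree * I.card + 4 * F.totalDegree * J.card + k * J.card := by
  induction F using WfDvdMonoid.induction_on_irreducible with
  | zero => intro h; exact absurd rfl h
  | unit u hu =>
    intro _ _ J _ _ h
    have : J = ∅ := by
      rw [Finset.eq_empty_iff_forall_notMem]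
      intro j hj
      exact (hu.map (LJ j)).ne_zero (h j hj)
    subst this
    exact ⟨∅, by simp, by simp, by simp [NI]⟩
  | mul F' F1 hF'0 hF1 ih =>
    intro h0 hdeg J hJ hk hv
    have hdm := totalDegree_mul_of_isDomain hF1.ne_zero hF'0
    set e1 := F1.totalDegree with he1
    set e' := F'.totalDegree with he'
    have hpos : 1 ≤ e1 := by
      by_contra hlt
      have h0 : F1.totalDegree = 0 := by omega
      rw [totalDegree_eq_zero_iff_eq_C] at h0
      apply hF1.not_isUnit
      rw [h0]
      apply IsUnit.map
      rw [isUnit_iff_ne_zero]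
      intro hc
      rw [hc, map_zero] at h0
      exact hF1.ne_zero h0
    set J1 := J.filter fun j => LJ j F1 = 0 with hJ1
    set J' := J.filter fun j => ¬ LJ j F1 = 0 with hJ'
    have hsplit : J1.card + J'.card = J.card := Finset.card_filter_add_card_filter_not _
    obtain ⟨Jb', hsub', hcard', hN'⟩ := ih hF'0 (by omega) J' (hJ.mono (Finset.coe_subset.2 (Finset.filter_subset _ _)))
      (fun j hj j' hj' => hk j (Finset.mem_filter.1 hj).1 j' (Finset.mem_filter.1 hj').1) (by
        intro j hj
        have h1 := Finset.mem_filter.1 hj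
        have h2 := hv j h1.1
        rw [map_mul, mul_eq_zero] at h2
        exact h2.resolve_left h1.2)
    set I1 := I.filter fun i => LI i F1 = 0 with hI1
    obtain ⟨Jb1, hsub1, hcard1, hcase⟩ := component hF1 (by omega) I1 J1 (hI.mono (Finset.coe_subset.2 (Finset.filter_subset _ _)))
      (hJ.mono (Finset.coe_subset.2 (Finset.filter_subset _ _))) (fun i hi => (Finset.mem_filter.1 hi).2)
      (fun i hi => (Finset.mem_filter.1 hi).2) hpos
    refine ⟨Jb1 ∪ Jb', Finset.union_subset (hsub1.trans (Finset.filter_subset _ _))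
      (hsub'.trans (Finset.filter_subset _ _)), ?_, ?_⟩
    · refine (Finset.card_union_le _ _).trans ?_
      rw [hdm]
      nlinarith
    have hNsplit : NI I (J \ (Jb1 ∪ Jb')) ≤ NI I (J1 \ Jb1) + NI I (J' \ Jb') := by
      unfold NI
      rw [← Finset.sum_union]
      · apply Finset.sum_le_sum_of_subset
        intro j hj
        simp only [Finset.mem_sdiff, Finset.mem_union, not_or, hJ1, hJ', Finset.mem_filter] at hj ⊢
        tauto
      · rw [Finset.disjoint_left]
        intro j hj hj'
        simp only [Finset.mem_sdiff, hJ1, hJ', Finset.mem_filter] at hj hj'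
        tauto
    have hA : NI (I \ I1) (J1 \ Jb1) ≤ e1 * I.card := by
      rw [NI_swap]
      refine (Finset.sum_le_card_nsmul _ _ e1 ?_).trans ?_
      · intro i hi
        simp only [Finset.mem_sdiff, hI1, Finset.mem_filter, not_and] at hi
        have := root_count (LI i F1) (hi.2 hi.1) ((J1 \ Jb1).filter fun j => inc i j)
          (hJ.mono (by intro j; simp [hJ1]; tauto)) (by
          intro j hj
          simp only [Finset.mem_filter, Finset.mem_sdiff, hJ1] at hj
          rw [inc_eval hj.2, hj.1.1.2]
          simp)
        have h4 := LI_natDegree i F1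
        omega
      · rw [smul_eq_mul, mul_comm]
        exact Nat.mul_le_mul_left _ (Finset.card_le_card Finset.sdiff_subset)
    have hB : NI I1 (J1 \ Jb1) ≤ e1 * I.card + 4 * e1 * J1.card + k * J1.card := by
      have hle : (J1 \ Jb1).card ≤ J1.card := Finset.card_le_card Finset.sdiff_subset
      rcases hcase with hc | hc
      · unfold NI
        refine (Finset.sum_le_card_nsmul _ _ _ hc).trans ?_
        rw [smul_eq_mul]
        have h5 := Nat.mul_le_mul_right (4 * e1) hle
        have h6 : 0 ≤ e1 * I.card := Nat.zero_le _
        have h8 : 0 ≤ k * J1.card := Nat.zero_le _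
        linarith
      · have hI1le : I1.card ≤ I.card := Finset.card_le_card (Finset.filter_subset _ _)
        have hNle : NI I1 (J1 \ Jb1) ≤ J1.card * I1.card := by
          unfold NI
          refine (Finset.sum_le_card_nsmul _ _ I1.card ?_).trans ?_
          · intro j _; exact Finset.card_le_card (Finset.filter_subset _ _)
          · rw [smul_eq_mul]; exact Nat.mul_le_mul_right _ hle
        by_cases h2 : 1 < J1.card
        · obtain ⟨a, ha, b, hb, hab⟩ := Finset.one_lt_card.1 h2
          have h3 := hk a (Finset.mem_filter.1 ha).1 b (Finset.mem_filter.1 hb).1 hab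
          have h4 : I1.card ≤ k := by
            refine le_trans (Finset.card_le_card ?_) h3
            intro i hi
            rw [Finset.mem_filter]
            exact ⟨(Finset.mem_filter.1 hi).1, hc i hi a ha, hc i hi b hb⟩
          have h5 : J1.card * I1.card ≤ J1.card * k := Nat.mul_le_mul_left _ h4
          have h6 : 0 ≤ e1 * I.card := Nat.zero_le _
          have h7 : 0 ≤ e1 * J1.card := Nat.zero_le _
          linarith
        · have h3 : J1.card ≤ 1 := by omega
          have h5 : J1.card * I1.card ≤ 1 * I.card := Nat.mul_le_mul h3 hI1le
          have h6 : 1 * I.card ≤ e1 * I.card := Nat.mul_le_mul_right _ hpos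
          have h7 : 0 ≤ e1 * J1.card := Nat.zero_le _
          have h8 : 0 ≤ k * J1.card := Nat.zero_le _
          linarith
    have hAB : NI I (J1 \ Jb1) ≤ NI (I \ I1) (J1 \ Jb1) + NI I1 (J1 \ Jb1) := by
      unfold NI
      rw [← Finset.sum_add_distrib]
      refine Finset.sum_le_sum fun j _ => ?_
      refine le_trans (Finset.card_le_card ?_) (Finset.card_union_le _ _)
      intro i hi
      simp only [Finset.mem_filter, Finset.mem_union, Finset.mem_sdiff] at hi ⊢
      tauto
    rw [hdm]
    have h1 : J1.card ≤ J.card := by omega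
    have h2 : J'.card ≤ J.card := by omega
    have e1J : e1 * J1.card ≤ e1 * J.card := Nat.mul_le_mul_left _ h1
    have e'J : e' * J'.card ≤ e' * J.card := Nat.mul_le_mul_left _ h2
    have kJ : k * J1.card + k * J'.card = k * J.card := by rw [← mul_add, hsplit]
    linarith

set_option maxHeartbeats 1000000 in
open Classical in
theorem key_incidence (n k : ℕ) (hn : 6 * (Nat.sqrt n + 1) < p) (L : ℕ) :
    ∀ (I J : Finset (K × K × K)), Set.InjOn Prod.fst (I : Set (K × K × K)) →
    Set.InjOn Prod.fst (J : Set (K × K × K)) →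
    (∀ j ∈ J, ∀ j' ∈ J, j ≠ j' → (I.filter fun i => inc i j ∧ inc i j').card ≤ k) →
    I.card ≤ n → I.card ≤ 2 ^ L → J.card ≤ 864 * I.card →
    NI I J ≤ I.card * (L + 1) * (1728 * (30 * (Nat.sqrt n + 1) + k) + 12 * (Nat.sqrt n + 1)) := by
  set s := Nat.sqrt n + 1 with hs
  have hs1 : 1 ≤ s := by omega
  induction L with
  | zero =>
    intro I J _ _ _ _ h1 hJ
    simp only [pow_zero] at h1
    have : NI I J ≤ J.card * I.card := by
      unfold NI
      refine (Finset.sum_le_card_nsmul _ _ I.card ?_).trans_eq (smul_eq_mul _ _)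
      intro j _; exact Finset.card_le_card (Finset.filter_subset _ _)
    nlinarith
  | succ L ih =>
    intro I J hI hJ hk hIn hIL hJI
    -- one half
    have half : ∀ P ⊆ I, P.card ≤ 2 ^ L → NI P J ≤ (30 * s + k) * (864 * I.card) + 12 * s * P.card
        + P.card * (L + 1) * (1728 * (30 * s + k) + 12 * s) := by
      intro P hP hPL
      rcases P.eq_empty_or_nonempty with rfl | hne
      · simp [NI]
      have hPpos : 1 ≤ P.card := hne.card_pos
      set r := Nat.sqrt P.card + 1 with hr
      have hPle : P.card ≤ n := (Finset.card_le_card hP).trans hIn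
      have hrs : r ≤ s := by
        have := Nat.sqrt_le_sqrt hPle
        omega
      have hlt : P.card < r ^ 2 := by rw [sq]; exact Nat.lt_succ_sqrt P.card
      have hr4 : r ^ 2 ≤ 4 * P.card := by
        have h1 : Nat.sqrt P.card * Nat.sqrt P.card ≤ P.card := Nat.sqrt_le P.card
        have h2 : 1 ≤ Nat.sqrt P.card := Nat.sqrt_pos.2 hPpos
        nlinarith
      obtain ⟨F, hF0, hFd, hFv⟩ := exists_vanishing P (2 * r) (by nlinarith)
      set d := F.totalDegree with hd
      have hd6 : d ≤ 6 * r := by omega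
      have hPI : Set.InjOn Prod.fst (P : Set (K × K × K)) := hI.mono (by exact_mod_cast hP)
      set J1 := J.filter fun j => LJ j F = 0 with hJ1
      have hkP : ∀ j ∈ J, ∀ j' ∈ J, j ≠ j' → (P.filter fun i => inc i j ∧ inc i j').card ≤ k := by
        intro j hj j' hj' hjj
        exact (Finset.card_le_card (Finset.filter_subset_filter _ hP)).trans (hk j hj j' hj' hjj)
      obtain ⟨Jb, hsub, hcard, hN⟩ := surface (p := p) P hPI k F hF0 (by omega) J1
        (hJ.mono (Finset.coe_subset.2 (Finset.filter_subset _ _)))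
        (fun j hj j' hj' => hkP j (Finset.mem_filter.1 hj).1 j' (Finset.mem_filter.1 hj').1)
        (fun j hj => (Finset.mem_filter.1 hj).2)
      have hJbJ : Jb ⊆ J := hsub.trans (Finset.filter_subset _ _)
      have hJbc : Jb.card ≤ 864 * P.card := by
        have : d ^ 2 ≤ (6 * r) ^ 2 := Nat.pow_le_pow_left hd6 2
        nlinarith
      have hrec := ih P Jb hPI (hJ.mono (by exact_mod_cast hJbJ))
        (fun j hj j' hj' => hkP j (hJbJ hj) j' (hJbJ hj')) hPle hPL hJbc
      have hout : NI P (J \ J1) ≤ d * J.card := by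
        unfold NI
        refine (Finset.sum_le_card_nsmul _ _ d ?_).trans ?_
        · intro j hj
          simp only [hJ1, Finset.mem_sdiff, Finset.mem_filter, not_and] at hj
          have := root_count (LJ j F) (hj.2 hj.1) (P.filter fun i => inc i j) (hPI.mono (Finset.coe_subset.2 (Finset.filter_subset _ _))) (by
            intro i hi
            rw [Finset.mem_filter] at hi
            rw [← inc_eval hi.2, hFv i hi.1]
            simp)
          exact this.trans (LJ_natDegree j F)
        · rw [smul_eq_mul, mul_comm]
          exact Nat.mul_le_mul_left _ (Finset.card_le_card Finset.sdiff_subset)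
      have hsum : NI P J ≤ NI P (J \ J1) + NI P (J1 \ Jb) + NI P Jb := by
        unfold NI
        rw [← Finset.sum_union, ← Finset.sum_union]
        · apply Finset.sum_le_sum_of_subset
          intro j hj
          simp only [Finset.mem_union, Finset.mem_sdiff]
          tauto
        · rw [Finset.disjoint_left]
          intro j hj hj'
          have := hsub hj'
          simp only [Finset.mem_union, Finset.mem_sdiff] at hj
          tauto
        · rw [Finset.disjoint_left]
          intro j hj hj'
          simp only [Finset.mem_sdiff] at hj hj'
          tauto
      have hJ1c : J1.card ≤ J.card := Finset.card_le_card (Finset.filter_subset _ _)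
      have hds : d ≤ 6 * s := by omega
      have a1 : d * J.card ≤ 6 * s * (864 * I.card) := Nat.mul_le_mul hds hJI
      have a2 : 4 * d * J1.card ≤ 24 * s * (864 * I.card) :=
        Nat.mul_le_mul (by omega) (hJ1c.trans hJI)
      have a3 : 2 * d * P.card ≤ 12 * s * P.card := Nat.mul_le_mul_right _ (by omega)
      have a4 : k * J1.card ≤ k * (864 * I.card) := Nat.mul_le_mul_left _ (hJ1c.trans hJI)
      linarith
    obtain ⟨P1, hP1, hc1⟩ := Finset.exists_subset_card_eq (s := I) (n := I.card / 2) (Nat.div_le_self _ _)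
    have hc2 : (I \ P1).card = I.card - I.card / 2 := by rw [Finset.card_sdiff_of_subset hP1, hc1]
    have hpow : (2:ℕ) ^ (L + 1) = 2 * 2 ^ L := by rw [pow_succ]; ring
    have H1 := half P1 hP1 (by omega)
    have H2 := half (I \ P1) Finset.sdiff_subset (by omega)
    have hsum : NI I J ≤ NI P1 J + NI (I \ P1) J := by
      unfold NI
      rw [← Finset.sum_add_distrib]
      refine Finset.sum_le_sum fun j _ => ?_
      refine le_trans (Finset.card_le_card ?_) (Finset.card_union_le _ _)
      intro i hi
      simp only [Finset.mem_filter, Finset.mem_union, Finset.mem_sdiff] at hi ⊢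
      tauto
    have hcc : P1.card + (I \ P1).card = I.card := by omega
    have key : NI I J ≤ 2 * ((30 * s + k) * (864 * I.card)) + 12 * s * (P1.card + (I \ P1).card) +
        (P1.card + (I \ P1).card) * (L + 1) * (1728 * (30 * s + k) + 12 * s) := by
      linarith
    rw [hcc] at key
    refine key.trans (le_of_eq ?_)
    ring

end TF


namespace TF

section
variable {p : ℕ} [Fact p.Prime]

/-- coincidences between pairs of lines -/
def Qn (S : Finset (ZMod p)) (L : Finset (ZMod p × ZMod p)) : ℕ :=
  (((S ×ˢ L) ×ˢ (S ×ˢ L)).filter fun w =>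
    w.1.2.1 * w.1.1 + w.1.2.2 = w.2.2.1 * w.2.1 + w.2.2.2).card

abbrev KK (p : ℕ) [Fact p.Prime] := FractionRing (Polynomial (ZMod p))

noncomputable def ph : Polynomial (ZMod p) →+* KK p := algebraMap _ _

theorem ph_inj : Function.Injective (ph (p := p)) := IsFractionRing.injective _ _

open Polynomial in
noncomputable def dI (u : ZMod p) : KK p := ph (1 + X ^ 3 * C u)
open Polynomial in
noncomputable def dJ (u : ZMod p) : KK p := ph (1 + X ^ 2 * C u)

theorem dI_ne (u : ZMod p) : dI u ≠ 0 := by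
  rw [dI, Ne, map_eq_zero_iff _ ph_inj]
  intro h
  have := congrArg (fun P => Polynomial.coeff P 0) h
  simp at this

theorem dJ_ne (u : ZMod p) : dJ u ≠ 0 := by
  rw [dJ, Ne, map_eq_zero_iff _ ph_inj]
  intro h
  have := congrArg (fun P => Polynomial.coeff P 0) h
  simp at this

open Polynomial in
/-- I-line of a triple -/
noncomputable def lI (q : ZMod p × ZMod p × ZMod p) : KK p × KK p × KK p :=
  (ph (C q.1 + X * C q.2.1 + X ^ 2 * C q.2.2) / dI q.2.1,
    - ph (C q.2.1) / dI q.2.1, ph (C q.2.2) / dI q.2.1)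

open Polynomial in
/-- J-line of a triple -/
noncomputable def lJ (q : ZMod p × ZMod p × ZMod p) : KK p × KK p × KK p :=
  (- ph (C q.1 + X * C q.2.1 + X ^ 3 * C q.2.2) / dJ q.2.1,
    ph (C q.2.1) / dJ q.2.1, ph (C q.2.2) / dJ q.2.1)

open Polynomial in
theorem inc_iff (q π : ZMod p × ZMod p × ZMod p) :
    inc (lI q) (lJ π) ↔ π.2.1 * q.1 + π.2.2 = q.2.1 * π.1 + q.2.2 := by
  have h1 := dI_ne q.2.1
  have h2 := dJ_ne π.2.1
  unfold inc lI lJ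
  simp only
  rw [← sub_eq_zero]
  have key : ph (C π.2.1) / dJ π.2.1 * (ph (C q.1 + X * C q.2.1 + X ^ 2 * C q.2.2) / dI q.2.1) +
      ph (C π.2.2) / dJ π.2.1 - (- ph (C q.2.1) / dI q.2.1 *
      (- ph (C π.1 + X * C π.2.1 + X ^ 3 * C π.2.2) / dJ π.2.1) + ph (C q.2.2) / dI q.2.1)
      = ph (C (π.2.1 * q.1 + π.2.2 - (q.2.1 * π.1 + q.2.2))) / (dI q.2.1 * dJ π.2.1) := by
    field_simp
    simp only [dI, dJ, map_add, map_mul, map_sub, map_one, map_pow]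
    ring
  rw [key, div_eq_zero_iff, map_eq_zero_iff _ ph_inj, C_eq_zero, sub_eq_zero]
  simp [h1, h2]

open Polynomial in
theorem lI_inj : Function.Injective fun q => (lI (p := p) q).1 := by
  rintro ⟨s, u, v⟩ ⟨s', u', v'⟩ h
  simp only [lI] at h
  rw [div_eq_div_iff (dI_ne _) (dI_ne _), dI, dI, ← map_mul, ← map_mul] at h
  have h := ph_inj h
  have e : ∀ s u v u' : ZMod p, (C s + X * C u + X ^ 2 * C v) * (1 + X ^ 3 * C u') =
    C s + C u * X ^ 1 + C v * X ^ 2 + C (s * u') * X ^ 3 + C (u * u') * X ^ 4 + C (v * u') * X ^ 5 := by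
    intro s u v u'; simp only [map_mul]; ring
  rw [e, e] at h
  have h0 := congrArg (fun P => Polynomial.coeff P 0) h
  have h1 := congrArg (fun P => Polynomial.coeff P 1) h
  have h2 := congrArg (fun P => Polynomial.coeff P 2) h
  simp only [coeff_add, coeff_C_mul, coeff_X_pow, coeff_C] at h0 h1 h2
  norm_num at h0 h1 h2
  simp [h0, h1, h2]

open Polynomial in
theorem lJ_inj : Function.Injective fun q => (lJ (p := p) q).1 := by
  rintro ⟨s, u, v⟩ ⟨s', u', v'⟩ h
  simp only [lJ] at h
  rw [neg_div, neg_div, neg_inj, div_eq_div_iff (dJ_ne _) (dJ_ne _), dJ, dJ, ← map_mul, ← map_mul] at h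
  have h := ph_inj h
  have e : ∀ s u v u' : ZMod p, (C s + X * C u + X ^ 3 * C v) * (1 + X ^ 2 * C u') =
    C s + C u * X ^ 1 + C (s * u') * X ^ 2 + C (v + u * u') * X ^ 3 + C (v * u') * X ^ 5 := by
    intro s u v u'; simp only [map_mul, map_add]; ring
  rw [e, e] at h
  have h0 := congrArg (fun P => Polynomial.coeff P 0) h
  have h1 := congrArg (fun P => Polynomial.coeff P 1) h
  have h3 := congrArg (fun P => Polynomial.coeff P 3) h
  simp only [coeff_add, coeff_C_mul, coeff_X_pow, coeff_C] at h0 h1 h3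
  norm_num at h0 h1 h3
  subst h0 h1
  rw [add_left_inj] at h3
  simp [h3]

instance : CharP (KK p) p := charP_of_injective_ringHom (ph_inj (p := p)) p

open Classical in
theorem Q_bound (S : Finset (ZMod p)) (L : Finset (ZMod p × ZMod p)) (l : ℕ)
    (hn : 6 * (Nat.sqrt (S.card * L.card) + 1) < p) (hl : S.card * L.card ≤ 2 ^ l) :
    Qn S L ≤ S.card * L.card * (l + 1) * (1728 * (30 * (Nat.sqrt (S.card * L.card) + 1) +
      (S.card + (L.image Prod.fst).card)) + 12 * (Nat.sqrt (S.card * L.card) + 1)) := by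
  have injI : Function.Injective (lI (p := p)) := fun a b h => lI_inj (congrArg Prod.fst h)
  have injJ : Function.Injective (lJ (p := p)) := fun a b h => lJ_inj (congrArg Prod.fst h)
  set I := (S ×ˢ L).image lI with hI
  set J := (S ×ˢ L).image lJ with hJ
  have cI : I.card = S.card * L.card := by
    rw [hI, Finset.card_image_of_injective _ injI, Finset.card_product]
  have cJ : J.card = S.card * L.card := by
    rw [hJ, Finset.card_image_of_injective _ injJ, Finset.card_product]
  have main := key_incidence (K := KK p) (p := p) (S.card * L.card) (S.card + (L.image Prod.fst).card) hn l I J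
    (by
      intro a ha b hb hab
      obtain ⟨a, -, rfl⟩ := Finset.mem_image.1 (Finset.mem_coe.1 ha)
      obtain ⟨b, -, rfl⟩ := Finset.mem_image.1 (Finset.mem_coe.1 hb)
      rw [lI_inj hab])
    (by
      intro a ha b hb hab
      obtain ⟨a, -, rfl⟩ := Finset.mem_image.1 (Finset.mem_coe.1 ha)
      obtain ⟨b, -, rfl⟩ := Finset.mem_image.1 (Finset.mem_coe.1 hb)
      rw [lJ_inj hab])
    (by
      intro j hj j' hj' hne
      obtain ⟨⟨s', u, v⟩, -, rfl⟩ := Finset.mem_image.1 hj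
      obtain ⟨⟨s2, u2, v2⟩, -, rfl⟩ := Finset.mem_image.1 hj'
      have hne' : ((s', u, v) : ZMod p × ZMod p × ZMod p) ≠ (s2, u2, v2) := fun h => hne (by rw [h])
      have e1 : (I.filter fun i => inc i (lJ (s', u, v)) ∧ inc i (lJ (s2, u2, v2))) =
        ((S ×ˢ L).filter fun q => u * q.1 + v = q.2.1 * s' + q.2.2 ∧ u2 * q.1 + v2 = q.2.1 * s2 + q.2.2).image lI := by
        rw [hI, Finset.filter_image]
        congr 1
        apply Finset.filter_congr
        intro q _
        rw [inc_iff, inc_iff]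
      rw [e1, Finset.card_image_of_injective _ injI]
      by_cases hs : s' = s2
      · subst hs
        refine le_trans (Finset.card_le_card_of_injOn (t := L.image Prod.fst) (fun q => q.2.1) ?_ ?_)
          (Nat.le_add_left _ _)
        · intro q hq
          simp only [Finset.coe_filter, Set.mem_setOf_eq, Finset.mem_product] at hq
          exact Finset.mem_coe.2 (Finset.mem_image_of_mem _ hq.1.2)
        · rintro ⟨s, a, b⟩ hq ⟨t, a', b'⟩ hq' haa
          simp only [Finset.coe_filter, Set.mem_setOf_eq, Finset.mem_product] at hq hq' haa
          subst haa
          obtain ⟨-, h1, h2⟩ := hq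
          obtain ⟨-, h3, h4⟩ := hq'
          have hu : u ≠ u2 := by
            rintro rfl
            apply hne'
            have : v = v2 := by linear_combination h1 - h2
            rw [this]
          have hst : s = t := by
            have : (u - u2) * (s - t) = 0 := by linear_combination h1 - h2 - h3 + h4
            rcases mul_eq_zero.1 this with h | h
            · exact absurd (sub_eq_zero.1 h) hu
            · exact sub_eq_zero.1 h
          subst hst
          have : b = b' := by linear_combination h3 - h1
          rw [this]
      · refine le_trans (Finset.card_le_card_of_injOn (t := S) (fun q => q.1) ?_ ?_)
          (Nat.le_add_right _ _)
        · intro q hq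
          simp only [Finset.coe_filter, Set.mem_setOf_eq, Finset.mem_product] at hq
          exact hq.1.1
        · rintro ⟨s, a, b⟩ hq ⟨t, a', b'⟩ hq' haa
          simp only [Finset.coe_filter, Set.mem_setOf_eq, Finset.mem_product] at hq hq' haa
          subst haa
          obtain ⟨-, h1, h2⟩ := hq
          obtain ⟨-, h3, h4⟩ := hq'
          have hst : a = a' := by
            have : (s' - s2) * (a - a') = 0 := by linear_combination -h1 + h2 + h3 - h4
            rcases mul_eq_zero.1 this with h | h
            · exact absurd (sub_eq_zero.1 h) hs
            · exact sub_eq_zero.1 h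
          subst hst
          have : b = b' := by linear_combination h3 - h1
          rw [this])
    cI.le (cI.le.trans hl) (by omega)
  rw [cI] at main
  refine le_trans ?_ main
  have hNI : NI I J = ((I ×ˢ J).filter fun q => inc q.1 q.2).card := by
    rw [NI, Finset.card_filter, Finset.sum_product_right]
    simp only [Finset.card_filter]
  rw [hNI, Qn]
  refine Finset.card_le_card_of_injOn
    (fun w => (lI (w.1.1, w.2.2.1, w.2.2.2), lJ (w.2.1, w.1.2.1, w.1.2.2))) ?_ ?_
  · rintro ⟨⟨s, u, v⟩, ⟨s', u', v'⟩⟩ hw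
    simp only [Finset.coe_filter, Set.mem_setOf_eq, Finset.mem_product] at hw ⊢
    obtain ⟨⟨⟨h1, h2⟩, h3, h4⟩, h5⟩ := hw
    refine ⟨⟨Finset.mem_image_of_mem _ (Finset.mem_product.2 ⟨h1, h4⟩),
      Finset.mem_image_of_mem _ (Finset.mem_product.2 ⟨h3, h2⟩)⟩, ?_⟩
    rw [inc_iff]
    exact h5
  · rintro ⟨⟨s, u, v⟩, ⟨s', u', v'⟩⟩ _ ⟨⟨s2, u2, v2⟩, ⟨s2', u2', v2'⟩⟩ _ h
    simp only [Prod.mk.injEq] at h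
    have h1 := injI h.1
    have h2 := injJ h.2
    simp only [Prod.mk.injEq] at h1 h2 ⊢
    tauto

end
end TF


namespace TF

section
variable {p : ℕ} [Fact p.Prime]

theorem coll_card {α : Type*} (T : Finset α) (f : α → ZMod p) :
    ((T ×ˢ T).filter fun w => f w.1 = f w.2).card = ∑ t, (T.filter fun w => f w = t).card ^ 2 := by
  classical
  rw [Finset.card_eq_sum_card_fiberwise (f := fun w => f w.1) (t := Finset.univ)
    (fun _ _ => Finset.mem_coe.2 (Finset.mem_univ _))]
  refine Finset.sum_congr rfl fun t _ => ?_
  rw [sq, ← Finset.card_product]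
  congr 1
  ext w
  simp only [Finset.mem_filter, Finset.mem_product]
  constructor
  · rintro ⟨⟨⟨h1, h2⟩, h3⟩, h4⟩
    exact ⟨⟨h1, h4⟩, h2, h3 ▸ h4⟩
  · rintro ⟨⟨h1, h4⟩, h2, h3⟩
    exact ⟨⟨⟨h1, h2⟩, h4.trans h3.symm⟩, h4⟩

/-- number of `(s, line)` with value `t` -/
def RR (S : Finset (ZMod p)) (L : Finset (ZMod p × ZMod p)) (t : ZMod p) : ℕ :=
  ((S ×ˢ L).filter fun w => w.2.1 * w.1 + w.2.2 = t).card

theorem Qn_eq (S : Finset (ZMod p)) (L : Finset (ZMod p × ZMod p)) :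
    Qn S L = ∑ t, RR S L t ^ 2 := by
  unfold Qn RR
  exact coll_card (S ×ˢ L) (fun w => w.2.1 * w.1 + w.2.2)

theorem RR_eq (S : Finset (ZMod p)) (L : Finset (ZMod p × ZMod p)) (t : ZMod p) :
    RR S L t = ∑ s ∈ S, (L.filter fun w => w.1 * s + w.2 = t).card := by
  classical
  unfold RR
  rw [Finset.card_filter, Finset.sum_product]
  refine Finset.sum_congr rfl fun s _ => ?_
  rw [Finset.card_filter]

theorem line_moment (L : Finset (ZMod p × ZMod p)) :
    ∑ s : ZMod p, ∑ t : ZMod p, (L.filter fun w => w.1 * s + w.2 = t).card ^ 2 ≤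
      L.card * p + L.card * L.card := by
  classical
  have h1 : ∀ s : ZMod p, ∑ t : ZMod p, (L.filter fun w => w.1 * s + w.2 = t).card ^ 2 =
      ∑ z ∈ L ×ˢ L, if z.1.1 * s + z.1.2 = z.2.1 * s + z.2.2 then 1 else 0 := by
    intro s
    rw [← coll_card L (fun w => w.1 * s + w.2), Finset.card_filter]
  simp_rw [h1]
  rw [Finset.sum_comm]
  have h2 : ∀ z ∈ L ×ˢ L, (∑ s : ZMod p, if z.1.1 * s + z.1.2 = z.2.1 * s + z.2.2 then 1 else 0) ≤
      (if z.1 = z.2 then p else 0) + 1 := by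
    intro z _
    rw [← Finset.card_filter]
    by_cases hz : z.1 = z.2
    · rw [if_pos hz]
      refine (Finset.card_filter_le _ _).trans ?_
      rw [Finset.card_univ, ZMod.card]; omega
    · rw [if_neg hz, zero_add]
      rw [Finset.card_le_one]
      intro a ha b hb
      simp only [Finset.mem_filter, Finset.mem_univ, true_and] at ha hb
      by_contra hab
      have e : (z.1.1 - z.2.1) * (a - b) = 0 := by linear_combination ha - hb
      rcases mul_eq_zero.1 e with e | e
      · have e1 := sub_eq_zero.1 e
        rw [e1] at ha
        exact hz (Prod.ext e1 (add_left_cancel ha))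
      · exact hab (sub_eq_zero.1 e)
  refine (Finset.sum_le_sum h2).trans ?_
  rw [Finset.sum_add_distrib, Finset.sum_product]
  simp [Finset.sum_ite_eq]

theorem vinh (S : Finset (ZMod p)) (L : Finset (ZMod p × ZMod p)) :
    ∑ t : ZMod p, ((RR S L t : ℝ) - S.card * L.card / p) ^ 2 ≤ S.card * p * L.card := by
  classical
  have hp : (0:ℝ) < p := by exact_mod_cast (Fact.out : p.Prime).pos
  have hm := line_moment L
  set i : ZMod p → ZMod p → ℝ := fun s t => ((L.filter fun w => w.1 * s + w.2 = t).card : ℝ) with hi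
  have hm' : ∑ s : ZMod p, ∑ t : ZMod p, i s t ^ 2 ≤ L.card * p + L.card * L.card := by
    simp only [hi]; exact_mod_cast hm
  have hs : ∀ s : ZMod p, ∑ t : ZMod p, i s t = L.card := by
    intro s
    simp only [hi]
    have := Finset.card_eq_sum_card_fiberwise (s := L) (f := fun w => w.1 * s + w.2)
      (t := Finset.univ) (fun _ _ => Finset.mem_coe.2 (Finset.mem_univ _))
    rw [← Nat.cast_sum, this]
  have hR : ∀ t, ((RR S L t : ℝ) - S.card * L.card / p) = ∑ s ∈ S, (i s t - L.card / p) := by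
    intro t
    rw [RR_eq, Finset.sum_sub_distrib, Finset.sum_const, nsmul_eq_mul]
    push_cast
    ring
  have hv : ∑ s : ZMod p, ∑ t : ZMod p, (i s t - L.card / p) ^ 2 ≤ L.card * p := by
    have e : ∀ s : ZMod p, ∑ t : ZMod p, (i s t - L.card / p) ^ 2 =
        ∑ t : ZMod p, i s t ^ 2 - (L.card:ℝ) ^ 2 / p := by
      intro s
      have : ∀ t, (i s t - L.card / p) ^ 2 = i s t ^ 2 - 2 * (L.card / p) * i s t +
        (L.card / p:ℝ) ^ 2 := fun t => by ring
      simp_rw [this]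
      rw [Finset.sum_add_distrib, Finset.sum_sub_distrib, ← Finset.mul_sum, hs, Finset.sum_const,
        Finset.card_univ, ZMod.card, nsmul_eq_mul]
      field_simp
      ring
    simp_rw [e]
    rw [Finset.sum_sub_distrib, Finset.sum_const, Finset.card_univ, ZMod.card, nsmul_eq_mul]
    have : (p:ℝ) * ((L.card:ℝ) ^ 2 / p) = L.card * L.card := by field_simp
    rw [this]; linarith
  calc ∑ t : ZMod p, ((RR S L t : ℝ) - S.card * L.card / p) ^ 2
      = ∑ t : ZMod p, (∑ s ∈ S, (i s t - L.card / p)) ^ 2 := by simp_rw [hR]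
    _ ≤ ∑ t : ZMod p, (S.card:ℝ) * ∑ s ∈ S, (i s t - L.card / p) ^ 2 :=
        Finset.sum_le_sum fun t _ => sq_sum_le_card_mul_sum_sq
    _ = (S.card:ℝ) * ∑ s ∈ S, ∑ t : ZMod p, (i s t - L.card / p) ^ 2 := by
        rw [← Finset.mul_sum, Finset.sum_comm]
    _ ≤ (S.card:ℝ) * ∑ s : ZMod p, ∑ t : ZMod p, (i s t - L.card / p) ^ 2 := by
        gcongr
        exact Finset.subset_univ _
    _ ≤ (S.card:ℝ) * (L.card * p) := by gcongr
    _ = _ := by ring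

/-- Clean real form of `Q_bound`. -/
theorem Q_real (S : Finset (ZMod p)) (L : Finset (ZMod p × ZMod p)) (l : ℕ) (U : Finset (ZMod p))
    (hU : ∀ w ∈ L, w.1 ∈ U)
    (hn : 400 * (S.card * L.card) ≤ p ^ 2) (hl : S.card * L.card ≤ 2 ^ l) :
    (Qn S L : ℝ) ≤ 110000 * (l + 1) * (S.card * L.card) *
      (√(S.card * L.card : ℝ) + S.card + U.card) := by
  classical
  set n := S.card * L.card with hnn
  rcases Nat.eq_zero_or_pos n with h0 | h0
  · have : Qn S L = 0 := by
      unfold Qn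
      have : S ×ˢ L = ∅ := by rw [← Finset.card_eq_zero, Finset.card_product]; omega
      rw [this]; simp
    rw [this]; push_cast; positivity
  set k := Nat.sqrt n with hk
  have k1 : 1 ≤ k := Nat.le_sqrt.2 (by omega)
  have k2 : k * k ≤ n := Nat.sqrt_le n
  have hn6 : 6 * (k + 1) < p := by
    by_contra hcon
    push Not at hcon
    have : p ≤ 12 * k := by omega
    nlinarith
  have hQ := Q_bound S L l hn6 hl
  have him : (L.image Prod.fst).card ≤ U.card := by
    refine Finset.card_le_card ?_
    intro u hu
    obtain ⟨w, hw, rfl⟩ := Finset.mem_image.1 hu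
    exact hU w hw
  have hr : (k:ℝ) ≤ √(n:ℝ) := by
    apply Real.le_sqrt_of_sq_le
    have : ((k * k : ℕ):ℝ) ≤ n := by exact_mod_cast k2
    push_cast at this; nlinarith
  have hQ' : (Qn S L : ℝ) ≤ n * (l + 1) * (1728 * (30 * (k + 1) + (S.card + U.card)) + 12 * (k + 1)) := by
    have : Qn S L ≤ n * (l + 1) * (1728 * (30 * (k + 1) + (S.card + U.card)) + 12 * (k + 1)) := by
      refine hQ.trans ?_
      gcongr
    exact_mod_cast this
  have k1' : (1:ℝ) ≤ k := by exact_mod_cast k1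
  have e : ((S.card:ℝ) * L.card) = (n:ℝ) := by rw [hnn]; push_cast; ring
  rw [e]
  refine hQ'.trans ?_
  have : (1728 * (30 * ((k:ℝ) + 1) + (S.card + U.card)) + 12 * (k + 1)) ≤
    110000 * (√(n:ℝ) + S.card + U.card) := by
    have : (0:ℝ) ≤ S.card := by positivity
    have : (0:ℝ) ≤ U.card := by positivity
    linarith
  calc _ ≤ (n:ℝ) * (l + 1) * (110000 * (√(n:ℝ) + S.card + U.card)) := by gcongr
    _ = _ := by ring

/-- representation count of differences -/
def rp (X Y : Finset (ZMod p)) (t : ZMod p) : ℕ := ((X ×ˢ Y).filter fun w => w.1 - w.2 = t).card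

/-- additive energy -/
def En (X Y : Finset (ZMod p)) : ℕ := ∑ t, rp X Y t ^ 2

theorem rp_sum (X Y : Finset (ZMod p)) : ∑ t, rp X Y t = X.card * Y.card := by
  unfold rp
  have := Finset.card_eq_sum_card_fiberwise (s := X ×ˢ Y) (f := fun w => w.1 - w.2)
      (t := Finset.univ) (fun _ _ => Finset.mem_coe.2 (Finset.mem_univ _))
  rw [← this, Finset.card_product]

theorem rp_le_left (X Y : Finset (ZMod p)) (t : ZMod p) : rp X Y t ≤ X.card := by
  unfold rp
  refine Finset.card_le_card_of_injOn (fun w => w.1) ?_ ?_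
  · intro w hw; simp at hw; exact hw.1.1
  · intro w hw w' hw' h
    simp at hw hw' h
    refine Prod.ext h ?_
    have := hw.2.trans hw'.2.symm
    rw [h] at this
    exact sub_right_inj.1 this

theorem rp_le_right (X Y : Finset (ZMod p)) (t : ZMod p) : rp X Y t ≤ Y.card := by
  unfold rp
  refine Finset.card_le_card_of_injOn (fun w => w.2) ?_ ?_
  · intro w hw; simp at hw; exact hw.1.2
  · intro w hw w' hw' h
    simp at hw hw' h
    refine Prod.ext ?_ h
    have := hw.2.trans hw'.2.symm
    rw [h] at this
    exact sub_left_inj.1 this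

end
end TF


namespace TF

section
variable {p : ℕ} [Fact p.Prime]

theorem rp_RR (A B X S : Finset (ZMod p)) (g h : ZMod p → ZMod p) (hg : ∀ a ∈ A, g a ≠ 0)
    (hinj : Set.InjOn g A) (hS : ∀ a ∈ A, ∀ b ∈ B, g a * (h a + b) ∈ S) (t : ZMod p)
    (L : Finset (ZMod p × ZMod p)) (hL : ∀ a ∈ A, ∀ x ∈ X, ((g a)⁻¹, - h a - x) ∈ L) :
    A.card * rp B X t ≤ RR S L t := by
  unfold rp RR
  rw [← Finset.card_product]
  refine Finset.card_le_card_of_injOn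
    (fun z => (g z.1 * (h z.1 + z.2.1), ((g z.1)⁻¹, - h z.1 - z.2.2))) ?_ ?_
  · rintro ⟨a, b, x⟩ hz
    simp only [Finset.coe_product, Set.mem_prod, Finset.mem_coe, Finset.mem_filter,
      Finset.mem_product] at hz
    obtain ⟨ha, ⟨hb, hx⟩, ht⟩ := hz
    simp only [Finset.coe_filter, Set.mem_ofPred_eq, Finset.mem_product]
    refine ⟨⟨hS a ha b hb, hL a ha x hx⟩, ?_⟩
    have := hg a ha
    field_simp
    rw [← ht]; ring
  · rintro ⟨a, b, x⟩ hz ⟨a', b', x'⟩ hz' he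
    simp only [Finset.coe_product, Set.mem_prod, Finset.mem_coe, Finset.mem_filter,
      Finset.mem_product] at hz hz'
    simp only [Prod.mk.injEq] at he
    have e1 : a = a' := hinj hz.1 hz'.1 (inv_injective he.2.1)
    subst e1
    have e2 : x = x' := sub_right_inj.1 he.2.2
    have e3 : b = b' := by
      have := mul_left_cancel₀ (hg a hz.1) he.1
      exact add_left_cancel this
    subst e2; subst e3; rfl

/-- the constant kappa -/
noncomputable def kap (M A B p : ℝ) : ℝ := √M ^ 3 / √A + √B ^ 3 * √M / √p

theorem sqs (n : ℕ) : (√(n:ℝ)) ^ 2 = n := Real.sq_sqrt (Nat.cast_nonneg n)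

set_option maxHeartbeats 1600000 in
theorem lemE (A B X S : Finset (ZMod p)) (g h : ZMod p → ZMod p) (hg : ∀ a ∈ A, g a ≠ 0)
    (hinj : Set.InjOn g A) (hS : ∀ a ∈ A, ∀ b ∈ B, g a * (h a + b) ∈ S)
    (hA0 : A.Nonempty) (hAB : A.card ≤ B.card) (hBS : B.card ≤ S.card) (l : ℕ)
    (hSl : S.card ≤ 2 ^ l) (hXl : X.card ≤ 2 ^ (2 * l)) :
    (En B X : ℝ) ≤ 330000 * (4 * l + 1) * kap S.card A.card B.card p * √(X.card : ℝ) ^ 3 := by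
  classical
  have hp : 0 < p := (Fact.out : p.Prime).pos
  have hA1 : 0 < A.card := hA0.card_pos
  rcases Finset.eq_empty_or_nonempty X with hX | hX
  · subst hX
    have : En B (∅ : Finset (ZMod p)) = 0 := by
      unfold En rp; simp
    rw [this]; simp
  have hX1 : 0 < X.card := hX.card_pos
  set L : Finset (ZMod p × ZMod p) := (A ×ˢ X).image (fun z => ((g z.1)⁻¹, - h z.1 - z.2)) with hLd
  have hL : ∀ a ∈ A, ∀ x ∈ X, ((g a)⁻¹, - h a - x) ∈ L := by
    intro a ha x hx
    exact Finset.mem_image.2 ⟨(a, x), Finset.mem_product.2 ⟨ha, hx⟩, rfl⟩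
  have hLc : L.card ≤ A.card * X.card := by
    refine Finset.card_image_le.trans ?_
    rw [Finset.card_product]
  have hR := fun t => rp_RR A B X S g h hg hinj hS t L hL
  have hrl := fun t => rp_le_left B X t
  have hrr := fun t => rp_le_right B X t
  have hrs := rp_sum B X
  set a := √(A.card:ℝ) with ha
  set b := √(B.card:ℝ) with hb
  set s := √(S.card:ℝ) with hs
  set x := √(X.card:ℝ) with hx
  set q := √(p:ℝ) with hq
  have ha2 : a ^ 2 = A.card := sqs _
  have hb2 : b ^ 2 = B.card := sqs _
  have hs2 : s ^ 2 = S.card := sqs _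
  have hx2 : x ^ 2 = X.card := sqs _
  have hq2 : q ^ 2 = p := sqs _
  have ha0 : 0 < a := Real.sqrt_pos.2 (by exact_mod_cast hA1)
  have hb0 : 0 < b := Real.sqrt_pos.2 (by exact_mod_cast hA1.trans_le hAB)
  have hs0 : 0 < s := Real.sqrt_pos.2 (by exact_mod_cast (hA1.trans_le hAB).trans_le hBS)
  have hx0 : 0 < x := Real.sqrt_pos.2 (by exact_mod_cast hX1)
  have hq0 : 0 < q := Real.sqrt_pos.2 (by exact_mod_cast hp)
  have hab : a ≤ b := Real.sqrt_le_sqrt (by exact_mod_cast hAB)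
  have hbs : b ≤ s := Real.sqrt_le_sqrt (by exact_mod_cast hBS)
  have hx1 : 1 ≤ x := by rw [hx]; exact Real.one_le_sqrt.2 (by exact_mod_cast hX1)
  have hkap : kap S.card A.card B.card p = s ^ 3 / a + b ^ 3 * s / q := rfl
  rw [hkap]
  have hl0 : (1:ℝ) ≤ 4 * l + 1 := by have : (0:ℝ) ≤ l := Nat.cast_nonneg l
                                     linarith
  have p1 : 0 ≤ s ^ 3 / a := by positivity
  have p2 : 0 ≤ b ^ 3 * s / q := by positivity
  have hEn : (En B X : ℝ) = ∑ t, (rp B X t : ℝ) ^ 2 := by unfold En; push_cast; rfl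
  have hrs' : ∑ t, (rp B X t : ℝ) = b ^ 2 * x ^ 2 := by rw [hb2, hx2]; exact_mod_cast hrs
  -- reduce to a bound by one of the terms
  by_cases c1 : 400 * (S.card * (A.card * X.card)) ≤ p ^ 2
  · by_cases c2 : S.card ≤ A.card * X.card
    · have hQ := Q_real S L (4 * l) (A.image fun a => (g a)⁻¹) (by
        intro w hw
        obtain ⟨z, hz, rfl⟩ := Finset.mem_image.1 hw
        exact Finset.mem_image_of_mem _ (Finset.mem_product.1 hz).1)
        (le_trans (by gcongr) c1) (by
          calc S.card * L.card ≤ S.card * (A.card * X.card) := by gcongr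
            _ ≤ 2 ^ l * (2 ^ l * 2 ^ (2 * l)) := by
              gcongr
              exact (hAB.trans hBS).trans hSl
            _ = 2 ^ (4 * l) := by ring)
      have hU : ((A.image fun a => (g a)⁻¹).card : ℝ) ≤ a ^ 2 := by
        rw [ha2]; exact_mod_cast Finset.card_image_le
      have hLc' : (L.card:ℝ) ≤ a ^ 2 * x ^ 2 := by rw [ha2, hx2]; exact_mod_cast hLc
      have hQE : (a ^ 2) ^ 2 * (En B X : ℝ) ≤ Qn S L := by
        rw [hEn, Qn_eq, Finset.mul_sum]
        push_cast
        refine Finset.sum_le_sum fun t _ => ?_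
        rw [← mul_pow, ha2]
        have := hR t
        gcongr
        exact_mod_cast this
      have c2' : s ^ 2 ≤ a ^ 2 * x ^ 2 := by rw [hs2, ha2, hx2]; exact_mod_cast c2
      have c2'' : s ≤ a * x := by
        rw [← mul_pow] at c2'
        exact le_of_sq_le_sq c2' (by positivity)
      have hsq : √((S.card:ℝ) * L.card) ≤ s * (a * x) := by
        rw [← hs2]
        refine (Real.sqrt_le_sqrt (y := (s * (a * x)) ^ 2) ?_).trans ?_
        · rw [mul_pow, mul_pow]; gcongr
        · rw [Real.sqrt_sq (by positivity)]
      have hS' : (S.card:ℝ) ≤ s * (a * x) := by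
        rw [← hs2, sq]; gcongr
      have hU' : a ^ 2 ≤ s * (a * x) := by
        have : a * 1 ≤ s * x := by gcongr; exact hab.trans hbs
        calc a ^ 2 = a * (a * 1) := by ring
          _ ≤ a * (s * x) := by gcongr
          _ = _ := by ring
      have f : (a ^ 2) ^ 2 * (En B X : ℝ) ≤ 110000 * (4 * l + 1) * (s ^ 2 * (a ^ 2 * x ^ 2)) *
          (s * (a * x) + s * (a * x) + s * (a * x)) := by
        refine (hQE.trans hQ).trans ?_
        push_cast
        rw [← hs2] at hS' hsq ⊢
        gcongr
        exact hU.trans hU'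
      have f2 : (En B X : ℝ) ≤ 330000 * (4 * l + 1) * (s ^ 3 / a) * x ^ 3 := by
        have : (a ^ 2) ^ 2 * (En B X : ℝ) ≤ (a ^ 2) ^ 2 * (330000 * (4 * l + 1) * (s ^ 3 / a) * x ^ 3) := by
          refine f.trans (le_of_eq ?_)
          field_simp
          ring
        exact le_of_mul_le_mul_left this (by positivity)
      refine f2.trans ?_
      gcongr
      linarith
    · push Not at c2
      have c2' : a ^ 2 * x ^ 2 ≤ s ^ 2 := by rw [hs2, ha2, hx2]; exact_mod_cast c2.le
      have c2'' : a * x ≤ s := by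
        rw [← mul_pow] at c2'
        exact le_of_sq_le_sq c2' (by positivity)
      have f : (En B X : ℝ) ≤ x ^ 2 * (b ^ 2 * x ^ 2) := by
        rw [hEn, ← hrs', Finset.mul_sum]
        refine Finset.sum_le_sum fun t _ => ?_
        rw [sq, hx2]
        have := hrr t
        gcongr
      have f2 : x ^ 2 * (b ^ 2 * x ^ 2) ≤ (s ^ 3 / a) * x ^ 3 := by
        rw [div_mul_eq_mul_div, le_div_iff₀ ha0]
        calc x ^ 2 * (b ^ 2 * x ^ 2) * a = (a * x) * b ^ 2 * x ^ 3 := by ring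
          _ ≤ s * s ^ 2 * x ^ 3 := by gcongr
          _ = _ := by ring
      refine (f.trans f2).trans ?_
      have f4 : s ^ 3 / a ≤ 330000 * (4 * l + 1) * (s ^ 3 / a + b ^ 3 * s / q) := by
        calc s ^ 3 / a = 1 * 1 * (s ^ 3 / a) := by ring
          _ ≤ 330000 * (4 * l + 1) * (s ^ 3 / a + b ^ 3 * s / q) := by
            refine mul_le_mul (mul_le_mul (by norm_num) hl0 (by norm_num) (by norm_num)) ?_ p1
              (by positivity)
            linarith
      exact mul_le_mul_of_nonneg_right f4 (by positivity)
  · push Not at c1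
    have c1' : q ^ 2 ≤ 20 * (s * a * x) := by
      have : (q ^ 2) ^ 2 ≤ (20 * (s * a * x)) ^ 2 := by
        have e : (20 * (s * a * x)) ^ 2 = 400 * (s ^ 2 * (a ^ 2 * x ^ 2)) := by ring
        rw [e, hq2, hs2, ha2, hx2]
        exact_mod_cast c1.le
      exact le_of_sq_le_sq this (by positivity)
    have hV := vinh S L
    have hpw : ∀ t, (rp B X t : ℝ) ^ 2 ≤ 4 / (a ^ 2) ^ 2 * ((RR S L t : ℝ) - S.card * L.card / p) ^ 2
        + 2 * b * s * x / q * rp B X t := by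
      intro t
      have r0 : (0:ℝ) ≤ rp B X t := Nat.cast_nonneg _
      have hRt : a ^ 2 * (rp B X t : ℝ) ≤ RR S L t := by rw [ha2]; exact_mod_cast hR t
      have hmean : (S.card:ℝ) * L.card / p ≤ s ^ 2 * (a ^ 2 * x ^ 2) / q ^ 2 := by
        rw [hq2, hs2, ha2, hx2]
        gcongr
        exact_mod_cast hLc
      by_cases hc : 2 * (s ^ 2 * x ^ 2 / q ^ 2) ≤ rp B X t
      · have h1 : a ^ 2 * (rp B X t : ℝ) / 2 ≤ (RR S L t : ℝ) - S.card * L.card / p := by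
          have : a ^ 2 * (2 * (s ^ 2 * x ^ 2 / q ^ 2)) ≤ a ^ 2 * (rp B X t : ℝ) := by gcongr
          have e : a ^ 2 * (2 * (s ^ 2 * x ^ 2 / q ^ 2)) = 2 * (s ^ 2 * (a ^ 2 * x ^ 2) / q ^ 2) := by ring
          linarith
        have h2 : (rp B X t : ℝ) ^ 2 = 4 / (a ^ 2) ^ 2 * (a ^ 2 * (rp B X t : ℝ) / 2) ^ 2 := by
          field_simp; ring
        have h3 : 0 ≤ 2 * b * s * x / q * rp B X t := by positivity
        have h4 : 4 / (a ^ 2) ^ 2 * (a ^ 2 * (rp B X t : ℝ) / 2) ^ 2 ≤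
          4 / (a ^ 2) ^ 2 * ((RR S L t : ℝ) - S.card * L.card / p) ^ 2 := by gcongr
        linarith
      · push Not at hc
        have h1 : (rp B X t : ℝ) ≤ 2 * b * s * x / q := by
          have : (rp B X t : ℝ) ^ 2 ≤ (2 * b * s * x / q) ^ 2 := by
            calc (rp B X t : ℝ) ^ 2 = rp B X t * rp B X t := sq _
              _ ≤ b ^ 2 * (2 * (s ^ 2 * x ^ 2 / q ^ 2)) := by
                gcongr
                rw [hb2]; exact_mod_cast hrl t
              _ ≤ b ^ 2 * (4 * (s ^ 2 * x ^ 2 / q ^ 2)) := by gcongr; norm_num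
              _ = _ := by ring
          exact le_of_sq_le_sq this (by positivity)
        have h2 : 0 ≤ 4 / (a ^ 2) ^ 2 * ((RR S L t : ℝ) - S.card * L.card / p) ^ 2 := by positivity
        have h3 : (rp B X t : ℝ) ^ 2 ≤ 2 * b * s * x / q * rp B X t := by
          rw [sq]; gcongr
        linarith
    have f : (En B X : ℝ) ≤ 4 / (a ^ 2) ^ 2 * (s ^ 2 * q ^ 2 * (a ^ 2 * x ^ 2)) +
        2 * b * s * x / q * (b ^ 2 * x ^ 2) := by
      rw [hEn]
      refine (Finset.sum_le_sum fun t _ => hpw t).trans ?_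
      rw [Finset.sum_add_distrib, ← Finset.mul_sum, ← Finset.mul_sum, hrs']
      gcongr
      refine hV.trans ?_
      rw [hs2, hq2, ha2, hx2]
      gcongr
      exact_mod_cast hLc
    have f2 : 4 / (a ^ 2) ^ 2 * (s ^ 2 * q ^ 2 * (a ^ 2 * x ^ 2)) ≤ 80 * (s ^ 3 / a) * x ^ 3 := by
      calc 4 / (a ^ 2) ^ 2 * (s ^ 2 * q ^ 2 * (a ^ 2 * x ^ 2))
          ≤ 4 / (a ^ 2) ^ 2 * (s ^ 2 * (20 * (s * a * x)) * (a ^ 2 * x ^ 2)) := by gcongr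
        _ = _ := by field_simp; ring
    have f3 : 2 * b * s * x / q * (b ^ 2 * x ^ 2) = 2 * (b ^ 3 * s / q) * x ^ 3 := by ring
    calc (En B X : ℝ) ≤ 80 * (s ^ 3 / a) * x ^ 3 + 2 * (b ^ 3 * s / q) * x ^ 3 := by linarith
      _ ≤ 80 * (s ^ 3 / a) * x ^ 3 + 80 * (b ^ 3 * s / q) * x ^ 3 := by gcongr; norm_num
      _ = 80 * (s ^ 3 / a + b ^ 3 * s / q) * x ^ 3 := by ring
      _ ≤ _ := by gcongr; linarith

end
end TF


namespace TF

section
variable {p : ℕ} [Fact p.Prime]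

theorem weak_aux (A B S T : Finset (ZMod p)) (g h : ZMod p → ZMod p) (hg : ∀ a ∈ A, g a ≠ 0)
    (hinj : Set.InjOn g A) (hS : ∀ a ∈ A, ∀ b ∈ B, g a * (h a + b) ∈ S) (τ : ℕ)
    (hT : ∀ t ∈ T, τ ≤ rp B B t)
    (L : Finset (ZMod p × ZMod p)) (hL : ∀ a ∈ A, ∀ b ∈ B, (g a, g a * (h a + b)) ∈ L) :
    (A.card * τ * T.card) ^ 2 ≤ S.card * Qn T L := by
  classical
  have h1 : ∀ t ∈ T, A.card * τ ≤ (L.filter fun w => w.1 * t + w.2 ∈ S).card := by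
    intro t ht
    refine (Nat.mul_le_mul_left _ (hT t ht)).trans ?_
    unfold rp
    rw [← Finset.card_product]
    refine Finset.card_le_card_of_injOn
      (fun z => (g z.1, g z.1 * (h z.1 + z.2.2))) ?_ ?_
    · rintro ⟨a, b, b'⟩ hz
      simp only [Finset.coe_product, Set.mem_prod, Finset.mem_coe, Finset.mem_filter,
        Finset.mem_product] at hz
      obtain ⟨ha, ⟨hb, hb'⟩, ht⟩ := hz
      simp only [Finset.coe_filter, Set.mem_ofPred_eq]
      refine ⟨hL a ha b' hb', ?_⟩
      have e : g a * t + g a * (h a + b') = g a * (h a + b) := by rw [← ht]; ring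
      rw [e]; exact hS a ha b hb
    · rintro ⟨a, b, b'⟩ hz ⟨a', c, c'⟩ hz' he
      simp only [Finset.coe_product, Set.mem_prod, Finset.mem_coe, Finset.mem_filter,
        Finset.mem_product] at hz hz'
      simp only [Prod.mk.injEq] at he
      have e1 : a = a' := hinj hz.1 hz'.1 he.1
      subst e1
      have e2 : b' = c' := add_left_cancel (mul_left_cancel₀ (hg a hz.1) he.2)
      subst e2
      have e3 : b = c := sub_left_inj.1 (hz.2.2.trans hz'.2.2.symm)
      subst e3; rfl
  have h2 : A.card * τ * T.card ≤ ∑ s ∈ S, RR T L s := by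
    simp_rw [RR_eq]
    rw [Finset.sum_comm]
    have : ∀ t ∈ T, A.card * τ ≤ ∑ s ∈ S, (L.filter fun w => w.1 * t + w.2 = s).card := by
      intro t ht
      refine (h1 t ht).trans (le_of_eq ?_)
      rw [Finset.card_eq_sum_card_fiberwise (s := L.filter fun w => w.1 * t + w.2 ∈ S)
        (f := fun w : ZMod p × ZMod p => w.1 * t + w.2) (t := S)
        (fun w hw => (Finset.mem_filter.1 hw).2)]
      refine Finset.sum_congr rfl fun s hs => ?_
      congr 1
      ext w
      simp only [Finset.mem_filter]
      constructor
      · rintro ⟨⟨a, _⟩, b⟩; exact ⟨a, b⟩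
      · rintro ⟨a, b⟩; exact ⟨⟨a, b ▸ hs⟩, b⟩
    have := Finset.card_nsmul_le_sum T _ _ this
    rw [smul_eq_mul, mul_comm] at this
    exact this
  calc (A.card * τ * T.card) ^ 2 ≤ (∑ s ∈ S, RR T L s) ^ 2 := by gcongr
    _ ≤ S.card * ∑ s ∈ S, RR T L s ^ 2 := sq_sum_le_card_mul_sum_sq
    _ ≤ S.card * ∑ s, RR T L s ^ 2 := by
      gcongr
      exact Finset.subset_univ _
    _ = _ := by rw [Qn_eq]

set_option maxHeartbeats 1600000 in
theorem weak_core (A B S T : Finset (ZMod p)) (g h : ZMod p → ZMod p) (hg : ∀ a ∈ A, g a ≠ 0)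
    (hinj : Set.InjOn g A) (hS : ∀ a ∈ A, ∀ b ∈ B, g a * (h a + b) ∈ S)
    (hA0 : A.Nonempty) (hAB : A.card ≤ B.card) (l : ℕ)
    (hBl : B.card ≤ 2 ^ l) (hTl : T.card ≤ 2 ^ (2 * l)) (τ : ℕ)
    (hT : ∀ t ∈ T, τ ≤ rp B B t) (hT0 : T.Nonempty)
    (hn : 400 * (T.card * (A.card * B.card)) ≤ p ^ 2)
    (hτ : 440000 * (4 * l + 1) * (S.card * B.card) ≤ (τ:ℝ) ^ 2 * A.card) :
    √(A.card:ℝ) * τ ^ 2 * √(T.card:ℝ) ≤ 440000 * (4 * l + 1) * S.card * √(B.card:ℝ) ^ 3 := by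
  classical
  have hA1 : 0 < A.card := hA0.card_pos
  have hT1 : 0 < T.card := hT0.card_pos
  set L : Finset (ZMod p × ZMod p) := (A ×ˢ B).image (fun z => (g z.1, g z.1 * (h z.1 + z.2))) with hLd
  have hL : ∀ a ∈ A, ∀ b ∈ B, (g a, g a * (h a + b)) ∈ L := by
    intro a ha x hx
    exact Finset.mem_image.2 ⟨(a, x), Finset.mem_product.2 ⟨ha, hx⟩, rfl⟩
  have hLc : L.card ≤ A.card * B.card := by
    refine Finset.card_image_le.trans ?_
    rw [Finset.card_product]
  have hW := weak_aux A B S T g h hg hinj hS τ hT L hL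
  have hQ := Q_real T L (4 * l) (A.image g) (by
        intro w hw
        obtain ⟨z, hz, rfl⟩ := Finset.mem_image.1 hw
        exact Finset.mem_image_of_mem _ (Finset.mem_product.1 hz).1)
        (le_trans (by gcongr) hn) (by
          calc T.card * L.card ≤ T.card * (A.card * B.card) := by gcongr
            _ ≤ 2 ^ (2 * l) * (2 ^ l * 2 ^ l) := by
              gcongr
              exact hAB.trans hBl
            _ = 2 ^ (4 * l) := by ring)
  set a := √(A.card:ℝ) with ha
  set b := √(B.card:ℝ) with hb
  set x := √(T.card:ℝ) with hx
  have ha2 : a ^ 2 = A.card := sqs _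
  have hb2 : b ^ 2 = B.card := sqs _
  have hx2 : x ^ 2 = T.card := sqs _
  have ha0 : 0 < a := Real.sqrt_pos.2 (by exact_mod_cast hA1)
  have hb0 : 0 < b := Real.sqrt_pos.2 (by exact_mod_cast hA1.trans_le hAB)
  have hx0 : 0 < x := Real.sqrt_pos.2 (by exact_mod_cast hT1)
  have hab : a ≤ b := Real.sqrt_le_sqrt (by exact_mod_cast hAB)
  have hx1 : 1 ≤ x := by rw [hx]; exact Real.one_le_sqrt.2 (by exact_mod_cast hT1)
  have hU : ((A.image g).card : ℝ) ≤ a ^ 2 := by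
    rw [ha2]; exact_mod_cast Finset.card_image_le
  have hLc' : (L.card:ℝ) ≤ a ^ 2 * b ^ 2 := by rw [ha2, hb2]; exact_mod_cast hLc
  have hsq : √((T.card:ℝ) * L.card) ≤ x * (a * b) := by
    rw [← hx2]
    refine (Real.sqrt_le_sqrt (y := (x * (a * b)) ^ 2) ?_).trans ?_
    · rw [mul_pow, mul_pow]; gcongr
    · rw [Real.sqrt_sq (by positivity)]
  have hU' : a ^ 2 ≤ x * (a * b) := by
    have : 1 * a ≤ x * b := by gcongr
    calc a ^ 2 = a * (1 * a) := by ring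
      _ ≤ a * (x * b) := by gcongr
      _ = _ := by ring
  have hl0 : (1:ℝ) ≤ 4 * l + 1 := by have : (0:ℝ) ≤ l := Nat.cast_nonneg l
                                     linarith
  set Λ : ℝ := 4 * l + 1 with hΛ
  set s : ℝ := (S.card : ℝ) with hs
  have hs0 : 0 ≤ s := Nat.cast_nonneg _
  have f : (a ^ 2 * τ * x ^ 2) ^ 2 ≤ s * (110000 * Λ * (x ^ 2 * (a ^ 2 * b ^ 2)) *
      (x * (a * b) + x ^ 2 + x * (a * b))) := by
    have h1 : (a ^ 2 * τ * x ^ 2) ^ 2 ≤ s * Qn T L := by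
      rw [ha2, hx2, hs]; exact_mod_cast hW
    refine h1.trans ?_
    gcongr
    refine hQ.trans ?_
    push_cast
    rw [← hx2] at hsq ⊢
    rw [← hΛ]
    gcongr
    exact hU.trans hU'
  have f2 : a ^ 2 * τ ^ 2 * x ≤ 110000 * Λ * s * b ^ 2 * (2 * (a * b) + x) := by
    have : (a ^ 2 * x ^ 3) * (a ^ 2 * τ ^ 2 * x) ≤
        (a ^ 2 * x ^ 3) * (110000 * Λ * s * b ^ 2 * (2 * (a * b) + x)) := by
      refine le_trans (le_of_eq ?_) (f.trans (le_of_eq ?_)) <;> ring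
    exact le_of_mul_le_mul_left this (by positivity)
  have f3 : 110000 * Λ * s * b ^ 2 * x ≤ a ^ 2 * τ ^ 2 * x / 2 := by
    have : (440000 * Λ * (s * b ^ 2)) * x ≤ ((τ:ℝ) ^ 2 * a ^ 2) * x := by
      rw [hb2, ha2]; gcongr
    have h0 : 0 ≤ Λ * s * b ^ 2 * x := by positivity
    linarith
  have f4 : a * (a * τ ^ 2 * x) ≤ a * (440000 * Λ * s * b ^ 3) := by
    have : a ^ 2 * τ ^ 2 * x = a * (a * τ ^ 2 * x) := by ring
    have e2 : 110000 * Λ * s * b ^ 2 * (2 * (a * b) + x) = a * (220000 * Λ * s * b ^ 3) +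
      110000 * Λ * s * b ^ 2 * x := by ring
    linarith
  exact le_of_mul_le_mul_left f4 ha0

set_option maxHeartbeats 1600000 in
theorem weak_type (A B S : Finset (ZMod p)) (g h : ZMod p → ZMod p) (hg : ∀ a ∈ A, g a ≠ 0)
    (hinj : Set.InjOn g A) (hS : ∀ a ∈ A, ∀ b ∈ B, g a * (h a + b) ∈ S)
    (hA0 : A.Nonempty) (hAB : A.card ≤ B.card) (hBS : B.card ≤ S.card) (hp5 : B.card ^ 5 ≤ p ^ 3)
    (l : ℕ) (hBl : B.card ≤ 2 ^ l) (τ : ℕ) (hτ1 : 1 ≤ τ) :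
    (A.card:ℝ) * (τ ^ 4 * (Finset.univ.filter fun t => τ ≤ rp B B t).card) ≤
      200000000000 * (4 * l + 1) ^ 2 * S.card ^ 2 * B.card ^ 3 := by
  classical
  have hp : 0 < p := (Fact.out : p.Prime).pos
  have hA1 : 0 < A.card := hA0.card_pos
  have hB1 : 0 < B.card := by omega
  have hl0 : (1:ℝ) ≤ 4 * l + 1 := by have : (0:ℝ) ≤ l := Nat.cast_nonneg l
                                     linarith
  set Λ : ℝ := 4 * l + 1 with hΛ
  set T := Finset.univ.filter fun t => τ ≤ rp B B t with hT
  have hTm : ∀ t ∈ T, τ ≤ rp B B t := fun t ht => (Finset.mem_filter.1 ht).2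
  rcases Finset.eq_empty_or_nonempty T with hTe | hTe
  · rw [hTe]; simp; positivity
  have hmark : τ * T.card ≤ B.card ^ 2 := by
    have := Finset.card_nsmul_le_sum T _ _ hTm
    rw [smul_eq_mul, mul_comm] at this
    refine this.trans ?_
    rw [sq, ← rp_sum]
    exact Finset.sum_le_sum_of_subset (Finset.subset_univ _)
  have hTc : T.card ≤ 2 ^ (2 * l) := by
    calc T.card ≤ τ * T.card := Nat.le_mul_of_pos_left _ hτ1
      _ ≤ B.card ^ 2 := hmark
      _ ≤ (2 ^ l) ^ 2 := by gcongr
      _ = _ := by ring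
  have hτB : τ ≤ B.card := by
    obtain ⟨t, ht⟩ := hTe
    exact (hTm t ht).trans (rp_le_left B B t)
  set a := √(A.card:ℝ) with ha
  set b := √(B.card:ℝ) with hb
  set s : ℝ := (S.card : ℝ) with hs
  set q := √(p:ℝ) with hq
  have ha2 : a ^ 2 = A.card := sqs _
  have hb2 : b ^ 2 = B.card := sqs _
  have hq2 : q ^ 2 = p := sqs _
  have ha0 : 0 < a := Real.sqrt_pos.2 (by exact_mod_cast hA1)
  have hb0 : 0 < b := Real.sqrt_pos.2 (by exact_mod_cast hB1)
  have hq0 : 0 < q := Real.sqrt_pos.2 (by exact_mod_cast hp)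
  have hab : a ≤ b := Real.sqrt_le_sqrt (by exact_mod_cast hAB)
  have hbs : b ^ 2 ≤ s := by rw [hb2, hs]; exact_mod_cast hBS
  have hs0 : 0 < s := lt_of_lt_of_le (by positivity) hbs
  have hτb : (τ:ℝ) ≤ b ^ 2 := by rw [hb2]; exact_mod_cast hτB
  have hm' : (τ:ℝ) * T.card ≤ b ^ 4 := by
    have : ((τ * T.card : ℕ):ℝ) ≤ (B.card ^ 2 : ℕ) := by exact_mod_cast hmark
    push_cast at this
    rw [← hb2] at this
    calc _ ≤ _ := this
      _ = _ := by ring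
  have h5 : b ^ 10 ≤ q ^ 6 := by
    have : ((B.card ^ 5 : ℕ):ℝ) ≤ (p ^ 3 : ℕ) := by exact_mod_cast hp5
    push_cast at this
    rw [← hb2, ← hq2] at this
    calc b ^ 10 = (b ^ 2) ^ 5 := by ring
      _ ≤ _ := this
      _ = _ := by ring
  -- Markov form
  have mark : ∀ Y : ℝ, a ^ 2 * τ ^ 3 ≤ Y * s ^ 2 * b ^ 2 → Y ≤ 200000000000 * Λ ^ 2 →
      (A.card:ℝ) * (τ ^ 4 * T.card) ≤ 200000000000 * Λ ^ 2 * s ^ 2 * B.card ^ 3 := by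
    intro Y h1 h2
    rw [← ha2, ← hb2]
    calc a ^ 2 * (τ ^ 4 * T.card) = a ^ 2 * τ ^ 3 * (τ * T.card) := by ring
      _ ≤ (Y * s ^ 2 * b ^ 2) * b ^ 4 := by
        refine mul_le_mul h1 hm' (by positivity) ?_
        exact le_trans (by positivity) h1
      _ = Y * (s ^ 2 * b ^ 6) := by ring
      _ ≤ (200000000000 * Λ ^ 2) * (s ^ 2 * b ^ 6) := by gcongr
      _ = _ := by ring
  have hΛ2 : Λ ≤ Λ ^ 2 := by nlinarith
  by_cases c0 : (τ:ℝ) ^ 2 * A.card < 440000 * Λ * (s * B.card)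
  · apply mark (440000 * Λ) _ (by linarith)
    rw [← ha2, ← hb2] at c0
    calc a ^ 2 * (τ:ℝ) ^ 3 = (τ ^ 2 * a ^ 2) * τ := by ring
      _ ≤ (440000 * Λ * (s * b ^ 2)) * s := by
        gcongr
        exact hτb.trans hbs
      _ = _ := by ring
  push Not at c0
  by_cases c1 : p ^ 2 < 400 * (A.card * B.card)
  · apply mark (100) _ (by nlinarith)
    have c1' : q ^ 2 ≤ 20 * b ^ 2 := by
      have : (q ^ 2) ^ 2 ≤ (20 * b ^ 2) ^ 2 := by
        have : ((p ^ 2 : ℕ):ℝ) ≤ (400 * (A.card * B.card) : ℕ) := by exact_mod_cast c1.le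
        push_cast at this
        rw [← ha2, ← hb2, ← hq2] at this
        calc _ ≤ _ := this
          _ ≤ 400 * (b ^ 2 * b ^ 2) := by gcongr
          _ = _ := by ring
      exact le_of_sq_le_sq this (by positivity)
    have hb4 : b ^ 4 ≤ 8000 := by
      have : b ^ 6 * b ^ 4 ≤ b ^ 6 * 8000 := by
        calc b ^ 6 * b ^ 4 = b ^ 10 := by ring
          _ ≤ q ^ 6 := h5
          _ = (q ^ 2) ^ 3 := by ring
          _ ≤ (20 * b ^ 2) ^ 3 := by gcongr
          _ = _ := by ring
      exact le_of_mul_le_mul_left this (by positivity)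
    have hb2' : b ^ 2 ≤ 100 := by nlinarith [sq_nonneg b]
    calc a ^ 2 * (τ:ℝ) ^ 3 ≤ b ^ 2 * (b ^ 2) ^ 3 := by gcongr
      _ = b ^ 2 * (b ^ 2) ^ 2 * b ^ 2 := by ring
      _ ≤ 100 * s ^ 2 * b ^ 2 := by gcongr
  push Not at c1
  by_cases c2 : 400 * (T.card * (A.card * B.card)) ≤ p ^ 2
  · have := weak_core A B S T g h hg hinj hS hA0 hAB l hBl hTc τ hTm hTe c2 c0
    set x := √(T.card:ℝ) with hx
    have hx2 : x ^ 2 = T.card := sqs _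
    have h2 : (a * τ ^ 2 * x) ^ 2 ≤ (440000 * Λ * s * b ^ 3) ^ 2 := by
      gcongr
    rw [← ha2, ← hb2, ← hx2]
    have h0 : 0 ≤ Λ ^ 2 * s ^ 2 * b ^ 6 := by positivity
    calc a ^ 2 * (τ ^ 4 * x ^ 2) = (a * τ ^ 2 * x) ^ 2 := by ring
      _ ≤ _ := h2
      _ = 193600000000 * (Λ ^ 2 * s ^ 2 * b ^ 6) := by ring
      _ ≤ 200000000000 * (Λ ^ 2 * s ^ 2 * b ^ 6) := by linarith
      _ = _ := by ring
  · push Not at c2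
    have hAB0 : 0 < 400 * (A.card * B.card) := by positivity
    set k := p ^ 2 / (400 * (A.card * B.card)) with hk
    have hk1 : 1 ≤ k := (Nat.one_le_div_iff hAB0).2 c1
    have hk2 : k * (400 * (A.card * B.card)) ≤ p ^ 2 := Nat.div_mul_le_self _ _
    have hk3 : p ^ 2 < (k + 1) * (400 * (A.card * B.card)) := by
      have := Nat.lt_succ_iff.2 (le_refl k)
      rw [hk, Nat.div_lt_iff_lt_mul hAB0] at this
      exact this
    have hkT : k ≤ T.card := by
      by_contra hcon
      push Not at hcon
      have : T.card * (400 * (A.card * B.card)) ≤ k * (400 * (A.card * B.card)) := by gcongr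
      linarith
    obtain ⟨T', hT'T, hT'k⟩ := Finset.exists_subset_card_eq hkT
    have := weak_core A B S T' g h hg hinj hS hA0 hAB l hBl
      ((Finset.card_le_card hT'T).trans hTc) τ (fun t ht => hTm t (hT'T ht))
      (Finset.card_pos.1 (by omega)) (by rw [hT'k]; linarith) c0
    set x := √(T'.card:ℝ) with hx
    have hx2 : x ^ 2 = k := by rw [← hT'k]; exact sqs _
    have hx0 : 0 ≤ x := Real.sqrt_nonneg _
    have g1 : q ^ 2 ≤ 29 * (a * b * x) := by
      have : (q ^ 2) ^ 2 ≤ (29 * (a * b * x)) ^ 2 := by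
        have h1 : p ^ 2 ≤ (2 * k) * (400 * (A.card * B.card)) := by
          refine hk3.le.trans ?_
          gcongr; omega
        have h2 : ((p ^ 2 : ℕ):ℝ) ≤ ((2 * k) * (400 * (A.card * B.card)) : ℕ) := by exact_mod_cast h1
        push_cast at h2
        rw [← ha2, ← hb2, ← hq2, ← hx2] at h2
        have h0 : 0 ≤ a ^ 2 * b ^ 2 * x ^ 2 := by positivity
        calc _ ≤ _ := h2
          _ = 800 * (a ^ 2 * b ^ 2 * x ^ 2) := by ring
          _ ≤ 841 * (a ^ 2 * b ^ 2 * x ^ 2) := by linarith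
          _ = _ := by ring
      exact le_of_sq_le_sq this (by positivity)
    have g2 : τ ^ 2 * q ^ 2 ≤ 12760000 * Λ * s * b ^ 4 := by
      calc (τ:ℝ) ^ 2 * q ^ 2 ≤ τ ^ 2 * (29 * (a * b * x)) := by gcongr
        _ = 29 * b * (a * τ ^ 2 * x) := by ring
        _ ≤ 29 * b * (440000 * Λ * s * b ^ 3) := by gcongr
        _ = _ := by ring
    apply mark (200000000000 * Λ ^ 2) _ le_rfl
    have g3 : (τ ^ 2 * q ^ 2) ^ 3 ≤ (12760000 * Λ * s * b ^ 4) ^ 3 := by gcongr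
    have g4 : q ^ 6 * (a ^ 2 * (τ:ℝ) ^ 3) ^ 2 ≤ q ^ 6 * (200000000000 * Λ ^ 2 * s ^ 2 * b ^ 2) ^ 2 := by
      calc q ^ 6 * (a ^ 2 * (τ:ℝ) ^ 3) ^ 2 = a ^ 4 * (τ ^ 2 * q ^ 2) ^ 3 := by ring
        _ ≤ b ^ 4 * (12760000 * Λ * s * b ^ 4) ^ 3 := by gcongr
        _ = 12760000 ^ 3 * Λ ^ 3 * s ^ 3 * (b ^ 2) * b ^ 10 * b ^ 4 := by ring
        _ ≤ 12760000 ^ 3 * Λ ^ 3 * s ^ 3 * s * q ^ 6 * b ^ 4 := by gcongr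
        _ ≤ 200000000000 ^ 2 * Λ ^ 4 * s ^ 3 * s * q ^ 6 * b ^ 4 := by
          gcongr ?_ * s ^ 3 * s * q ^ 6 * b ^ 4
          refine mul_le_mul (by norm_num) ?_ (by positivity) (by norm_num)
          exact pow_le_pow_right₀ hl0 (by norm_num)
        _ = _ := by ring
    exact le_of_sq_le_sq (le_of_mul_le_mul_left g4 (by positivity)) (by positivity)

end
end TF


namespace TF

/-- dyadic pigeonhole, pointwise -/
theorem dyad (f l q : ℕ) (hq : q ≠ 0) (hf : f ≤ 2 ^ l) :
    f ^ q ≤ ∑ k ∈ Finset.range (l + 1), if 2 ^ k ≤ f then 2 ^ q * (2 ^ k) ^ q else 0 := by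
  rcases Nat.eq_zero_or_pos f with h0 | h0
  · subst h0; rw [zero_pow hq]; exact Nat.zero_le _
  have h1 : 2 ^ Nat.log 2 f ≤ f := Nat.pow_log_le_self 2 h0.ne'
  have h2 : f < 2 ^ (Nat.log 2 f + 1) := Nat.lt_pow_succ_log_self (by norm_num) f
  have h3 : Nat.log 2 f ∈ Finset.range (l + 1) := by
    rw [Finset.mem_range, Nat.lt_succ_iff]
    calc Nat.log 2 f ≤ Nat.log 2 (2 ^ l) := Nat.log_mono_right hf
      _ = l := Nat.log_pow (by norm_num) l
  refine le_trans ?_ (Finset.single_le_sum (fun _ _ => Nat.zero_le _) h3)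
  rw [if_pos h1, ← mul_pow]
  gcongr
  rw [pow_succ] at h2; linarith

section
variable {p : ℕ} [Fact p.Prime]

theorem E4_bound (A B S : Finset (ZMod p)) (g h : ZMod p → ZMod p) (hg : ∀ a ∈ A, g a ≠ 0)
    (hinj : Set.InjOn g A) (hS : ∀ a ∈ A, ∀ b ∈ B, g a * (h a + b) ∈ S)
    (hA0 : A.Nonempty) (hAB : A.card ≤ B.card) (hBS : B.card ≤ S.card) (hp5 : B.card ^ 5 ≤ p ^ 3)
    (l : ℕ) (hBl : B.card ≤ 2 ^ l) :
    (A.card:ℝ) * (∑ t, rp B B t ^ 4 : ℕ) ≤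
      3200000000000 * (4 * l + 1) ^ 3 * S.card ^ 2 * B.card ^ 3 := by
  classical
  have h1 : ∑ t, rp B B t ^ 4 ≤ ∑ k ∈ Finset.range (l + 1),
      16 * ((2 ^ k) ^ 4 * (Finset.univ.filter fun t => 2 ^ k ≤ rp B B t).card) := by
    calc ∑ t, rp B B t ^ 4 ≤ ∑ t, ∑ k ∈ Finset.range (l + 1),
          (if 2 ^ k ≤ rp B B t then 2 ^ 4 * (2 ^ k) ^ 4 else 0) :=
          Finset.sum_le_sum fun t _ => dyad _ _ _ (by norm_num) ((rp_le_left B B t).trans hBl)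
      _ = _ := by
        rw [Finset.sum_comm]
        refine Finset.sum_congr rfl fun k _ => ?_
        rw [← Finset.sum_filter, Finset.sum_const, smul_eq_mul]
        ring
  have h2 : ((∑ t, rp B B t ^ 4 : ℕ):ℝ) ≤ ∑ k ∈ Finset.range (l + 1),
      16 * (((2 ^ k : ℕ):ℝ) ^ 4 * (Finset.univ.filter fun t => 2 ^ k ≤ rp B B t).card) := by
    exact_mod_cast h1
  calc (A.card:ℝ) * (∑ t, rp B B t ^ 4 : ℕ) ≤ (A.card:ℝ) * ∑ k ∈ Finset.range (l + 1),
      16 * (((2 ^ k : ℕ):ℝ) ^ 4 * (Finset.univ.filter fun t => 2 ^ k ≤ rp B B t).card) := by gcongr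
    _ = ∑ k ∈ Finset.range (l + 1), 16 * ((A.card:ℝ) *
      (((2 ^ k : ℕ):ℝ) ^ 4 * (Finset.univ.filter fun t => 2 ^ k ≤ rp B B t).card)) := by
        rw [Finset.mul_sum]
        exact Finset.sum_congr rfl fun k _ => by ring
    _ ≤ ∑ k ∈ Finset.range (l + 1), (16:ℝ) * (200000000000 * (4 * (l:ℝ) + 1) ^ 2 * (S.card:ℝ) ^ 2 * (B.card:ℝ) ^ 3) := by
        refine Finset.sum_le_sum fun k _ => ?_
        have := weak_type A B S g h hg hinj hS hA0 hAB hBS hp5 l hBl (2 ^ k) Nat.one_le_two_pow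
        gcongr
    _ = 3200000000000 * (((l + 1:ℕ):ℝ) * (4 * l + 1) ^ 2 * S.card ^ 2 * B.card ^ 3) := by
        rw [Finset.sum_const, Finset.card_range, nsmul_eq_mul]; ring
    _ ≤ 3200000000000 * ((4 * l + 1) * (4 * l + 1) ^ 2 * S.card ^ 2 * B.card ^ 3) := by
        gcongr
        push_cast
        have : (0:ℝ) ≤ l := Nat.cast_nonneg l
        linarith
    _ = _ := by ring

/-- mixed fourth moment -/
def Emix (B C : Finset (ZMod p)) : ℕ := ∑ t, rp B B t ^ 2 * rp C C t ^ 2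

theorem Emix_le (B C : Finset (ZMod p)) :
    Emix B C ^ 2 ≤ (∑ t, rp B B t ^ 4) * (∑ t, rp C C t ^ 4) := by
  have := Finset.sum_mul_sq_le_sq_mul_sq Finset.univ (fun t => (rp B B t : ℝ) ^ 2)
    (fun t => (rp C C t : ℝ) ^ 2)
  unfold Emix
  simp_rw [← pow_mul] at this
  norm_num at this
  exact_mod_cast this

end
end TF


namespace TF

section
variable {p : ℕ} [Fact p.Prime]

theorem cross_card {α β : Type*} (T : Finset α) (T' : Finset β) (f : α → ZMod p) (f' : β → ZMod p) :
    ((T ×ˢ T').filter fun w => f w.1 = f' w.2).card =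
      ∑ t, (T.filter fun w => f w = t).card * (T'.filter fun w => f' w = t).card := by
  classical
  rw [Finset.card_eq_sum_card_fiberwise (f := fun w => f w.1) (t := Finset.univ)
    (fun _ _ => Finset.mem_coe.2 (Finset.mem_univ _))]
  refine Finset.sum_congr rfl fun t _ => ?_
  rw [← Finset.card_product]
  congr 1
  ext w
  simp only [Finset.mem_filter, Finset.mem_product]
  constructor
  · rintro ⟨⟨⟨h1, h2⟩, h3⟩, h4⟩
    exact ⟨⟨h1, h4⟩, h2, h3 ▸ h4⟩
  · rintro ⟨⟨h1, h4⟩, h2, h3⟩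
    exact ⟨⟨⟨h1, h2⟩, h4.trans h3.symm⟩, h4⟩

theorem quad (B U V : Finset (ZMod p)) (φ : ZMod p → ZMod p → ZMod p) :
    (((B ×ˢ U) ×ˢ (B ×ˢ V)).filter fun w => w.1.1 - w.2.1 = φ w.1.2 w.2.2).card =
      ∑ z ∈ U ×ˢ V, rp B B (φ z.1 z.2) := by
  classical
  unfold rp
  simp only [Finset.card_filter, Finset.sum_product]
  rw [Finset.sum_comm]
  refine Finset.sum_congr rfl fun u _ => ?_
  calc _ = ∑ b ∈ B, ∑ v ∈ V, ∑ b' ∈ B, (if b - b' = φ u v then 1 else 0) :=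
        Finset.sum_congr rfl fun b _ => Finset.sum_comm
    _ = _ := Finset.sum_comm

theorem sum_fib (X Y : Finset (ZMod p)) (F : ZMod p → ℕ) :
    ∑ z ∈ X ×ˢ Y, F (z.1 - z.2) = ∑ y, rp X Y y * F y := by
  classical
  rw [← Finset.sum_fiberwise (X ×ˢ Y) (fun z => z.1 - z.2)]
  refine Finset.sum_congr rfl fun y _ => ?_
  unfold rp
  rw [← smul_eq_mul, ← Finset.sum_const]
  refine Finset.sum_congr rfl fun z hz => ?_
  rw [(Finset.mem_filter.1 hz).2]

theorem sum_fib' (X : Finset (ZMod p)) (F : ZMod p → ℕ) :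
    ∑ z ∈ X ×ˢ X, F (z.2 - z.1) = ∑ y, rp X X y * F y := by
  rw [← sum_fib, Finset.sum_product, Finset.sum_product, Finset.sum_comm]

theorem rp_eq_filter (X : Finset (ZMod p)) (x : ZMod p) :
    rp X X x = (X.filter fun c => c - x ∈ X).card := by
  classical
  unfold rp
  refine Finset.card_bij' (fun w _ => w.1) (fun c _ => (c, c - x)) ?_ ?_ ?_ ?_
  · rintro ⟨a, b⟩ h
    simp only [Finset.mem_filter, Finset.mem_product] at h ⊢
    obtain ⟨⟨h1, h2⟩, h3⟩ := h
    refine ⟨h1, ?_⟩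
    rw [← h3]; simpa using h2
  · intro c h
    simp only [Finset.mem_filter, Finset.mem_product] at h ⊢
    exact ⟨h, by ring⟩
  · rintro ⟨a, b⟩ h
    simp only [Finset.mem_filter, Finset.mem_product] at h
    simp only [Prod.mk.injEq, true_and]
    rw [← h.2]; ring
  · intro c h; rfl

/-- pointwise inequality -/
theorem pointwise_ineq (B C P : Finset (ZMod p))
    (hC : ∀ c ∈ C, (B.filter fun b => b + c ∉ P).card * 4 ≤ B.card) (x : ZMod p) :
    rp C C x ^ 2 * B.card ^ 4 ≤ 16 * rp P P x ^ 2 *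
      ∑ z ∈ (C.filter fun c => c - x ∈ C) ×ˢ (C.filter fun c => c - x ∈ C), rp B B (z.2 - z.1) ^ 2 := by
  classical
  set U := C.filter fun c => c - x ∈ C with hU
  set V := P.filter fun c => c - x ∈ P with hV
  have hUc : rp C C x = U.card := rp_eq_filter C x
  have hVc : rp P P x = V.card := rp_eq_filter P x
  set n : ZMod p → ℕ := fun t => ((B ×ˢ U).filter fun w => w.1 + w.2 = t).card with hn
  have h1 : U.card * B.card ≤ 2 * ∑ t ∈ V, n t := by
    have e : ∑ t ∈ V, n t = ∑ c ∈ U, (B.filter fun b => b + c ∈ V).card := by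
      have e1 : ∑ t ∈ V, n t = ((B ×ˢ U).filter fun w => w.1 + w.2 ∈ V).card := by
        rw [Finset.card_eq_sum_card_fiberwise (s := (B ×ˢ U).filter fun w => w.1 + w.2 ∈ V)
          (f := fun w : ZMod p × ZMod p => w.1 + w.2) (t := V)
          (fun w hw => (Finset.mem_filter.1 hw).2)]
        refine Finset.sum_congr rfl fun s hs => ?_
        simp only [hn]
        congr 1
        ext w
        simp only [Finset.mem_filter]
        constructor
        · rintro ⟨a, b⟩; exact ⟨⟨a, b ▸ hs⟩, b⟩
        · rintro ⟨⟨a, _⟩, b⟩; exact ⟨a, b⟩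
      rw [e1, Finset.card_filter, Finset.sum_product, Finset.sum_comm]
      refine Finset.sum_congr rfl fun c _ => ?_
      rw [Finset.card_filter]
    rw [e, Finset.mul_sum, ← smul_eq_mul, ← Finset.sum_const]
    refine Finset.sum_le_sum fun c hc => ?_
    have hc' := Finset.mem_filter.1 hc
    have b1 := hC c hc'.1
    have b2 := hC (c - x) hc'.2
    have hsub : B ⊆ (B.filter fun b => b + c ∈ V) ∪ ((B.filter fun b => b + c ∉ P) ∪
        (B.filter fun b => b + (c - x) ∉ P)) := by
      intro b hb
      simp only [Finset.mem_union, Finset.mem_filter, hV]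
      by_cases k1 : b + c ∈ P
      · by_cases k2 : b + (c - x) ∈ P
        · left; refine ⟨hb, k1, ?_⟩
          rwa [add_sub_assoc]
        · right; right; exact ⟨hb, k2⟩
      · right; left; exact ⟨hb, k1⟩
    have := (Finset.card_le_card hsub).trans ((Finset.card_union_le _ _).trans
      (Nat.add_le_add_left (Finset.card_union_le _ _) _))
    omega
  have h2 : ∑ t, n t ^ 2 = ∑ z ∈ U ×ˢ U, rp B B (z.2 - z.1) := by
    rw [← quad B U U (fun u v => v - u)]
    simp only [hn]
    rw [← coll_card (B ×ˢ U) (fun w => w.1 + w.2)]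
    congr 1
    refine Finset.filter_congr fun w _ => ?_
    constructor
    · intro h; linear_combination h
    · intro h; linear_combination h
  have h3 : (∑ t ∈ V, n t) ^ 2 ≤ V.card * ∑ z ∈ U ×ˢ U, rp B B (z.2 - z.1) := by
    rw [← h2]
    refine sq_sum_le_card_mul_sum_sq.trans ?_
    exact Nat.mul_le_mul_left _ (Finset.sum_le_sum_of_subset (Finset.subset_univ V))
  have h4 : (∑ z ∈ U ×ˢ U, rp B B (z.2 - z.1)) ^ 2 ≤ U.card ^ 2 *
      ∑ z ∈ U ×ˢ U, rp B B (z.2 - z.1) ^ 2 := by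
    refine sq_sum_le_card_mul_sum_sq.trans ?_
    rw [Finset.card_product, sq]
    simp
  rw [hUc, hVc]
  set G := ∑ z ∈ U ×ˢ U, rp B B (z.2 - z.1) ^ 2
  set F := ∑ z ∈ U ×ˢ U, rp B B (z.2 - z.1)
  set N := ∑ t ∈ V, n t
  rcases Nat.eq_zero_or_pos U.card with h0 | h0
  · rw [h0]; simp
  have h5 : U.card ^ 2 * (U.card ^ 2 * B.card ^ 4) ≤ U.card ^ 2 * (16 * V.card ^ 2 * G) := by
    calc U.card ^ 2 * (U.card ^ 2 * B.card ^ 4) = (U.card * B.card) ^ 4 := by ring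
      _ ≤ (2 * N) ^ 4 := by gcongr
      _ = 16 * (N ^ 2) ^ 2 := by ring
      _ ≤ 16 * (V.card * F) ^ 2 := by gcongr
      _ = 16 * V.card ^ 2 * F ^ 2 := by ring
      _ ≤ 16 * V.card ^ 2 * (U.card ^ 2 * G) := by gcongr
      _ = _ := by ring
  exact Nat.le_of_mul_le_mul_left h5 (by positivity)

theorem sum_G (B C : Finset (ZMod p)) :
    ∑ x, ∑ z ∈ (C.filter fun c => c - x ∈ C) ×ˢ (C.filter fun c => c - x ∈ C),
      rp B B (z.2 - z.1) ^ 2 ≤ Emix B C := by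
  classical
  have h1 : ∀ x, ∑ z ∈ (C.filter fun c => c - x ∈ C) ×ˢ (C.filter fun c => c - x ∈ C),
      rp B B (z.2 - z.1) ^ 2 = ∑ z ∈ C ×ˢ C,
        if z.1 - x ∈ C ∧ z.2 - x ∈ C then rp B B (z.2 - z.1) ^ 2 else 0 := by
    intro x
    rw [← Finset.sum_filter]
    refine Finset.sum_congr ?_ fun _ _ => rfl
    ext z
    simp only [Finset.mem_filter, Finset.mem_product]
    tauto
  simp_rw [h1]
  rw [Finset.sum_comm]
  have h2 : ∀ z ∈ C ×ˢ C, (∑ x, if z.1 - x ∈ C ∧ z.2 - x ∈ C then rp B B (z.2 - z.1) ^ 2 else 0) ≤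
      rp C C (z.2 - z.1) * rp B B (z.2 - z.1) ^ 2 := by
    intro z _
    rw [← Finset.sum_filter, Finset.sum_const, smul_eq_mul]
    gcongr
    unfold rp
    refine Finset.card_le_card_of_injOn (fun x => (z.2 - x, z.1 - x)) ?_ ?_
    · intro x hx
      simp only [Finset.coe_filter, Set.mem_ofPred_eq, Finset.mem_univ, true_and] at hx
      simp only [Finset.coe_filter, Set.mem_ofPred_eq, Finset.mem_product]
      exact ⟨⟨hx.2, hx.1⟩, by ring⟩
    · intro x _ y _ h
      simp only [Prod.mk.injEq] at h
      exact sub_right_inj.1 h.1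
  refine (Finset.sum_le_sum h2).trans ?_
  rw [sum_fib' C (fun y => rp C C y * rp B B y ^ 2)]
  unfold Emix
  refine le_of_eq (Finset.sum_congr rfl fun y _ => by ring)

theorem convex_lemma {ι : Type*} (D : Finset ι) (ρ G : ι → ℝ) (c : ℝ) (hc : 0 < c)
    (hρ : ∀ x ∈ D, 0 ≤ ρ x) (h : ∀ x ∈ D, c ≤ ρ x ^ 2 * G x) :
    (D.card:ℝ) ^ 3 * c ≤ (∑ x ∈ D, ρ x) ^ 2 * ∑ x ∈ D, G x := by
  rcases Finset.eq_empty_or_nonempty D with hD | hD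
  · subst hD; simp
  have hρ' : ∀ x ∈ D, 0 < ρ x := by
    intro x hx
    rcases (hρ x hx).lt_or_eq with h1 | h1
    · exact h1
    · have := h x hx
      rw [← h1] at this
      simp at this; linarith
  have hN : (0:ℝ) < D.card := by exact_mod_cast hD.card_pos
  set T := ∑ x ∈ D, ρ x with hT
  have hT0 : 0 < T := Finset.sum_pos hρ' hD
  set R := T / D.card with hR
  have hR0 : 0 < R := by positivity
  have h1 : ∀ x ∈ D, c * (3 / R ^ 2 - 2 * ρ x / R ^ 3) ≤ G x := by
    intro x hx
    have r0 := hρ' x hx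
    have a1 : c / ρ x ^ 2 ≤ G x := by
      rw [div_le_iff₀ (by positivity)]; linarith [h x hx]
    refine le_trans ?_ a1
    rw [div_eq_mul_one_div c]
    refine mul_le_mul_of_nonneg_left ?_ hc.le
    rw [div_sub_div _ _ (by positivity) (by positivity), div_le_div_iff₀ (by positivity) (by positivity)]
    have : 0 ≤ R ^ 2 * ((R - ρ x) ^ 2 * (R + 2 * ρ x)) := by positivity
    nlinarith
  have h2 := Finset.sum_le_sum h1
  rw [← Finset.mul_sum, Finset.sum_sub_distrib, Finset.sum_const, nsmul_eq_mul, ← Finset.sum_div,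
    ← Finset.mul_sum, ← hT] at h2
  have e : c * (D.card * (3 / R ^ 2) - 2 * T / R ^ 3) = c * D.card ^ 3 / T ^ 2 := by
    rw [hR]; field_simp; ring
  rw [e, div_le_iff₀ (by positivity)] at h2
  linarith

end
end TF


namespace TF

section
variable {p : ℕ} [Fact p.Prime]

/-- level set of differences -/
def Lev (C : Finset (ZMod p)) (τ : ℕ) : Finset (ZMod p) := Finset.univ.filter fun t => τ ≤ rp C C t

/-- weak norm (fourth power) -/
def WW (C : Finset (ZMod p)) : ℕ :=
  (Finset.range (C.card + 1)).sup fun τ => τ ^ 4 * (Lev C τ).card ^ 3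

theorem le_WW (C : Finset (ZMod p)) (τ : ℕ) : τ ^ 4 * (Lev C τ).card ^ 3 ≤ WW C := by
  by_cases h : τ ≤ C.card
  · exact Finset.le_sup (f := fun τ => τ ^ 4 * (Lev C τ).card ^ 3)
      (Finset.mem_range.2 (Nat.lt_succ_iff.2 h))
  · have : Lev C τ = ∅ := by
      rw [Finset.eq_empty_iff_forall_notMem]
      intro t ht
      exact h ((Finset.mem_filter.1 ht).2.trans (rp_le_left C C t))
    rw [this]; simp

theorem Lev_mark (C : Finset (ZMod p)) (τ : ℕ) : τ * (Lev C τ).card ≤ C.card ^ 2 := by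
  have := Finset.card_nsmul_le_sum (Lev C τ) (rp C C) τ (fun t ht => (Finset.mem_filter.1 ht).2)
  rw [smul_eq_mul, mul_comm] at this
  refine this.trans ?_
  rw [sq, ← rp_sum]
  exact Finset.sum_le_sum_of_subset (Finset.subset_univ _)

theorem rp_zero (C : Finset (ZMod p)) : rp C C 0 = C.card := by
  rw [rp_eq_filter]
  congr 1
  ext c
  simp

theorem WW_pos (C : Finset (ZMod p)) (hC : C.Nonempty) : 1 ≤ WW C := by
  refine le_trans ?_ (le_WW C 1)
  have : 0 < (Lev C 1).card := by
    refine Finset.card_pos.2 ⟨0, ?_⟩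
    refine Finset.mem_filter.2 ⟨Finset.mem_univ _, ?_⟩
    rw [rp_zero]; exact hC.card_pos
  rw [one_pow, one_mul]
  exact Nat.one_le_pow _ _ this

theorem WW_attain (C : Finset (ZMod p)) (hC : C.Nonempty) :
    ∃ τ, 1 ≤ τ ∧ WW C = τ ^ 4 * (Lev C τ).card ^ 3 ∧ (Lev C τ).Nonempty := by
  obtain ⟨τ, _, h⟩ := Finset.exists_mem_eq_sup (Finset.range (C.card + 1)) ⟨0, by simp⟩
    (fun τ => τ ^ 4 * (Lev C τ).card ^ 3)
  have h1 := WW_pos C hC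
  have h2 : WW C = τ ^ 4 * (Lev C τ).card ^ 3 := h
  refine ⟨τ, ?_, h2, ?_⟩
  · rcases Nat.eq_zero_or_pos τ with h0 | h0
    · rw [h2, h0] at h1; simp at h1
    · exact h0
  · rw [Finset.nonempty_iff_ne_empty]
    intro h0
    rw [h2, h0] at h1; simp at h1

theorem WW_le (C : Finset (ZMod p)) : WW C ≤ C.card ^ 7 := by
  refine Finset.sup_le fun τ hτ => ?_
  have h1 : τ ≤ C.card := Nat.lt_succ_iff.1 (Finset.mem_range.1 hτ)
  calc τ ^ 4 * (Lev C τ).card ^ 3 = τ * (τ * (Lev C τ).card) ^ 3 := by ring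
    _ ≤ C.card * (C.card ^ 2) ^ 3 := by gcongr; exact Lev_mark C τ
    _ = _ := by ring

theorem choose_C0 (C : Finset (ZMod p)) (hC : C.Nonempty) (l Θ : ℕ) (hl : C.card ≤ 2 ^ l)
    (hΘ : 7 * l ≤ Θ) (hΘ1 : 1 ≤ Θ) :
    ∃ C0 ⊆ C, C0.Nonempty ∧ C.card ≤ 2 * C0.card ∧
      ∀ C' ⊆ C0, C'.Nonempty → WW C0 * C'.card ^ Θ ≤ WW C' * C0.card ^ Θ := by
  classical
  obtain ⟨C0, h0, hmin⟩ := Finset.exists_min_image (C.powerset.filter fun X => X.Nonempty)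
    (fun X => (WW X : ℝ) / (X.card:ℝ) ^ Θ)
    ⟨C, Finset.mem_filter.2 ⟨Finset.mem_powerset_self C, hC⟩⟩
  rw [Finset.mem_filter, Finset.mem_powerset] at h0
  obtain ⟨h01, h02⟩ := h0
  have key : ∀ X ⊆ C, X.Nonempty → WW C0 * X.card ^ Θ ≤ WW X * C0.card ^ Θ := by
    intro X hX hXn
    have := hmin X (Finset.mem_filter.2 ⟨Finset.mem_powerset.2 hX, hXn⟩)
    have p1 : (0:ℝ) < X.card := by exact_mod_cast hXn.card_pos
    have p2 : (0:ℝ) < C0.card := by exact_mod_cast h02.card_pos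
    rw [div_le_div_iff₀ (by positivity) (by positivity)] at this
    exact_mod_cast this
  refine ⟨C0, h01, h02, ?_, fun C' h1 h2 => key C' (h1.trans h01) h2⟩
  have h1 := key C subset_rfl hC
  have h2 : C.card ^ Θ ≤ (2 * C0.card) ^ Θ := by
    calc C.card ^ Θ = 1 * C.card ^ Θ := by ring
      _ ≤ WW C0 * C.card ^ Θ := by gcongr; exact WW_pos C0 h02
      _ ≤ WW C * C0.card ^ Θ := h1
      _ ≤ 2 ^ Θ * C0.card ^ Θ := by
        gcongr
        calc WW C ≤ C.card ^ 7 := WW_le C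
          _ ≤ (2 ^ l) ^ 7 := by gcongr
          _ = 2 ^ (7 * l) := by ring
          _ ≤ 2 ^ Θ := Nat.pow_le_pow_right (by norm_num) hΘ
      _ = _ := by ring
  exact (Nat.pow_le_pow_iff_left (by omega)).1 h2

/-- popular sums -/
def np (B C : Finset (ZMod p)) (t : ZMod p) : ℕ := ((B ×ˢ C).filter fun w => w.1 + w.2 = t).card

theorem popular_diff (B C P : Finset (ZMod p)) (q : ℝ) (hq : 0 ≤ q) (hP : ∀ t ∈ P, q ≤ np B C t)
    (x : ZMod p) : q ^ 2 * rp P P x ≤ (∑ y, rp C C y * rp B B (x - y) : ℕ) := by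
  classical
  have e : ∑ y, rp C C y * rp B B (x - y) = ∑ t, np B C t * np B C (t - x) := by
    rw [← sum_fib C C (fun y => rp B B (x - y)), ← quad B C C (fun u v => x - (u - v))]
    have h1 := cross_card (B ×ˢ C) (B ×ˢ C) (fun w => w.1 + w.2) (fun w => w.1 + w.2 + x)
    have h2 : ∀ t, ((B ×ˢ C).filter fun w => w.1 + w.2 + x = t).card = np B C (t - x) := by
      intro t
      unfold np
      congr 1
      refine Finset.filter_congr fun w _ => ?_
      rw [eq_sub_iff_add_eq]
    simp_rw [h2] at h1
    unfold np at h1 ⊢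
    rw [← h1]
    congr 1
    refine Finset.filter_congr fun w _ => ?_
    constructor
    · intro h; linear_combination h
    · intro h; linear_combination h
  rw [e, rp_eq_filter]
  push_cast
  calc q ^ 2 * ((P.filter fun c => c - x ∈ P).card : ℝ)
      = ∑ t ∈ P.filter (fun c => c - x ∈ P), q * q := by
        rw [Finset.sum_const, nsmul_eq_mul]; ring
    _ ≤ ∑ t ∈ P.filter (fun c => c - x ∈ P), (np B C t : ℝ) * np B C (t - x) := by
        refine Finset.sum_le_sum fun t ht => ?_
        have ht' := Finset.mem_filter.1 ht
        exact mul_le_mul (hP _ ht'.1) (hP _ ht'.2) hq (Nat.cast_nonneg _)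
    _ ≤ _ := Finset.sum_le_sum_of_subset_of_nonneg (Finset.subset_univ _)
        fun _ _ _ => by positivity

theorem pair_energy (B X Y : Finset (ZMod p)) :
    (∑ z ∈ X ×ˢ Y, rp B B (z.1 - z.2)) ^ 2 ≤ En B X * En B Y := by
  classical
  rw [← quad B X Y (fun u v => u - v)]
  have h1 := cross_card (B ×ˢ X) (B ×ˢ Y) (fun w => w.1 - w.2) (fun w => w.1 - w.2)
  have h2 : (((B ×ˢ X) ×ˢ (B ×ˢ Y)).filter fun w => w.1.1 - w.2.1 = w.1.2 - w.2.2).card =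
      ∑ t, rp B X t * rp B Y t := by
    unfold rp
    rw [← h1]
    congr 1
    refine Finset.filter_congr fun w _ => ?_
    constructor
    · intro h; linear_combination h
    · intro h; linear_combination h
  rw [h2]
  exact Finset.sum_mul_sq_le_sq_mul_sq _ _ _

theorem Lev_card (C : Finset (ZMod p)) (τ l : ℕ) (hτ : 1 ≤ τ) (hl : C.card ≤ 2 ^ l) :
    (Lev C τ).card ≤ 2 ^ (2 * l) := by
  calc (Lev C τ).card ≤ τ * (Lev C τ).card := Nat.le_mul_of_pos_left _ hτ
    _ ≤ C.card ^ 2 := Lev_mark C τ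
    _ ≤ (2 ^ l) ^ 2 := by gcongr
    _ = _ := by ring

theorem upper_rho (B C0 P Δ : Finset (ZMod p)) (q κ : ℝ) (hq : 0 ≤ q) (hκ : 0 ≤ κ)
    (hP : ∀ t ∈ P, q ≤ np B C0 t) (l τ : ℕ) (hl : C0.card ≤ 2 ^ l)
    (hE : ∀ X : Finset (ZMod p), X.card ≤ 2 ^ (2 * l) → (En B X : ℝ) ≤ κ * √(X.card : ℝ) ^ 3)
    (hΔ : Δ.card ≤ 2 ^ (2 * l)) (hW : WW C0 ≤ 2 * (τ ^ 4 * Δ.card ^ 3)) :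
    q ^ 2 * ∑ x ∈ Δ, (rp P P x : ℝ) ≤ 4 * (l + 1) * κ * τ * √(Δ.card:ℝ) ^ 3 := by
  classical
  set d := √(Δ.card:ℝ) with hd
  have hd2 : d ^ 2 = Δ.card := sqs _
  have hd0 : 0 ≤ d := Real.sqrt_nonneg _
  -- each level
  have hk : ∀ k, (2:ℝ) ^ k * (∑ z ∈ Δ ×ˢ Lev C0 (2 ^ k), rp B B (z.1 - z.2) : ℕ) ≤ 2 * κ * τ * d ^ 3 := by
    intro k
    set Y := Lev C0 (2 ^ k) with hY
    set N := ∑ z ∈ Δ ×ˢ Y, rp B B (z.1 - z.2) with hN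
    set y := √(Y.card:ℝ) with hy
    have hy2 : y ^ 2 = Y.card := sqs _
    have hy0 : 0 ≤ y := Real.sqrt_nonneg _
    have h1 : (N:ℝ) ^ 2 ≤ (κ * d ^ 3) * (κ * y ^ 3) := by
      have := pair_energy B Δ Y
      have h' : (N:ℝ) ^ 2 ≤ (En B Δ : ℝ) * En B Y := by exact_mod_cast this
      refine h'.trans ?_
      gcongr
      · exact hE _ hΔ
      · exact hE _ (Lev_card C0 _ l Nat.one_le_two_pow hl)
    have h2 : ((2:ℝ) ^ k) ^ 4 * (y ^ 2) ^ 3 ≤ 2 * (τ ^ 4 * (d ^ 2) ^ 3) := by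
      have := (le_WW C0 (2 ^ k)).trans hW
      rw [hy2, hd2]; exact_mod_cast this
    have h3 : ((2:ℝ) ^ k * N) ^ 4 ≤ (2 * κ * τ * d ^ 3) ^ 4 := by
      have h0 : 0 ≤ κ ^ 4 * τ ^ 4 * d ^ 12 := by positivity
      calc ((2:ℝ) ^ k * N) ^ 4 = ((2:ℝ) ^ k) ^ 4 * ((N:ℝ) ^ 2) ^ 2 := by ring
        _ ≤ ((2:ℝ) ^ k) ^ 4 * ((κ * d ^ 3) * (κ * y ^ 3)) ^ 2 := by gcongr
        _ = κ ^ 4 * d ^ 6 * (((2:ℝ) ^ k) ^ 4 * (y ^ 2) ^ 3) := by ring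
        _ ≤ κ ^ 4 * d ^ 6 * (2 * (τ ^ 4 * (d ^ 2) ^ 3)) := by gcongr
        _ = 2 * (κ ^ 4 * τ ^ 4 * d ^ 12) := by ring
        _ ≤ 16 * (κ ^ 4 * τ ^ 4 * d ^ 12) := by linarith
        _ = _ := by ring
    exact (pow_le_pow_iff_left₀ (by positivity) (by positivity) (by norm_num)).1 h3
  have h1 : ∀ x, ∑ y, rp C0 C0 y * rp B B (x - y) ≤ ∑ k ∈ Finset.range (l + 1),
      2 * 2 ^ k * ∑ y ∈ Lev C0 (2 ^ k), rp B B (x - y) := by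
    intro x
    calc ∑ y, rp C0 C0 y * rp B B (x - y) ≤ ∑ y, ∑ k ∈ Finset.range (l + 1),
          (if 2 ^ k ≤ rp C0 C0 y then 2 * 2 ^ k * rp B B (x - y) else 0) := by
          refine Finset.sum_le_sum fun y _ => ?_
          have := dyad (rp C0 C0 y) l 1 one_ne_zero ((rp_le_left C0 C0 y).trans hl)
          simp only [pow_one] at this
          refine (Nat.mul_le_mul_right _ this).trans ?_
          rw [Finset.sum_mul]
          refine Finset.sum_le_sum fun k _ => ?_
          split_ifs <;> simp
      _ = _ := by
        rw [Finset.sum_comm]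
        refine Finset.sum_congr rfl fun k _ => ?_
        rw [← Finset.sum_filter, Finset.mul_sum]
        rfl
  have h2 : ∑ x ∈ Δ, ∑ y, rp C0 C0 y * rp B B (x - y) ≤ ∑ k ∈ Finset.range (l + 1),
      2 * 2 ^ k * ∑ z ∈ Δ ×ˢ Lev C0 (2 ^ k), rp B B (z.1 - z.2) := by
    refine (Finset.sum_le_sum fun x _ => h1 x).trans ?_
    rw [Finset.sum_comm]
    refine Finset.sum_le_sum fun k _ => ?_
    rw [← Finset.mul_sum, Finset.sum_product]
  have h3 : ((∑ x ∈ Δ, ∑ y, rp C0 C0 y * rp B B (x - y) : ℕ) : ℝ) ≤ ∑ k ∈ Finset.range (l + 1),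
      2 * ((2:ℝ) ^ k * (∑ z ∈ Δ ×ˢ Lev C0 (2 ^ k), rp B B (z.1 - z.2) : ℕ)) := by
    have : ((∑ x ∈ Δ, ∑ y, rp C0 C0 y * rp B B (x - y) : ℕ) : ℝ) ≤ (∑ k ∈ Finset.range (l + 1),
      2 * 2 ^ k * ∑ z ∈ Δ ×ˢ Lev C0 (2 ^ k), rp B B (z.1 - z.2) : ℕ) := by exact_mod_cast h2
    refine this.trans (le_of_eq ?_)
    rw [Nat.cast_sum]
    refine Finset.sum_congr rfl fun k _ => ?_
    push_cast; ring
  calc q ^ 2 * ∑ x ∈ Δ, (rp P P x : ℝ) = ∑ x ∈ Δ, q ^ 2 * (rp P P x : ℝ) := by rw [Finset.mul_sum]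
    _ ≤ ∑ x ∈ Δ, ((∑ y, rp C0 C0 y * rp B B (x - y) : ℕ) : ℝ) :=
        Finset.sum_le_sum fun x _ => popular_diff B C0 P q hq hP x
    _ = ((∑ x ∈ Δ, ∑ y, rp C0 C0 y * rp B B (x - y) : ℕ) : ℝ) := by rw [← Nat.cast_sum]
    _ ≤ _ := h3
    _ ≤ ∑ k ∈ Finset.range (l + 1), 2 * (2 * κ * τ * d ^ 3) := by
        refine Finset.sum_le_sum fun k _ => ?_
        have := hk k
        linarith
    _ = _ := by
        rw [Finset.sum_const, Finset.card_range, nsmul_eq_mul]; push_cast; ring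

end
end TF


namespace TF

section
variable {p : ℕ} [Fact p.Prime]

theorem rp_mono (X Y : Finset (ZMod p)) (h : X ⊆ Y) (t : ZMod p) : rp X X t ≤ rp Y Y t := by
  unfold rp
  exact Finset.card_le_card (Finset.filter_subset_filter _ (Finset.product_subset_product h h))

theorem Emix_mono (B X Y : Finset (ZMod p)) (h : X ⊆ Y) : Emix B X ≤ Emix B Y := by
  unfold Emix
  refine Finset.sum_le_sum fun t _ => ?_
  have := rp_mono X Y h t
  gcongr

theorem bad_count (B C0 P : Finset (ZMod p)) (q : ℝ) (M : ℕ) (hq : 0 ≤ q) (hM : (B + C0).card ≤ M)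
    (hP : ∀ t, t ∉ P → (np B C0 t : ℝ) ≤ q) :
    ((∑ c ∈ C0, (B.filter fun b => b + c ∉ P).card : ℕ) : ℝ) ≤ M * q := by
  classical
  have e1 : ∑ c ∈ C0, (B.filter fun b => b + c ∉ P).card =
      ((B ×ˢ C0).filter fun w => w.1 + w.2 ∉ P).card := by
    rw [Finset.card_filter, Finset.sum_product, Finset.sum_comm]
    refine Finset.sum_congr rfl fun c _ => ?_
    rw [Finset.card_filter]
  have e2 : ((B ×ˢ C0).filter fun w => w.1 + w.2 ∉ P).card ≤
      ∑ t ∈ (B + C0).filter (fun t => t ∉ P), np B C0 t := by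
    rw [Finset.card_eq_sum_card_fiberwise (s := (B ×ˢ C0).filter fun w => w.1 + w.2 ∉ P)
          (f := fun w : ZMod p × ZMod p => w.1 + w.2) (t := (B + C0).filter (fun t => t ∉ P))]
    · refine Finset.sum_le_sum fun t _ => ?_
      unfold np
      exact Finset.card_le_card (Finset.filter_subset_filter _ (Finset.filter_subset _ _))
    · intro w hw
      have hw' := Finset.mem_filter.1 hw
      have hw2 := Finset.mem_product.1 hw'.1
      exact Finset.mem_coe.2 (Finset.mem_filter.2 ⟨Finset.add_mem_add hw2.1 hw2.2, hw'.2⟩)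
  rw [e1]
  have e3 : (((B ×ˢ C0).filter fun w => w.1 + w.2 ∉ P).card : ℝ) ≤
      ∑ t ∈ (B + C0).filter (fun t => t ∉ P), (np B C0 t : ℝ) := by exact_mod_cast e2
  refine e3.trans ?_
  refine (Finset.sum_le_card_nsmul _ _ q fun t ht => hP t (Finset.mem_filter.1 ht).2).trans ?_
  rw [nsmul_eq_mul]
  gcongr
  exact (Finset.card_filter_le _ _).trans hM

set_option maxHeartbeats 1600000 in
theorem main_comb (B C : Finset (ZMod p)) (hB : B.Nonempty) (hC : C.Nonempty) (l M : ℕ)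
    (hl : C.card ≤ 2 ^ l) (hM : (B + C).card ≤ M) (κ : ℝ) (hκ : 0 ≤ κ)
    (hE : ∀ X : Finset (ZMod p), X.card ≤ 2 ^ (2 * l) → (En B X : ℝ) ≤ κ * √(X.card : ℝ) ^ 3) :
    (B.card:ℝ) ^ 8 * (C.card:ℝ) ^ 4 ≤ 2 ^ 36 * (l + 1) ^ 6 * (M:ℝ) ^ 4 * κ ^ 2 * Emix B C := by
  classical
  set Θ : ℕ := 8 * (l + 1) with hΘ
  obtain ⟨C0, hC0, hC0n, hC02, hmin⟩ := choose_C0 C hC l Θ hl (by omega) (by omega)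
  have hBp : (0:ℝ) < B.card := by exact_mod_cast hB.card_pos
  have hCp : (0:ℝ) < C.card := by exact_mod_cast hC.card_pos
  have hC0p : (0:ℝ) < C0.card := by exact_mod_cast hC0n.card_pos
  have hMp : (0:ℝ) < M := by
    have : 0 < M := lt_of_lt_of_le (hB.add hC).card_pos hM
    exact_mod_cast this
  have hΘp : (0:ℝ) < Θ := by have : 0 < Θ := by omega
                             exact_mod_cast this
  have hΘ1 : (1:ℝ) ≤ Θ := by have : 1 ≤ Θ := by omega
                             exact_mod_cast this
  have hC0l : C0.card ≤ 2 ^ l := (Finset.card_le_card hC0).trans hl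
  set q : ℝ := B.card * C0.card / (8 * Θ * M) with hq
  have hq0 : 0 < q := by positivity
  set P : Finset (ZMod p) := Finset.univ.filter fun t => q ≤ np B C0 t with hPd
  have hP : ∀ t ∈ P, q ≤ np B C0 t := fun t ht => (Finset.mem_filter.1 ht).2
  have hP' : ∀ t, t ∉ P → (np B C0 t : ℝ) ≤ q := by
    intro t ht
    by_contra hcon
    push Not at hcon
    exact ht (Finset.mem_filter.2 ⟨Finset.mem_univ _, hcon.le⟩)
  have hbad := bad_count B C0 P q M hq0.le
    ((Finset.card_le_card (Finset.add_subset_add_left hC0)).trans hM) hP'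
  set C' := C0.filter fun c => (B.filter fun b => b + c ∉ P).card * 4 ≤ B.card with hC'
  set C'' := C0.filter fun c => ¬ (B.filter fun b => b + c ∉ P).card * 4 ≤ B.card with hC''
  have hsum : C'.card + C''.card = C0.card := Finset.card_filter_add_card_filter_not _
  have hbad2 : (C''.card:ℝ) * B.card ≤ 4 * (M * q) := by
    have h1 : C''.card * B.card ≤ 4 * ∑ c ∈ C0, (B.filter fun b => b + c ∉ P).card := by
      calc C''.card * B.card = ∑ c ∈ C'', B.card := by rw [Finset.sum_const, smul_eq_mul]
        _ ≤ ∑ c ∈ C'', 4 * (B.filter fun b => b + c ∉ P).card := by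
          refine Finset.sum_le_sum fun c hc => ?_
          have := (Finset.mem_filter.1 hc).2
          omega
        _ ≤ ∑ c ∈ C0, 4 * (B.filter fun b => b + c ∉ P).card :=
          Finset.sum_le_sum_of_subset (Finset.filter_subset _ _)
        _ = _ := by rw [Finset.mul_sum]
    have h2 : ((C''.card * B.card : ℕ):ℝ) ≤ (4 * ∑ c ∈ C0, (B.filter fun b => b + c ∉ P).card : ℕ) := by
      exact_mod_cast h1
    push_cast at h2 hbad
    linarith
  have hbad3 : (C''.card:ℝ) ≤ C0.card / (2 * Θ) := by
    have e : 4 * (M * q) = (C0.card / (2 * Θ)) * B.card := by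
      rw [hq]; field_simp; ring
    rw [e] at hbad2
    exact le_of_mul_le_mul_right hbad2 hBp
  have hC'card : (C0.card:ℝ) * (1 - 1 / (2 * Θ)) ≤ C'.card := by
    have h1 : (C'.card:ℝ) + C''.card = C0.card := by exact_mod_cast hsum
    have h2 : (C0.card:ℝ) * (1 - 1 / (2 * Θ)) = C0.card - C0.card / (2 * Θ) := by ring
    linarith
  have hle : 1 / (2 * (Θ:ℝ)) ≤ 1 / 2 := by
    apply one_div_le_one_div_of_le <;> linarith
  have hC'p : (0:ℝ) < C'.card := by
    refine lt_of_lt_of_le ?_ hC'card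
    apply mul_pos hC0p; linarith
  have hC'n : C'.Nonempty := Finset.card_pos.1 (by exact_mod_cast hC'p)
  have hC'sub : C' ⊆ C0 := Finset.filter_subset _ _
  have hWW : WW C0 ≤ 2 * WW C' := by
    have h1 : (WW C0:ℝ) * (C'.card:ℝ) ^ Θ ≤ WW C' * (C0.card:ℝ) ^ Θ := by
      exact_mod_cast hmin C' hC'sub hC'n
    have h2 : (1:ℝ) / 2 ≤ (1 - 1 / (2 * Θ)) ^ Θ := by
      have := one_add_mul_le_pow (a := -(1 / (2 * (Θ:ℝ)))) (by linarith) Θ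
      have e : 1 + (Θ:ℝ) * -(1 / (2 * (Θ:ℝ))) = 1 / 2 := by field_simp; norm_num
      rw [e] at this
      rwa [sub_eq_add_neg]
    have h3 : (C0.card:ℝ) ^ Θ * (1 / 2) ≤ (C'.card:ℝ) ^ Θ := by
      calc (C0.card:ℝ) ^ Θ * (1 / 2) ≤ (C0.card:ℝ) ^ Θ * (1 - 1 / (2 * Θ)) ^ Θ := by gcongr
        _ = (C0.card * (1 - 1 / (2 * Θ)) : ℝ) ^ Θ := by rw [mul_pow]
        _ ≤ _ := by
          refine pow_le_pow_left₀ ?_ hC'card Θ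
          apply mul_nonneg hC0p.le; linarith
    have h4 : (C0.card:ℝ) ^ Θ * ((WW C0:ℝ) * (1 / 2)) ≤ (C0.card:ℝ) ^ Θ * WW C' := by
      calc (C0.card:ℝ) ^ Θ * ((WW C0:ℝ) * (1 / 2)) = WW C0 * ((C0.card:ℝ) ^ Θ * (1 / 2)) := by ring
        _ ≤ WW C0 * (C'.card:ℝ) ^ Θ := by gcongr
        _ ≤ _ := h1
        _ = _ := by ring
    have h5 : (WW C0:ℝ) * (1 / 2) ≤ WW C' := le_of_mul_le_mul_left h4 (by positivity)
    have h6 : (WW C0:ℝ) ≤ 2 * WW C' := by linarith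
    exact_mod_cast h6
  obtain ⟨τ, hτ1, hτW, hΔn⟩ := WW_attain C' hC'n
  set Δ := Lev C' τ with hΔ
  have hup := upper_rho B C0 P Δ q κ hq0.le hκ hP l τ hC0l hE
    (Lev_card C' τ l hτ1 ((Finset.card_le_card hC'sub).trans hC0l)) (by rw [← hτW]; exact hWW)
  set d := √(Δ.card:ℝ) with hd
  have hd2 : d ^ 2 = Δ.card := sqs _
  have hd0 : 0 < d := Real.sqrt_pos.2 (by exact_mod_cast hΔn.card_pos)
  have hτp : (0:ℝ) < τ := by exact_mod_cast hτ1
  set G : ZMod p → ℕ := fun x => ∑ z ∈ (C'.filter fun c => c - x ∈ C') ×ˢ (C'.filter fun c => c - x ∈ C'),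
      rp B B (z.2 - z.1) ^ 2 with hG
  have hpw : ∀ x ∈ Δ, (τ:ℝ) ^ 2 * B.card ^ 4 / 16 ≤ (rp P P x : ℝ) ^ 2 * G x := by
    intro x hx
    have h1 : rp C' C' x ^ 2 * B.card ^ 4 ≤ 16 * rp P P x ^ 2 * G x := pointwise_ineq B C' P
      (fun c hc => (Finset.mem_filter.1 hc).2) x
    have h2 : τ ≤ rp C' C' x := (Finset.mem_filter.1 hx).2
    have h3 : τ ^ 2 * B.card ^ 4 ≤ 16 * rp P P x ^ 2 * G x := le_trans (by gcongr) h1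
    have h4 : (τ:ℝ) ^ 2 * B.card ^ 4 ≤ 16 * (rp P P x:ℝ) ^ 2 * G x := by exact_mod_cast h3
    linarith
  have hconv := convex_lemma Δ (fun x => (rp P P x : ℝ)) (fun x => (G x : ℝ)) _ (by positivity)
    (fun x _ => Nat.cast_nonneg _) hpw
  have hGs : ∑ x ∈ Δ, (G x : ℝ) ≤ Emix B C := by
    have h1 : ∑ x ∈ Δ, G x ≤ Emix B C :=
      (Finset.sum_le_sum_of_subset (Finset.subset_univ _)).trans
        ((sum_G B C').trans (Emix_mono B C' C (hC'sub.trans hC0)))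
    exact_mod_cast h1
  set R := ∑ x ∈ Δ, (rp P P x : ℝ) with hR
  have hR0 : 0 ≤ R := Finset.sum_nonneg fun _ _ => Nat.cast_nonneg _
  set E : ℝ := (Emix B C : ℝ) with hEm
  have hE0 : 0 ≤ E := Nat.cast_nonneg _
  have f1 : (d ^ 2) ^ 3 * ((τ:ℝ) ^ 2 * B.card ^ 4 / 16) ≤ R ^ 2 * E := by
    rw [hd2]
    refine hconv.trans ?_
    gcongr
  have f2 : q ^ 4 * (B.card:ℝ) ^ 4 ≤ 256 * (l + 1) ^ 2 * κ ^ 2 * E := by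
    have : (d ^ 6 * τ ^ 2 / 16) * (q ^ 4 * (B.card:ℝ) ^ 4) ≤
        (d ^ 6 * τ ^ 2 / 16) * (256 * (l + 1) ^ 2 * κ ^ 2 * E) := by
      calc (d ^ 6 * τ ^ 2 / 16) * (q ^ 4 * (B.card:ℝ) ^ 4)
          = q ^ 4 * ((d ^ 2) ^ 3 * ((τ:ℝ) ^ 2 * B.card ^ 4 / 16)) := by ring
        _ ≤ q ^ 4 * (R ^ 2 * E) := by gcongr
        _ = (q ^ 2 * R) ^ 2 * E := by ring
        _ ≤ (4 * (l + 1) * κ * τ * d ^ 3) ^ 2 * E := by gcongr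
        _ = _ := by ring
    exact le_of_mul_le_mul_left this (by positivity)
  have f3 : (B.card:ℝ) * C.card ≤ 128 * (l + 1) * M * q := by
    have h1 : (C.card:ℝ) ≤ 2 * C0.card := by exact_mod_cast hC02
    have e : 128 * ((l:ℝ) + 1) * M * q = B.card * (2 * C0.card) := by
      rw [hq, hΘ]; push_cast; field_simp; norm_num
    rw [e]; gcongr
  calc (B.card:ℝ) ^ 8 * (C.card:ℝ) ^ 4 = ((B.card:ℝ) * C.card) ^ 4 * (B.card:ℝ) ^ 4 := by ring
    _ ≤ (128 * (l + 1) * M * q) ^ 4 * (B.card:ℝ) ^ 4 := by gcongr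
    _ = 128 ^ 4 * (l + 1) ^ 4 * (M:ℝ) ^ 4 * (q ^ 4 * (B.card:ℝ) ^ 4) := by ring
    _ ≤ 128 ^ 4 * (l + 1) ^ 4 * (M:ℝ) ^ 4 * (256 * (l + 1) ^ 2 * κ ^ 2 * E) := by gcongr
    _ = _ := by ring

end
end TF


namespace TF

section
variable {p : ℕ} [Fact p.Prime]

theorem En_lower (B C : Finset (ZMod p)) (M : ℕ) (hM : (B + C).card ≤ M) :
    (B.card * C.card) ^ 2 ≤ M * En B (-C) := by
  classical
  have h0 : ∑ t ∈ B + C, rp B (-C) t = B.card * C.card := by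
    have e := rp_sum B (-C)
    rw [Finset.card_neg] at e
    rw [← e]
    refine Finset.sum_subset (Finset.subset_univ _) fun t _ ht => ?_
    unfold rp
    rw [Finset.card_eq_zero, Finset.filter_eq_empty_iff]
    rintro ⟨b, c⟩ hw h
    apply ht
    have hw' := Finset.mem_product.1 hw
    have := Finset.mem_neg'.1 hw'.2
    rw [← h]
    simp only [sub_eq_add_neg]
    exact Finset.add_mem_add hw'.1 this
  rw [← h0]
  refine sq_sum_le_card_mul_sum_sq.trans ?_
  unfold En
  exact Nat.mul_le_mul hM (Finset.sum_le_sum_of_subset (Finset.subset_univ _))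

theorem kap_mono (M M' A B q : ℝ) (h : M ≤ M') : kap M A B q ≤ kap M' A B q := by
  unfold kap
  have := Real.sqrt_le_sqrt h
  gcongr

theorem card_le_S (A B S : Finset (ZMod p)) (g h : ZMod p → ZMod p) (hg : ∀ a ∈ A, g a ≠ 0)
    (hS : ∀ a ∈ A, ∀ b ∈ B, g a * (h a + b) ∈ S) (hA0 : A.Nonempty) : B.card ≤ S.card := by
  obtain ⟨a, ha⟩ := hA0
  refine Finset.card_le_card_of_injOn (fun b => g a * (h a + b)) (fun b hb => hS a ha b hb) ?_
  intro b _ b' _ he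
  exact add_left_cancel (mul_left_cancel₀ (hg a ha) he)

set_option maxHeartbeats 1600000 in
theorem core (A B C D S1 S2 : Finset (ZMod p)) (g₁ h₁ g₂ h₂ : ZMod p → ZMod p)
    (hg1 : ∀ a ∈ A, g₁ a ≠ 0) (hinj1 : Set.InjOn g₁ A)
    (hS1 : ∀ a ∈ A, ∀ b ∈ B, g₁ a * (h₁ a + b) ∈ S1)
    (hg2 : ∀ a ∈ D, g₂ a ≠ 0) (hinj2 : Set.InjOn g₂ D)
    (hS2 : ∀ a ∈ D, ∀ b ∈ C, g₂ a * (h₂ a + b) ∈ S2)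
    (hA0 : A.Nonempty) (hD0 : D.Nonempty) (hAB : A.card ≤ B.card) (hDC : D.card ≤ C.card)
    (hB5 : B.card ^ 5 ≤ p ^ 3) (hC5 : C.card ^ 5 ≤ p ^ 3) (M l : ℕ)
    (hM1 : S1.card ≤ M) (hM2 : S2.card ≤ M) (hM3 : (B + C).card ≤ M) (hMl : M ≤ 2 ^ l) :
    (B.card:ℝ) ^ 13 * (C.card:ℝ) ^ 5 * (A.card:ℝ) ^ 3 * D.card ≤
      10 ^ 75 * (4 * l + 1) ^ 22 * (M:ℝ) ^ 18 := by
  classical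
  have hp : 0 < p := (Fact.out : p.Prime).pos
  have hA1 : 0 < A.card := hA0.card_pos
  have hB1 : 0 < B.card := by omega
  have hD1 : 0 < D.card := hD0.card_pos
  have hC1 : 0 < C.card := by omega
  have hBS := card_le_S A B S1 g₁ h₁ hg1 hS1 hA0
  have hCS := card_le_S D C S2 g₂ h₂ hg2 hS2 hD0
  have hBl : B.card ≤ 2 ^ l := (hBS.trans hM1).trans hMl
  have hCl : C.card ≤ 2 ^ l := (hCS.trans hM2).trans hMl
  set Λ : ℝ := 4 * l + 1 with hΛ
  have hl0 : (0:ℝ) ≤ l := Nat.cast_nonneg l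
  have hΛ1 : (1:ℝ) ≤ Λ := by rw [hΛ]; linarith
  have hlΛ : (l:ℝ) + 1 ≤ Λ := by rw [hΛ]; linarith
  set K : ℝ := kap M A.card B.card p with hK
  have hK0 : 0 ≤ K := by rw [hK]; unfold kap; positivity
  have hE : ∀ X : Finset (ZMod p), X.card ≤ 2 ^ (2 * l) →
      (En B X : ℝ) ≤ (330000 * Λ * K) * √(X.card : ℝ) ^ 3 := by
    intro X hX
    refine (lemE A B X S1 g₁ h₁ hg1 hinj1 hS1 hA0 hAB hBS l (hM1.trans hMl) hX).trans ?_
    have : kap S1.card A.card B.card p ≤ K := kap_mono _ _ _ _ _ (by exact_mod_cast hM1)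
    gcongr
  set a := √(A.card:ℝ) with ha
  set b := √(B.card:ℝ) with hb
  set c := √(C.card:ℝ) with hc
  set m := √(M:ℝ) with hm
  set q := √(p:ℝ) with hq
  have ha2 : a ^ 2 = A.card := sqs _
  have hb2 : b ^ 2 = B.card := sqs _
  have hc2 : c ^ 2 = C.card := sqs _
  have hm2 : m ^ 2 = M := sqs _
  have hq2 : q ^ 2 = p := sqs _
  have ha0 : 0 < a := Real.sqrt_pos.2 (by exact_mod_cast hA1)
  have hb0 : 0 < b := Real.sqrt_pos.2 (by exact_mod_cast hB1)
  have hc0 : 0 < c := Real.sqrt_pos.2 (by exact_mod_cast hC1)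
  have hq0 : 0 < q := Real.sqrt_pos.2 (by exact_mod_cast hp)
  have hm0 : 0 < m := Real.sqrt_pos.2 (by exact_mod_cast lt_of_lt_of_le hB1 (hBS.trans hM1))
  have hKd : K = m ^ 3 / a + b ^ 3 * m / q := rfl
  by_cases hcase : m ^ 3 / a ≤ b ^ 3 * m / q
  · have hK2 : K ≤ 2 * (b ^ 3 * m / q) := by rw [hKd]; linarith
    have h1 := En_lower B C M hM3
    have h1' : ((B.card:ℝ) * C.card) ^ 2 ≤ M * En B (-C) := by exact_mod_cast h1
    have h2 := hE (-C) (by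
      rw [Finset.card_neg]
      exact hCl.trans (Nat.pow_le_pow_right (by norm_num) (by omega)))
    rw [Finset.card_neg, ← hc] at h2
    rw [← hb2, ← hc2, ← hm2] at h1'
    have h3 : (b ^ 2 * c ^ 2) ^ 2 ≤ m ^ 2 * ((330000 * Λ * (2 * (b ^ 3 * m / q))) * c ^ 3) := by
      refine h1'.trans ?_
      gcongr
      refine h2.trans ?_
      gcongr
    have h4 : b * c * q ≤ 660000 * Λ * m ^ 3 := by
      have : (b ^ 3 * c ^ 3 / q) * (b * c * q) ≤ (b ^ 3 * c ^ 3 / q) * (660000 * Λ * m ^ 3) := by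
        refine le_trans (le_of_eq ?_) (h3.trans (le_of_eq ?_))
        · field_simp
        · field_simp; ring
      exact le_of_mul_le_mul_left this (by positivity)
    have h5 : (B.card:ℝ) ^ 5 ≤ (p:ℝ) ^ 3 := by exact_mod_cast hB5
    have hA3 : (A.card:ℝ) ≤ B.card := by exact_mod_cast hAB
    have hD3 : (D.card:ℝ) ≤ C.card := by exact_mod_cast hDC
    calc (B.card:ℝ) ^ 13 * (C.card:ℝ) ^ 5 * (A.card:ℝ) ^ 3 * D.card
        ≤ (B.card:ℝ) ^ 13 * (C.card:ℝ) ^ 5 * (B.card:ℝ) ^ 3 * C.card := by gcongr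
      _ = (B.card:ℝ) ^ 6 * (C.card:ℝ) ^ 6 * ((B.card:ℝ) ^ 5) ^ 2 := by ring
      _ ≤ (B.card:ℝ) ^ 6 * (C.card:ℝ) ^ 6 * ((p:ℝ) ^ 3) ^ 2 := by gcongr
      _ = (b * c * q) ^ 12 := by rw [← hb2, ← hc2, ← hq2]; ring
      _ ≤ (660000 * Λ * m ^ 3) ^ 12 := by gcongr
      _ = 660000 ^ 12 * Λ ^ 12 * (M:ℝ) ^ 18 := by rw [← hm2]; ring
      _ ≤ 10 ^ 75 * Λ ^ 22 * (M:ℝ) ^ 18 := by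
        gcongr ?_ * ?_ * _
        · norm_num
        · exact pow_le_pow_right₀ hΛ1 (by norm_num)
  · push Not at hcase
    have hK2 : K ≤ 2 * (m ^ 3 / a) := by rw [hKd]; linarith
    have h1 := main_comb B C (Finset.card_pos.1 hB1) (Finset.card_pos.1 hC1) l M hCl hM3
      (330000 * Λ * K) (by positivity) hE
    have e1 := E4_bound A B S1 g₁ h₁ hg1 hinj1 hS1 hA0 hAB hBS hB5 l hBl
    have e2 := E4_bound D C S2 g₂ h₂ hg2 hinj2 hS2 hD0 hDC hCS hC5 l hCl
    have e3 := Emix_le B C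
    have e3' : (Emix B C : ℝ) ^ 2 ≤ (∑ t, rp B B t ^ 4 : ℕ) * (∑ t, rp C C t ^ 4 : ℕ) := by
      exact_mod_cast e3
    rw [← hΛ] at e1 e2
    set E : ℝ := (Emix B C : ℝ) with hEE
    set E1 : ℝ := ((∑ t, rp B B t ^ 4 : ℕ) : ℝ)
    set E2 : ℝ := ((∑ t, rp C C t ^ 4 : ℕ) : ℝ)
    have hE0 : 0 ≤ E := Nat.cast_nonneg _
    have hM1' : (S1.card:ℝ) ≤ M := by exact_mod_cast hM1
    have hM2' : (S2.card:ℝ) ≤ M := by exact_mod_cast hM2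
    have e1' : (A.card:ℝ) * E1 ≤ 3200000000000 * Λ ^ 3 * (M:ℝ) ^ 2 * (B.card:ℝ) ^ 3 := by
      refine e1.trans ?_; gcongr
    have e2' : (D.card:ℝ) * E2 ≤ 3200000000000 * Λ ^ 3 * (M:ℝ) ^ 2 * (C.card:ℝ) ^ 3 := by
      refine e2.trans ?_; gcongr
    have e4 : (A.card:ℝ) * D.card * E ^ 2 ≤
        3200000000000 ^ 2 * Λ ^ 6 * (M:ℝ) ^ 4 * (B.card:ℝ) ^ 3 * (C.card:ℝ) ^ 3 := by
      calc (A.card:ℝ) * D.card * E ^ 2 ≤ (A.card:ℝ) * D.card * (E1 * E2) := by gcongr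
        _ = ((A.card:ℝ) * E1) * (D.card * E2) := by ring
        _ ≤ (3200000000000 * Λ ^ 3 * (M:ℝ) ^ 2 * (B.card:ℝ) ^ 3) *
            (3200000000000 * Λ ^ 3 * (M:ℝ) ^ 2 * (C.card:ℝ) ^ 3) := by
          refine mul_le_mul e1' e2' ?_ ?_ <;> positivity
        _ = _ := by ring
    have e5 : (A.card:ℝ) * ((B.card:ℝ) ^ 8 * (C.card:ℝ) ^ 4) ≤
        2 ^ 38 * 330000 ^ 2 * Λ ^ 8 * (M:ℝ) ^ 7 * E := by
      calc (A.card:ℝ) * ((B.card:ℝ) ^ 8 * (C.card:ℝ) ^ 4)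
          ≤ (A.card:ℝ) * (2 ^ 36 * Λ ^ 6 * (M:ℝ) ^ 4 * (330000 * Λ * (2 * (m ^ 3 / a))) ^ 2 * E) := by
            refine mul_le_mul_of_nonneg_left (h1.trans ?_) (by positivity)
            gcongr
        _ = _ := by
            rw [← ha2, ← hm2]; field_simp
    set X : ℝ := (B.card:ℝ) ^ 13 * (C.card:ℝ) ^ 5 * (A.card:ℝ) ^ 3 * D.card with hX
    have hBp : (0:ℝ) < B.card := by exact_mod_cast hB1
    have hCp : (0:ℝ) < C.card := by exact_mod_cast hC1
    have e6 : ((B.card:ℝ) ^ 3 * (C.card:ℝ) ^ 3) * X ≤ ((B.card:ℝ) ^ 3 * (C.card:ℝ) ^ 3) *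
        (10 ^ 75 * Λ ^ 22 * (M:ℝ) ^ 18) := by
      calc ((B.card:ℝ) ^ 3 * (C.card:ℝ) ^ 3) * X
          = ((A.card:ℝ) * ((B.card:ℝ) ^ 8 * (C.card:ℝ) ^ 4)) ^ 2 * ((A.card:ℝ) * D.card) := by
            rw [hX]; ring
        _ ≤ (2 ^ 38 * 330000 ^ 2 * Λ ^ 8 * (M:ℝ) ^ 7 * E) ^ 2 * ((A.card:ℝ) * D.card) := by gcongr
        _ = (2 ^ 38 * 330000 ^ 2) ^ 2 * Λ ^ 16 * (M:ℝ) ^ 14 * ((A.card:ℝ) * D.card * E ^ 2) := by ring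
        _ ≤ (2 ^ 38 * 330000 ^ 2) ^ 2 * Λ ^ 16 * (M:ℝ) ^ 14 *
            (3200000000000 ^ 2 * Λ ^ 6 * (M:ℝ) ^ 4 * (B.card:ℝ) ^ 3 * (C.card:ℝ) ^ 3) := by gcongr
        _ = ((2 ^ 38 * 330000 ^ 2) ^ 2 * 3200000000000 ^ 2) *
            (Λ ^ 22 * (M:ℝ) ^ 18 * (B.card:ℝ) ^ 3 * (C.card:ℝ) ^ 3) := by ring
        _ ≤ 10 ^ 75 * (Λ ^ 22 * (M:ℝ) ^ 18 * (B.card:ℝ) ^ 3 * (C.card:ℝ) ^ 3) := by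
            gcongr
            norm_num
        _ = _ := by ring
    exact le_of_mul_le_mul_left e6 (by positivity)

end
end TF

theorem TF.fiber_red {p : ℕ} [NeZero p] (g : ZMod p → ZMod p) (hg : ∀ x, x ≠ 0 → g x ≠ 0)
    (A : Finset (ZMod p)) (hA : A.Nonempty) (h0 : (0 : ZMod p) ∉ A) :
    ∃ A' ⊆ A, A'.Nonempty ∧ Set.InjOn g A' ∧ A.card ≤ mu g * A'.card := by
  obtain ⟨A', h1, h2, h3⟩ := Finset.exists_subset_injOn_image_eq_of_surjOn (f := g) (s := (A : Set (ZMod p)))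
    (t := A.image g) (by intro y hy; simpa using hy)
  have h1' : A' ⊆ A := by exact_mod_cast h1
  have hc : A'.card = (A.image g).card := by
    rw [← h3, Finset.card_image_of_injOn h2]
  refine ⟨A', h1', ?_, h2, ?_⟩
  · rw [← Finset.card_pos, hc, Finset.card_pos]; exact hA.image g
  · rw [hc]
    refine Finset.card_le_mul_card_image A _ ?_
    intro t ht
    obtain ⟨a, ha, rfl⟩ := Finset.mem_image.1 ht
    have hne : ∀ a ∈ A, a ≠ 0 := fun a ha h => h0 (h ▸ ha)
    have := Finset.le_sup (s := Finset.univ.filter fun t : ZMod p => t ≠ 0)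
      (f := fun t => (Finset.univ.filter fun x : ZMod p => x ≠ 0 ∧ g x = t).card)
      (b := g a) (by simpa using hg a (hne a ha))
    refine le_trans (Finset.card_le_card ?_) this
    intro x hx
    rw [Finset.mem_filter] at hx
    simp [hne x hx.1, hx.2]

theorem TF.pow_of_rpow {p b : ℕ} (h : (b : ℝ) ≤ (p:ℝ) ^ ((3:ℝ)/5)) : b ^ 5 ≤ p ^ 3 := by
  have h1 := pow_le_pow_left₀ (by positivity) h 5
  rw [← Real.rpow_natCast ((p:ℝ) ^ ((3:ℝ)/5)), ← Real.rpow_mul (by positivity)] at h1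
  have : (3:ℝ)/5 * ((5:ℕ):ℝ) = ((3:ℕ):ℝ) := by norm_num
  rw [this, Real.rpow_natCast] at h1
  exact_mod_cast h1

theorem TF.log_bound {b : ℕ} (hb : 1 ≤ b) :
    1/2 ≤ Real.log (2 * (b:ℝ)) ∧ (8 * (Nat.log 2 b : ℝ) + 9) ≤ 18 * Real.log (2 * (b:ℝ)) := by
  have hb' : (1:ℝ) ≤ b := by exact_mod_cast hb
  have h2 := Real.log_two_gt_d9
  have h0 : (Nat.log 2 b : ℝ) * Real.log 2 ≤ Real.log b := by
    rw [← Real.log_pow]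
    apply Real.log_le_log (by positivity)
    exact_mod_cast Nat.pow_log_le_self 2 (by omega)
  have hn : (0:ℝ) ≤ Nat.log 2 b := by positivity
  rw [Real.log_mul (by norm_num) (by positivity)]
  have hlb := Real.log_nonneg hb'
  constructor
  · linarith
  · nlinarith

theorem TF.final_rpow (x y a d m L M : ℝ) (hx : 0 ≤ x) (hy : 0 ≤ y) (ha : 0 ≤ a) (hd : 0 ≤ d)
    (hm : 0 < m) (hL : 0 < L) (hM : 0 ≤ M)
    (h : y ^ 13 * x ^ 5 * a ^ 3 * d ≤ 10 ^ 108 * L ^ 36 * m ^ 16 * M ^ 18) :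
    (1 / 10 ^ 6 : ℝ) * L ^ (-(2:ℝ)) * (x ^ ((5:ℝ)/18) * y ^ ((13:ℝ)/18) * a ^ ((1:ℝ)/6) *
      d ^ ((1:ℝ)/18)) / m ^ ((8:ℝ)/9) ≤ M := by
  have key : ∀ (z : ℝ) (e : ℝ) (n : ℕ), 0 ≤ z → e * 18 = n → (z ^ e) ^ 18 = z ^ n := by
    intro z e n hz he
    rw [← Real.rpow_natCast (z ^ e), ← Real.rpow_mul hz]
    have : e * ((18:ℕ):ℝ) = (n:ℝ) := by rw [← he]; norm_num
    rw [this, Real.rpow_natCast]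
  have hL2 : L ^ (-(2:ℝ)) = (L ^ 2)⁻¹ := by
    rw [Real.rpow_neg hL.le]; norm_num
  rw [hL2]
  refine le_of_pow_le_pow_left₀ (n := 18) (by norm_num) hM ?_
  rw [div_pow, mul_pow, mul_pow, mul_pow, mul_pow, mul_pow,
    key x _ 5 hx (by norm_num), key y _ 13 hy (by norm_num), key a _ 3 ha (by norm_num),
    key d _ 1 hd (by norm_num), key m _ 16 hm.le (by norm_num)]
  rw [div_le_iff₀ (by positivity), inv_pow, ← pow_mul, div_pow, one_pow, ← pow_mul, pow_one,
    one_div, ← mul_inv, inv_mul_le_iff₀ (by positivity)]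
  calc _ = y ^ 13 * x ^ 5 * a ^ 3 * d := by ring
    _ ≤ _ := h
    _ = _ := by ring

theorem two_function_sum_bound :
    ∃ C > (0:ℝ), ∃ c ≥ (0:ℝ),
      ∀ (p : ℕ) [Fact p.Prime], p ≠ 2 →
      ∀ g₁ h₁ g₂ h₂ : ZMod p → ZMod p,
      (∀ x : ZMod p, x ≠ 0 → g₁ x ≠ 0) → (∀ x : ZMod p, x ≠ 0 → h₁ x ≠ 0) →
      (∀ x : ZMod p, x ≠ 0 → g₂ x ≠ 0) → (∀ x : ZMod p, x ≠ 0 → h₂ x ≠ 0) →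
      mu g₁ = mu g₂ →
      ∀ A B Cs D : Finset (ZMod p),
      A.Nonempty → B.Nonempty → Cs.Nonempty → D.Nonempty →
      (0:ZMod p) ∉ A → (0:ZMod p) ∉ B → (0:ZMod p) ∉ Cs → (0:ZMod p) ∉ D →
      A.card ≤ B.card → (B.card : ℝ) ≤ (p:ℝ) ^ ((3:ℝ)/5) →
      D.card ≤ Cs.card → (Cs.card : ℝ) ≤ (p:ℝ) ^ ((3:ℝ)/5) →
      C * (Real.log (2 * (B.card:ℝ))) ^ (-c) *
          ((Cs.card:ℝ) ^ ((5:ℝ)/18) * (B.card:ℝ) ^ ((13:ℝ)/18) *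
           (A.card:ℝ) ^ ((1:ℝ)/6) * (D.card:ℝ) ^ ((1:ℝ)/18)) /
          ((mu g₁ : ℕ) : ℝ) ^ ((8:ℝ)/9) ≤
        max ((Finset.image₂ (fun x y => g₁ x * (h₁ x + y)) A B).card : ℝ)
          (max ((Finset.image₂ (fun x y => g₂ x * (h₂ x + y)) D Cs).card : ℝ)
            ((B + Cs).card : ℝ)) := by
  refine ⟨1 / 10 ^ 6, by positivity, 2, by norm_num, ?_⟩
  intro p _ _ g₁ h₁ g₂ h₂ hg1 _ hg2 _ hmu A B Cs D hA hB hC hD hA0 _ _ hD0 hAB hBp hDC hCp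
  set S1 := Finset.image₂ (fun x y => g₁ x * (h₁ x + y)) A B with hS1
  set S2 := Finset.image₂ (fun x y => g₂ x * (h₂ x + y)) D Cs with hS2
  obtain ⟨A', hA's, hA'n, hA'i, hAc⟩ := TF.fiber_red g₁ hg1 A hA hA0
  obtain ⟨D', hD's, hD'n, hD'i, hDc⟩ := TF.fiber_red g₂ hg2 D hD hD0
  rw [← hmu] at hDc
  set m := mu g₁ with hm
  have hm1 : 1 ≤ m := by
    rcases Nat.eq_zero_or_pos m with h | h
    · rw [h, zero_mul] at hAc
      have := hA.card_pos
      omega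
    · exact h
  set M : ℕ := max S1.card (max S2.card (B + Cs).card) with hM
  have hM1 : S1.card ≤ M := le_max_left _ _
  have hM2 : S2.card ≤ M := (le_max_left _ _).trans (le_max_right _ _)
  have hM3 : (B + Cs).card ≤ M := (le_max_right _ _).trans (le_max_right _ _)
  have hcast : max (S1.card : ℝ) (max (S2.card : ℝ) ((B + Cs).card : ℝ)) = (M : ℝ) := by
    rw [hM]; push_cast; rfl
  rw [hcast]
  have hb1 := hB.card_pos
  obtain ⟨hL1, hL2⟩ := TF.log_bound (b := B.card) hb1
  set L := Real.log (2 * (B.card : ℝ)) with hL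
  have hCM : Cs.card ≤ M := (Finset.card_le_card_add_left hB).trans hM3
  have hBM : B.card ≤ M := (Finset.card_le_card_add_right hC).trans hM3
  have hmR : (1:ℝ) ≤ m := by exact_mod_cast hm1
  have hMR : (1:ℝ) ≤ M := by exact_mod_cast (hb1.trans_le hBM)
  refine TF.final_rpow _ _ _ _ _ _ _ (by positivity) (by positivity) (by positivity)
    (by positivity) (by linarith) (by linarith) (by positivity) ?_
  have hL0 : 0 < L := by linarith
  have hL36 : L ^ 22 ≤ 2 ^ 14 * L ^ 36 := by
    have : (1:ℝ) ≤ (2 * L) ^ 14 := one_le_pow₀ (by linarith)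
    calc L ^ 22 = L ^ 22 * 1 := by ring
      _ ≤ L ^ 22 * (2 * L) ^ 14 := by gcongr
      _ = _ := by ring
  by_cases hcase : B.card ^ 2 ≤ M
  · have hAB' : (A.card:ℝ) ≤ B.card := by exact_mod_cast hAB
    have hDC' : (D.card:ℝ) ≤ Cs.card := by exact_mod_cast hDC
    have hCM' : (Cs.card:ℝ) ≤ M := by exact_mod_cast hCM
    have hcase' : (B.card:ℝ) ^ 2 ≤ M := by exact_mod_cast hcase
    have hL36' : (1:ℝ) ≤ 2 ^ 36 * L ^ 36 := by
      rw [← mul_pow]; exact one_le_pow₀ (by linarith)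
    have hm16 : (1:ℝ) ≤ (m:ℝ) ^ 16 := one_le_pow₀ hmR
    have hk : (1:ℝ) ≤ 10 ^ 108 * L ^ 36 * m ^ 16 := by
      have : (1:ℝ) ≤ 10 ^ 108 * L ^ 36 := by
        refine hL36'.trans ?_
        gcongr ?_ * _
        norm_num
      exact one_le_mul_of_one_le_of_one_le this hm16
    calc (B.card:ℝ) ^ 13 * (Cs.card:ℝ) ^ 5 * (A.card:ℝ) ^ 3 * D.card
        ≤ (B.card:ℝ) ^ 13 * (Cs.card:ℝ) ^ 5 * (B.card:ℝ) ^ 3 * Cs.card := by gcongr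
      _ = ((B.card:ℝ) ^ 2) ^ 8 * (Cs.card:ℝ) ^ 6 := by ring
      _ ≤ (M:ℝ) ^ 8 * (M:ℝ) ^ 6 := by gcongr
      _ = (M:ℝ) ^ 14 := by ring
      _ ≤ (M:ℝ) ^ 18 := pow_le_pow_right₀ hMR (by norm_num)
      _ = 1 * (M:ℝ) ^ 18 := by ring
      _ ≤ _ := by gcongr
  · push Not at hcase
    have hlt := Nat.lt_pow_succ_log_self (b := 2) (by norm_num) B.card
    have hMl : M ≤ 2 ^ (2 * (Nat.log 2 B.card + 1)) := by
      rw [mul_comm, pow_mul]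
      exact hcase.le.trans (Nat.pow_le_pow_left hlt.le 2)
    have hne : ∀ (X : Finset (ZMod p)), (0:ZMod p) ∉ X → ∀ a ∈ X, a ≠ 0 :=
      fun X h0 a ha h => h0 (h ▸ ha)
    have hcore := TF.core A' B Cs D' S1 S2 g₁ h₁ g₂ h₂
      (fun a ha => hg1 a (hne A hA0 a (hA's ha))) hA'i
      (fun a ha b hb => Finset.mem_image₂_of_mem (f := fun x y => g₁ x * (h₁ x + y)) (hA's ha) hb)
      (fun a ha => hg2 a (hne D hD0 a (hD's ha))) hD'i
      (fun a ha b hb => Finset.mem_image₂_of_mem (f := fun x y => g₂ x * (h₂ x + y)) (hD's ha) hb)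
      hA'n hD'n ((Finset.card_le_card hA's).trans hAB) ((Finset.card_le_card hD's).trans hDC)
      (TF.pow_of_rpow hBp) (TF.pow_of_rpow hCp) M _ hM1 hM2 hM3 hMl
    have hAcR : (A.card:ℝ) ≤ m * A'.card := by exact_mod_cast hAc
    have hDcR : (D.card:ℝ) ≤ m * D'.card := by exact_mod_cast hDc
    have hl : (4 * ((2 * (Nat.log 2 B.card + 1) : ℕ) : ℝ) + 1) ≤ 18 * L := by
      push_cast; linarith
    calc (B.card:ℝ) ^ 13 * (Cs.card:ℝ) ^ 5 * (A.card:ℝ) ^ 3 * D.card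
        ≤ (B.card:ℝ) ^ 13 * (Cs.card:ℝ) ^ 5 * (m * A'.card) ^ 3 * (m * D'.card) := by gcongr
      _ = (m:ℝ) ^ 4 * ((B.card:ℝ) ^ 13 * (Cs.card:ℝ) ^ 5 * (A'.card:ℝ) ^ 3 * D'.card) := by ring
      _ ≤ (m:ℝ) ^ 16 * (10 ^ 75 * (18 * L) ^ 22 * (M:ℝ) ^ 18) := by
          refine mul_le_mul (pow_le_pow_right₀ hmR (by norm_num)) (hcore.trans ?_)
            (by positivity) (by positivity)
          gcongr
      _ = (10 ^ 75 * 18 ^ 22) * L ^ 22 * (m:ℝ) ^ 16 * (M:ℝ) ^ 18 := by ring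
      _ ≤ (10 ^ 75 * 18 ^ 22) * (2 ^ 14 * L ^ 36) * (m:ℝ) ^ 16 * (M:ℝ) ^ 18 := by gcongr
      _ = (10 ^ 75 * 18 ^ 22 * 2 ^ 14) * (L ^ 36 * (m:ℝ) ^ 16 * (M:ℝ) ^ 18) := by ring
      _ ≤ 10 ^ 108 * (L ^ 36 * (m:ℝ) ^ 16 * (M:ℝ) ^ 18) := by
          gcongr ?_ * _
          norm_num
      _ = _ := by ring
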